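/- arXiv:2305.19816 — 5 statements merged into one kernel-verified Lean document; each statement's English description precedes it below -/
import Mathlib

section
/- Let p be a prime and let G be a finite solvable group such that every normal subgroup of G of order coprime to p is trivial (i.e. O_{p'}(G) = 1). Let P be a Sylow p-subgroup of G and suppose there is an integer a ≥ 1 such that cd(P) = {1, p^a}. Then there exists an irreducible complex character χ of G such that p divides χ(1) and the p-part of χ(1) is at most p^a. -/
open CategoryTheory

namespace SolvCase
open Representation Module
set_option linter.unusedSectionVars false

lemma irr_iff {G V : Type} [Group G] [AddCommGroup V] [Module ℂ V] (ρ : Representation ℂ G V) :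
    ρ.IsIrreducible ↔ (∃ v : V, v ≠ 0) ∧
      ∀ W : Submodule ℂ V, (∀ g, ∀ w ∈ W, ρ g w ∈ W) → W = ⊥ ∨ W = ⊤ := by
  constructor
  · intro h
    constructor
    · by_contra! hv
      apply (bot_ne_top : (⊥ : Subrepresentation ρ) ≠ ⊤)
      apply Subrepresentation.toSubmodule_injective
      ext v
      simp [hv v]
    · intro W hW
      rcases h.eq_bot_or_eq_top ⟨W, fun g w hw => hW g w hw⟩ with h1 | h1
      · left; exact congrArg Subrepresentation.toSubmodule h1
      · right; exact congrArg Subrepresentation.toSubmodule h1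
  · rintro ⟨⟨v, hv⟩, h⟩
    refine { exists_pair_ne := ⟨⊥, ⊤, fun h1 => hv ?_⟩, eq_bot_or_eq_top := fun W => ?_ }
    · have : (⊥ : Submodule ℂ V) = ⊤ := congrArg Subrepresentation.toSubmodule h1
      have : v ∈ (⊥ : Submodule ℂ V) := this ▸ Submodule.mem_top
      simpa using this
    · rcases h W.toSubmodule (fun g w hw => W.apply_mem_toSubmodule g hw) with h1 | h1
      · left; exact Subrepresentation.toSubmodule_injective h1
      · right; exact Subrepresentation.toSubmodule_injective h1

lemma exists_compl {G V : Type} [Group G] [Finite G] [AddCommGroup V] [Module ℂ V]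
    (ρ : Representation ℂ G V) (A : Submodule ℂ V) (hA : ∀ g, ∀ w ∈ A, ρ g w ∈ A) :
    ∃ B : Submodule ℂ V, (∀ g, ∀ w ∈ B, ρ g w ∈ B) ∧ IsCompl A B := by
  have : NeZero (Nat.card G : ℂ) := ⟨by exact_mod_cast Nat.card_pos.ne'⟩
  obtain ⟨B, hB⟩ := exists_isCompl (⟨A, fun g w hw => hA g w hw⟩ : Subrepresentation ρ)
  refine ⟨B.toSubmodule, fun g w hw => B.apply_mem_toSubmodule g hw, ?_, ?_⟩
  · rw [disjoint_iff]
    exact congrArg Subrepresentation.toSubmodule hB.inf_eq_bot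
  · rw [codisjoint_iff]
    exact congrArg Subrepresentation.toSubmodule hB.sup_eq_top

lemma exists_irr_sub {G V : Type} [Group G] [Finite G] [AddCommGroup V] [Module ℂ V]
    [FiniteDimensional ℂ V] (ρ : Representation ℂ G V) (n : ℕ) (hn : ¬ n ∣ finrank ℂ V) :
    ∃ W : Subrepresentation ρ, W.toRepresentation.IsIrreducible ∧
      ¬ n ∣ finrank ℂ W.toSubmodule := by
  have key : ∀ d, ∀ W : Submodule ℂ V, (∀ g, ∀ w ∈ W, ρ g w ∈ W) → finrank ℂ W = d →
      ¬ n ∣ d → ∃ A : Submodule ℂ V, (∀ g, ∀ w ∈ A, ρ g w ∈ A) ∧ ¬ n ∣ finrank ℂ A ∧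
        ∀ B : Submodule ℂ V, (∀ g, ∀ w ∈ B, ρ g w ∈ B) → B ≤ A → B = ⊥ ∨ B = A := by
    intro d
    induction d using Nat.strong_induction_on with
    | _ d ih =>
    intro W hW hd hnd
    by_cases hmin : ∀ B : Submodule ℂ V, (∀ g, ∀ w ∈ B, ρ g w ∈ B) → B ≤ W → B = ⊥ ∨ B = W
    · exact ⟨W, hW, hd ▸ hnd, hmin⟩
    push Not at hmin
    obtain ⟨B, hB, hBW, hB0, hB1⟩ := hmin
    obtain ⟨C, hC, hBC⟩ := exists_compl ρ B hB
    have hsup : B ⊔ (C ⊓ W) = W := by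
      rw [← sup_inf_assoc_of_le C hBW, hBC.sup_eq_top, top_inf_eq]
    have hinf : B ⊓ (C ⊓ W) = ⊥ := by
      rw [← inf_assoc, hBC.inf_eq_bot, bot_inf_eq]
    have hsum : finrank ℂ B + finrank ℂ (C ⊓ W : Submodule ℂ V) = d := by
      have := Submodule.finrank_sup_add_finrank_inf_eq B (C ⊓ W)
      rw [hsup, hinf, finrank_bot, hd] at this
      omega
    have hBpos : 0 < finrank ℂ B := by
      rw [pos_iff_ne_zero]
      intro h0
      exact hB0 (Submodule.finrank_eq_zero.mp h0)
    have hlt : finrank ℂ B < d := hd ▸ Submodule.finrank_lt_finrank_of_lt (lt_of_le_of_ne hBW hB1)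
    by_cases h1 : n ∣ finrank ℂ B
    · have h2 : ¬ n ∣ finrank ℂ (C ⊓ W : Submodule ℂ V) := by
        intro h2
        exact hnd (hsum ▸ dvd_add h1 h2)
      exact ih _ (by omega) (C ⊓ W) (fun g w hw => ⟨hC g w hw.1, hW g w hw.2⟩) rfl h2
    · exact ih _ hlt B hB rfl h1
  obtain ⟨A, hA, hA1, hA2⟩ := key _ ⊤ (fun _ _ _ => trivial) rfl (by rwa [finrank_top])
  refine ⟨⟨A, fun g w hw => hA g w hw⟩, ?_, hA1⟩
  rw [irr_iff]
  constructor
  · by_contra! h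
    apply hA1
    have : Subsingleton A := ⟨fun x y => by rw [h x, h y]⟩
    rw [finrank_zero_of_subsingleton]
    exact dvd_zero _
  · intro W hW
    rcases hA2 (W.map A.subtype) (by
      rintro g _ ⟨w, hw, rfl⟩
      exact ⟨_, hW g w hw, rfl⟩) (Submodule.map_subtype_le A W) with h | h
    · left
      apply Submodule.map_injective_of_injective A.subtype_injective
      rw [h, Submodule.map_bot]
    · right
      apply Submodule.map_injective_of_injective A.subtype_injective
      rw [h, Submodule.map_subtype_top]

noncomputable def coindEquiv {G V : Type} [Group G] [AddCommGroup V] [Module ℂ V]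
    (S : Subgroup G) (σ : Representation ℂ S V) :
    coindV S.subtype σ ≃ₗ[ℂ] (Quotient (QuotientGroup.rightRel S) → V) where
  toFun f q := f.1 q.out
  map_add' _ _ := rfl
  map_smul' _ _ := rfl
  invFun v := ⟨fun g => σ ⟨g * (Quotient.mk (QuotientGroup.rightRel S) g).out⁻¹, by
      have := Quotient.exact (Quotient.out_eq (Quotient.mk (QuotientGroup.rightRel S) g))
      exact QuotientGroup.rightRel_apply.mp this⟩ (v (Quotient.mk _ g)), by
    rw [mem_coindV]
    intro s g
    have hq : Quotient.mk (QuotientGroup.rightRel S) (s.1 * g) = Quotient.mk _ g := by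
      apply Quotient.sound
      apply QuotientGroup.rightRel_apply.mpr
      simp
    rw [← Module.End.mul_apply, ← map_mul]
    simp only [Subgroup.subtype_apply, hq]
    congr 2
    ext
    simp [mul_assoc]⟩
  left_inv f := by
    ext g
    simp only
    rw [← (mem_coindV _ _ _).mp f.2]
    simp
  right_inv v := by
    ext q
    simp only [Quotient.out_eq]
    have : (⟨q.out * q.out⁻¹, by simp⟩ : S) = 1 := by ext; simp
    rw [this]; simp

lemma finrank_coind {G V : Type} [Group G] [Finite G] [AddCommGroup V] [Module ℂ V]
    [FiniteDimensional ℂ V] (S : Subgroup G) (σ : Representation ℂ S V) :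
    FiniteDimensional ℂ (coindV S.subtype σ) ∧
    finrank ℂ (coindV S.subtype σ) = S.index * finrank ℂ V := by
  have e := coindEquiv S σ
  have := Fintype.ofFinite (Quotient (QuotientGroup.rightRel S))
  refine ⟨Module.Finite.equiv e.symm, ?_⟩
  rw [e.finrank_eq, Module.finrank_pi_fintype, Finset.sum_const, smul_eq_mul, Finset.card_univ,
    ← Nat.card_eq_fintype_card, Nat.card_congr (QuotientGroup.quotientRightRelEquivQuotientLeftRel S)]
  rfl

/-- `ρ` lies over the linear character `μ` of the subgroup `M`. -/
def Over {G U : Type} [Group G] [AddCommGroup U] [Module ℂ U] (ρ : Representation ℂ G U)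
    (M : Subgroup G) (μ : M →* ℂˣ) : Prop :=
  ∃ f : U →ₗ[ℂ] ℂ, f ≠ 0 ∧ ∀ (m : M) (u : U), f (ρ m u) = μ m * f u

lemma sub_coind_apply {G V : Type} [Group G] [AddCommGroup V] [Module ℂ V]
    (S : Subgroup G) (σ : Representation ℂ S V) (W : Subrepresentation (coind S.subtype σ))
    (g h : G) (u : W.toSubmodule) : (W.toRepresentation g u).1.1 h = u.1.1 (h * g) := rfl

lemma exists_over_rep {G V : Type} [Group G] [Finite G] [AddCommGroup V] [Module ℂ V]
    [FiniteDimensional ℂ V] (S : Subgroup G) (σ : Representation ℂ S V) (hσ : σ.IsIrreducible)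
    (n : ℕ) (hn : ¬ n ∣ S.index * finrank ℂ V) :
    ∃ (U : Type) (_ : AddCommGroup U) (_ : Module ℂ U) (_ : FiniteDimensional ℂ U)
      (ρ : Representation ℂ G U), ρ.IsIrreducible ∧ ¬ n ∣ finrank ℂ U ∧
      ∃ f : U →ₗ[ℂ] V, Function.Surjective f ∧ ∀ (s : S) (u : U), f (ρ s u) = σ s (f u) := by
  obtain ⟨hfin, hrank⟩ := finrank_coind S σ
  obtain ⟨W, hW, hnW⟩ := exists_irr_sub (coind S.subtype σ) n (by rwa [hrank])
  refine ⟨W.toSubmodule, inferInstance, inferInstance, inferInstance, W.toRepresentation, hW, hnW,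
    ⟨{ toFun := fun u => u.1.1 1, map_add' := fun _ _ => rfl, map_smul' := fun _ _ => rfl }, ?_, ?_⟩⟩
  rotate_left
  · intro s u
    have := (mem_coindV _ _ _).mp u.1.2 s 1
    rw [mul_one] at this
    simp only [LinearMap.coe_mk, AddHom.coe_mk]
    rw [← this, sub_coind_apply, one_mul]
    rfl
  · have heq : ∀ (s : S) (u : W.toSubmodule),
        ((W.toRepresentation s u).1.1 1 : V) = σ s (u.1.1 1) := by
      intro s u
      have := (mem_coindV _ _ _).mp u.1.2 s 1
      rw [mul_one] at this
      rw [← this, sub_coind_apply, one_mul]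
      rfl
    rw [← LinearMap.range_eq_top]
    refine (((irr_iff σ).mp hσ).2 _ ?_).resolve_left ?_
    · rintro s _ ⟨u, rfl⟩
      exact ⟨W.toRepresentation s u, heq s u⟩
    · intro h0
      rw [LinearMap.range_eq_bot] at h0
      obtain ⟨u, hu⟩ := ((irr_iff _).mp hW).1
      apply hu
      ext g
      have := LinearMap.congr_fun h0 (W.toRepresentation g u)
      simp only [LinearMap.coe_mk, AddHom.coe_mk, sub_coind_apply, one_mul] at this
      simpa using this

/-- The one-dimensional representation attached to a linear character. -/
noncomputable def charRep {S : Type} [Group S] (μ : S →* ℂˣ) : Representation ℂ S ℂ where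
  toFun s := LinearMap.lsmul ℂ ℂ (μ s : ℂ)
  map_one' := by ext; simp
  map_mul' x y := by ext; simp

lemma charRep_apply {S : Type} [Group S] (μ : S →* ℂˣ) (s : S) (z : ℂ) :
    charRep μ s z = μ s * z := rfl

lemma charRep_irr {S : Type} [Group S] (μ : S →* ℂˣ) : (charRep μ).IsIrreducible := by
  rw [irr_iff]
  exact ⟨⟨1, one_ne_zero⟩, fun W _ => IsSimpleOrder.eq_bot_or_eq_top (α := Ideal ℂ) W⟩

lemma exists_over_char {G : Type} [Group G] [Finite G] (S : Subgroup G) (μ : S →* ℂˣ)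
    (n : ℕ) (hn : ¬ n ∣ S.index) :
    ∃ (U : Type) (_ : AddCommGroup U) (_ : Module ℂ U) (_ : FiniteDimensional ℂ U)
      (ρ : Representation ℂ G U), ρ.IsIrreducible ∧ ¬ n ∣ finrank ℂ U ∧ Over ρ S μ := by
  obtain ⟨U, i1, i2, i3, ρ, h1, h2, f, h3, h4⟩ :=
    exists_over_rep S (charRep μ) (charRep_irr μ) n (by rwa [finrank_self, mul_one])
  refine ⟨U, i1, i2, i3, ρ, h1, h2, f, ?_, h4⟩
  rintro rfl
  obtain ⟨u, hu⟩ := h3 1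
  simp at hu

/-- Stabilizer of a linear character of a subgroup. -/
def stab {G : Type} [Group G] (M : Subgroup G) [hM : M.Normal] (μ : M →* ℂˣ) : Subgroup G where
  carrier := {g | ∀ m : M, μ ⟨g * m * g⁻¹, hM.conj_mem m m.2 g⟩ = μ m}
  one_mem' := by intro m; simp
  mul_mem' := by
    intro x y hx hy m
    have h1 := hx ⟨y * m * y⁻¹, hM.conj_mem m m.2 y⟩
    rw [hy m] at h1
    rw [← h1]
    congr 1
    ext
    simp [mul_assoc]
  inv_mem' := by
    intro x hx m
    rw [← hx ⟨x⁻¹ * m * x⁻¹⁻¹, hM.conj_mem m m.2 x⁻¹⟩]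
    congr 1
    ext
    simp [mul_assoc]

lemma mem_stab {G : Type} [Group G] (M : Subgroup G) [hM : M.Normal] (μ : M →* ℂˣ) (g : G) :
    g ∈ stab M μ ↔ ∀ m : M, μ ⟨g * m * g⁻¹, hM.conj_mem m m.2 g⟩ = μ m := Iff.rfl

lemma le_stab {G : Type} [Group G] (M : Subgroup G) [hM : M.Normal] (μ : M →* ℂˣ) :
    M ≤ stab M μ := by
  intro g hg m
  have : (⟨g * m * g⁻¹, hM.conj_mem m m.2 g⟩ : M) = ⟨g, hg⟩ * m * ⟨g, hg⟩⁻¹ := rfl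
  rw [this, map_mul, map_mul, map_inv]
  simp [mul_comm]

section orbit
variable {G U : Type} [Group G] [Finite G] [AddCommGroup U] [Module ℂ U]

/-- weight space of the conjugate of `μ` by `g` -/
def wt (ρ : Representation ℂ G U) (M : Subgroup G) (μ : M →* ℂˣ) (g : G) : Submodule ℂ U where
  carrier := {u | ∀ m : M, ρ (g * m * g⁻¹) u = (μ m : ℂ) • u}
  zero_mem' := by intro m; simp
  add_mem' := by intro x y hx hy m; rw [map_add, hx m, hy m, smul_add]
  smul_mem' := by intro c x hx m; rw [map_smul, hx m, smul_comm c]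

lemma wt_map (ρ : Representation ℂ G U) (M : Subgroup G) (μ : M →* ℂˣ) (g h : G) (u : U) :
    u ∈ wt ρ M μ g ↔ ρ h u ∈ wt ρ M μ (h * g) := by
  have key : ∀ m : M, ρ (h * g * m * (h * g)⁻¹) (ρ h u) = ρ h (ρ (g * m * g⁻¹) u) := by
    intro m
    rw [← Module.End.mul_apply, ← map_mul, ← Module.End.mul_apply, ← map_mul]
    congr 2
    group
  constructor
  · intro hu m
    rw [key m, hu m, map_smul]
  · intro hu m
    have := hu m
    rw [key m, ← map_smul] at this
    have h2 := congrArg (ρ h⁻¹) this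
    simpa [← Module.End.mul_apply, ← map_mul] using h2

lemma wt_stab (ρ : Representation ℂ G U) (M : Subgroup G) [hM : M.Normal] (μ : M →* ℂˣ) (g h : G)
    (hh : h ∈ stab M μ) (u : U) (hu : u ∈ wt ρ M μ g) : u ∈ wt ρ M μ (g * h) := by
  intro m
  have := hu ⟨h * m * h⁻¹, hM.conj_mem m m.2 h⟩
  rw [hh m] at this
  rw [← this]
  congr 2
  simp [mul_assoc]

/-- projection -/
noncomputable def prj (ρ : Representation ℂ G U) (M : Subgroup G) (μ : M →* ℂˣ) (g : G) : U →ₗ[ℂ] U :=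
  letI := Fintype.ofFinite M
  (Nat.card M : ℂ)⁻¹ • ∑ m : M, ((μ m)⁻¹ : ℂˣ).1 • ρ (g * m * g⁻¹)

lemma prj_self (ρ : Representation ℂ G U) (M : Subgroup G) (μ : M →* ℂˣ) (g : G) (u : U)
    (hu : u ∈ wt ρ M μ g) : prj ρ M μ g u = u := by
  let _ := Fintype.ofFinite M
  have h0 : (Nat.card M : ℂ) ≠ 0 := by exact_mod_cast Nat.card_pos.ne'
  have : ∀ m : M, ((μ m)⁻¹ : ℂˣ).1 • ρ (g * m * g⁻¹) u = u := by
    intro m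
    rw [hu m, smul_smul]
    simp
  simp only [prj, LinearMap.smul_apply, LinearMap.sum_apply, this]
  rw [Finset.sum_const, Finset.card_univ, ← Nat.card_eq_fintype_card, ← Nat.cast_smul_eq_nsmul ℂ,
    smul_smul, inv_mul_cancel₀ h0, one_smul]

lemma prj_ne (ρ : Representation ℂ G U) (M : Subgroup G) [hM : M.Normal] (μ : M →* ℂˣ) (g h : G)
    (hgh : g⁻¹ * h ∉ stab M μ) (u : U)
    (hu : u ∈ wt ρ M μ h) : prj ρ M μ g u = 0 := by
  let _ := Fintype.ofFinite M
  let c : G → M →* M := fun x =>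
    { toFun := fun m => ⟨x * m * x⁻¹, hM.conj_mem m m.2 x⟩
      map_one' := by ext; simp
      map_mul' := by intro a b; ext; simp [mul_assoc] }
  let φ : M →* ℂ := (Units.coeHom ℂ).comp (μ⁻¹ * μ.comp (c (h⁻¹ * g)))
  have hφ : φ ≠ 1 := by
    intro h1
    apply hgh
    have : (g⁻¹ * h)⁻¹ ∈ stab M μ := by
      intro m
      have h2 := DFunLike.congr_fun h1 m
      simp only [φ, MonoidHom.comp_apply, MonoidHom.one_apply, Units.coeHom_apply,
        Units.val_eq_one, MonoidHom.mul_apply, MonoidHom.inv_apply, inv_mul_eq_one] at h2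
      rw [h2]
      simp only [c, MonoidHom.coe_mk, OneHom.coe_mk]
      congr 1
      ext
      simp
    simpa using inv_mem this
  have key : ∀ m : M, ((μ m)⁻¹ : ℂˣ).1 • ρ (g * m * g⁻¹) u = φ m • u := by
    intro m
    have := hu (c (h⁻¹ * g) m)
    have h3 : h * (c (h⁻¹ * g) m) * h⁻¹ = g * m * g⁻¹ := by
      simp [c, mul_assoc]
    rw [h3] at this
    rw [this, smul_smul]
    congr 1
  simp only [prj, LinearMap.smul_apply, LinearMap.sum_apply, key]
  rw [← Finset.sum_smul, sum_hom_units_eq_zero φ hφ, zero_smul, smul_zero]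

lemma prj_mem (ρ : Representation ℂ G U) (M : Subgroup G) (μ : M →* ℂˣ) (u : U) :
    prj ρ M μ 1 u ∈ wt ρ M μ 1 := by
  let _ := Fintype.ofFinite M
  intro n
  simp only [prj, LinearMap.smul_apply, LinearMap.sum_apply, map_smul, map_sum, one_mul, inv_one,
    mul_one]
  rw [smul_comm]
  congr 1
  rw [Finset.smul_sum]
  refine Fintype.sum_equiv (Equiv.mulLeft n) _ _ ?_
  intro m
  rw [← Module.End.mul_apply, ← map_mul, smul_smul]
  have : ((μ n : ℂˣ) : ℂ) * (((μ (n * m))⁻¹ : ℂˣ) : ℂ) = ((μ m)⁻¹ : ℂˣ) := by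
    rw [← Units.val_mul, map_mul, mul_inv, mul_inv_cancel_left]
  simp only [Equiv.coe_mulLeft, this, Subgroup.coe_mul]

theorem stab_index_dvd [FiniteDimensional ℂ U] (ρ : Representation ℂ G U) (hρ : ρ.IsIrreducible)
    (M : Subgroup G) [hM : M.Normal] (μ : M →* ℂˣ) (hov : Over ρ M μ) :
    (stab M μ).index ∣ finrank ℂ U := by
  classical
  let _ := Fintype.ofFinite (G ⧸ stab M μ)
  let A : G ⧸ stab M μ → Submodule ℂ U := fun q => wt ρ M μ q.out
  have hA : ∀ (g : G) u, u ∈ wt ρ M μ g → u ∈ A (g : G ⧸ stab M μ) := by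
    intro g u hu
    obtain ⟨h, hh⟩ := QuotientGroup.mk_out_eq_mul (stab M μ) g
    simp only [A]
    rw [hh]
    exact wt_stab ρ M μ g h h.2 u hu
  have hind : iSupIndep A := by
    rw [iSupIndep_def]
    intro q
    rw [Submodule.disjoint_def]
    intro u hu hu2
    have h1 := prj_self ρ M μ q.out u hu
    have h2 : (⨆ j, ⨆ (_ : j ≠ q), A j) ≤ LinearMap.ker (prj ρ M μ q.out) := by
      refine iSup₂_le fun j hj v hv => ?_
      rw [LinearMap.mem_ker]
      refine prj_ne ρ M μ q.out j.out ?_ v hv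
      intro h3
      apply hj
      rw [← QuotientGroup.out_eq' j, ← QuotientGroup.out_eq' q]
      exact (QuotientGroup.eq.mpr h3).symm
    have h3 := h2 hu2
    rw [LinearMap.mem_ker, h1] at h3
    exact h3
  have htop : iSup A = ⊤ := by
    refine (((irr_iff ρ).mp hρ).2 _ ?_).resolve_left ?_
    · intro g w hw
      have : iSup A ≤ (iSup A).comap (ρ g) := by
        refine iSup_le fun q v hv => ?_
        have h1 := (wt_map ρ M μ q.out g v).mp hv
        exact Submodule.mem_iSup_of_mem _ (hA _ _ h1)
      exact this hw
    · obtain ⟨f, hf0, hf⟩ := hov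
      obtain ⟨u, hu⟩ : ∃ u, f u ≠ 0 := by
        by_contra! h
        exact hf0 (LinearMap.ext h)
      intro hbot
      have h1 : prj ρ M μ 1 u ∈ iSup A := Submodule.mem_iSup_of_mem _ (hA _ _ (prj_mem ρ M μ u))
      rw [hbot, Submodule.mem_bot] at h1
      apply hu
      have h2 : f (prj ρ M μ 1 u) = f u := by
        let _ := Fintype.ofFinite M
        have h0 : (Nat.card M : ℂ) ≠ 0 := by exact_mod_cast Nat.card_pos.ne'
        simp only [prj, LinearMap.smul_apply, LinearMap.sum_apply, map_smul, map_sum, one_mul,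
          inv_one, mul_one, hf, smul_eq_mul, Units.inv_mul_cancel_left, Finset.sum_const]
        rw [Finset.card_univ, ← Nat.card_eq_fintype_card, nsmul_eq_mul, ← mul_assoc,
          inv_mul_cancel₀ h0, one_mul]
      rw [← h2, h1, map_zero]
  have hint := DirectSum.isInternal_submodule_of_iSupIndep_of_iSup_eq_top hind htop
  have e := LinearEquiv.ofBijective (DirectSum.coeLinearMap A) hint
  rw [← e.finrank_eq, Module.finrank_directSum]
  have hall : ∀ q, finrank ℂ (A q) = finrank ℂ (wt ρ M μ 1) := by
    intro q
    have h1 : A q = (wt ρ M μ 1).map (ρ q.out) := by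
      ext u
      constructor
      · intro hu
        refine ⟨ρ (q.out)⁻¹ u, ?_, ?_⟩
        · have := (wt_map ρ M μ q.out (q.out)⁻¹ u).mp hu
          simpa using this
        · simp
      · rintro ⟨v, hv, rfl⟩
        have := (wt_map ρ M μ 1 q.out v).mp hv
        simpa using this
    rw [h1]
    refine (LinearEquiv.finrank_eq (Submodule.equivMapOfInjective _ ?_ _)).symm
    intro x y hxy
    have := congrArg (ρ (q.out)⁻¹) hxy
    simpa [← Module.End.mul_apply, ← map_mul] using this
  rw [Finset.sum_congr rfl (fun q _ => hall q), Finset.sum_const, Finset.card_univ,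
    ← Nat.card_eq_fintype_card]
  exact Dvd.intro _ rfl

end orbit
end SolvCase


namespace SolvCase
open Representation Module
set_option linter.unusedSectionVars false

lemma exists_pprime (p : ℕ) (H : Type) [Group H] [Finite H] :
    ∃ (L : Subgroup H) (_ : L.Normal), (Nat.card L).Coprime p ∧
      ∀ M : Subgroup (H ⧸ L), M.Normal → (Nat.card M).Coprime p → M = ⊥ := by
  obtain ⟨L, hL⟩ := Set.Finite.exists_maximal
    (Set.toFinite {L : Subgroup H | L.Normal ∧ (Nat.card L).Coprime p}) ⟨⊥, by simp⟩
  have hLn : L.Normal := hL.prop.1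
  refine ⟨L, hLn, hL.prop.2, fun M hM hc => ?_⟩
  have h1 : Nat.card (M.comap (QuotientGroup.mk' L)) = Nat.card L * Nat.card M := by
    have h2 := Subgroup.card_mul_index (M.comap (QuotientGroup.mk' L))
    rw [Subgroup.index_comap_of_surjective _ (QuotientGroup.mk'_surjective L)] at h2
    have h3 := Subgroup.card_mul_index M
    have h4 := Subgroup.card_mul_index L
    have h5 : L.index = Nat.card (H ⧸ L) := rfl
    have h6 : 0 < M.index := Nat.pos_of_ne_zero Subgroup.index_ne_zero_of_finite
    apply Nat.eq_of_mul_eq_mul_right h6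
    rw [h2, ← h4, h5, ← h3, mul_assoc]
  have h7 : M.comap (QuotientGroup.mk' L) ≤ L := by
    refine hL.le_of_ge ⟨hM.comap _, ?_⟩ ?_
    · rw [h1]; exact Nat.Coprime.mul_left hL.prop.2 hc
    · intro x hx
      rw [Subgroup.mem_comap, QuotientGroup.mk'_apply, (QuotientGroup.eq_one_iff x).mpr hx]
      exact one_mem _
  rw [eq_bot_iff]
  intro y hy
  obtain ⟨x, rfl⟩ := QuotientGroup.mk'_surjective L y
  exact Subgroup.mem_bot.mpr ((QuotientGroup.eq_one_iff x).mpr (h7 hy))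

/-- derived series of a subgroup, as subgroups of the whole group -/
def ds {G : Type} [Group G] (C : Subgroup G) : ℕ → Subgroup G
  | 0 => C
  | n + 1 => ⁅ds C n, ds C n⁆

theorem hall_higman (p : ℕ) (hp : p.Prime) (G : Type) [Group G] [Finite G] (hsolv : Group.IsSolvable G)
    (hO : ∀ N : Subgroup G, N.Normal → (Nat.card N).Coprime p → N = ⊥)
    (N : Subgroup G) [N.Normal] (hN : ∀ A : Subgroup G, A.Normal → IsPGroup p A → A ≤ N) :
    Subgroup.centralizer (N : Set G) ≤ N := by
  by_contra hC
  set C := Subgroup.centralizer (N : Set G) with hCdef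
  obtain ⟨D, hD0, hD⟩ : ∃ D : ℕ → Subgroup G, D 0 = C ∧ ∀ n, D (n + 1) = ⁅D n, D n⁆ :=
    ⟨ds C, rfl, fun _ => rfl⟩
  have hDn : ∀ n, (D n).Normal := by
    intro n
    induction n with
    | zero => rw [hD0]; infer_instance
    | succ n ih => rw [hD]; infer_instance
  have hDs : ∀ n, D n ≤ derivedSeries G n := by
    intro n
    induction n with
    | zero => simp
    | succ n ih => rw [hD, derivedSeries_succ]; exact Subgroup.commutator_mono ih ih
  have hDC : ∀ n, D n ≤ C := by
    intro n
    induction n with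
    | zero => rw [hD0]
    | succ n ih =>
      rw [hD]
      have := hDn n
      exact (Subgroup.commutator_le_left _ _).trans ih
  have hex : ∃ n, D n ≤ N := by
    obtain ⟨n, hn⟩ := (Group.isSolvable_def G).mp hsolv
    exact ⟨n, ((hDs n).trans hn.le).trans bot_le⟩
  classical
  obtain ⟨i, hi1, hi2⟩ : ∃ i, ¬ D i ≤ N ∧ D (i + 1) ≤ N := by
    have h1 := Nat.find_spec hex
    rcases h2 : Nat.find hex with _ | i
    · rw [h2, hD0] at h1; exact absurd h1 hC
    · rw [h2] at h1
      exact ⟨i, Nat.find_min hex (by omega), h1⟩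
  set A : Subgroup G := D i
  have hAn : A.Normal := hDn i
  apply hi1
  apply hN A hAn
  have hnil : Group.IsNilpotent ↥A := by
    refine Subgroup.isNilpotent_of_ker_le_center (Abelianization.of (G := A)) ?_
    rw [Abelianization.ker_of, commutator_def, Subgroup.commutator_le]
    intro x _ y _
    rw [Subgroup.mem_center_iff]
    intro z
    ext
    have h1 : x.1 * y.1 * x.1⁻¹ * y.1⁻¹ ∈ N := hi2 (by
      rw [hD]
      exact Subgroup.commutator_mem_commutator x.2 y.2)
    have h2 : z.1 ∈ C := hDC i z.2
    rw [hCdef, Subgroup.mem_centralizer_iff] at h2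
    exact (h2 _ h1).symm
  have hcard : Nat.card A = p ^ (Nat.card A).primeFactorsList.length := by
    apply Nat.eq_prime_pow_of_unique_prime_dvd Nat.card_pos.ne'
    intro q hq hqd
    by_contra hqp
    have := Fact.mk hq
    let Q : Sylow q A := default
    have hQn : Q.Normal := ((Group.isNilpotent_of_finite_tfae (G := A)).out 0 3 rfl rfl).mp hnil q ‹_› Q
    have hQc := Sylow.characteristic_of_normal Q hQn
    have h1 : (Q.1.map A.subtype).Normal := inferInstance
    have h2 : Nat.card (Q.1.map A.subtype) = Nat.card Q :=
      Nat.card_congr (Q.1.equivMapOfInjective _ A.subtype_injective).symm.toEquiv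
    obtain ⟨n, hn⟩ := IsPGroup.iff_card.mp Q.isPGroup'
    have h3 := hO _ h1 (by
      rw [h2]
      change (Nat.card Q.1).Coprime p
      erw [hn]
      exact Nat.Coprime.pow_left _ ((Nat.coprime_primes hq hp).mpr hqp))
    rw [h3, Subgroup.card_bot] at h2
    have h4 := Q.dvd_card_of_dvd_card hqd
    rw [← h2] at h4
    exact hq.one_lt.ne' (Nat.dvd_one.mp h4)
  exact IsPGroup.of_card hcard

/-- every normal `p`-subgroup lies in the core of a Sylow `p`-subgroup -/
lemma le_core (p : ℕ) (hp : p.Prime) (G : Type) [Group G] [Finite G] (P : Sylow p G)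
    (A : Subgroup G) (hA : A.Normal) (hAp : IsPGroup p A) : A ≤ P.1.normalCore := by
  rw [Subgroup.normal_le_normalCore]
  have := Fact.mk hp
  obtain ⟨S, hS⟩ := hAp.exists_le_sylow
  obtain ⟨g, rfl⟩ := MulAction.exists_smul_eq G P S
  intro x hx
  have := hS (hA.conj_mem x hx g)
  rw [Sylow.coe_subgroup_smul, Subgroup.mem_pointwise_smul_iff_inv_smul_mem] at this
  simpa [mul_assoc] using this

lemma sup_normal (p : ℕ) (hp : p.Prime) (H : Type) [Group H] [Finite H] (hsolv : Group.IsSolvable H)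
    (Q : Sylow p H) (hQ : ∀ x ∈ Q, ∀ y ∈ Q, x * y = y * x) (L : Subgroup H) [L.Normal]
    (hL : ∀ M : Subgroup (H ⧸ L), M.Normal → (Nat.card M).Coprime p → M = ⊥) :
    (Q.1 ⊔ L).Normal := by
  have := Fact.mk hp
  let Q' : Sylow p (H ⧸ L) := Q.mapSurjective (QuotientGroup.mk'_surjective L)
  have hQ' : Q'.1 = Q.1.map (QuotientGroup.mk' L) := rfl
  have hHH := hall_higman p hp (H ⧸ L) inferInstance hL Q'.1.normalCore (le_core p hp _ Q')
  have h1 : Q'.1 ≤ Subgroup.centralizer (Q'.1.normalCore : Set (H ⧸ L)) := by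
    intro x hx
    rw [Subgroup.mem_centralizer_iff]
    intro y hy
    have hy' := Q'.1.normalCore_le hy
    rw [hQ'] at hx hy'
    obtain ⟨x, hx, rfl⟩ := hx
    obtain ⟨y, hy', rfl⟩ := hy'
    rw [← map_mul, ← map_mul, hQ _ hy' _ hx]
  have h2 : Q'.1.Normal := by
    rw [← le_antisymm Q'.1.normalCore_le (h1.trans hHH)]
    infer_instance
  have h3 : Q'.1.comap (QuotientGroup.mk' L) = Q.1 ⊔ L := by
    rw [hQ', Subgroup.comap_map_eq, QuotientGroup.ker_mk']
  rw [← h3]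
  exact h2.comap _

lemma conj_by (p : ℕ) (hp : p.Prime) (H : Type) [Group H] [Finite H]
    (Q S : Sylow p H) (L : Subgroup H) [L.Normal] (hn : (Q.1 ⊔ L).Normal) :
    ∃ l ∈ L, ∀ x, x ∈ S ↔ l⁻¹ * x * l ∈ Q := by
  have := Fact.mk hp
  have hS : S.1 ≤ Q.1 ⊔ L := by
    obtain ⟨g, rfl⟩ := MulAction.exists_smul_eq H Q S
    intro x hx
    rw [Sylow.coe_subgroup_smul, Subgroup.mem_pointwise_smul_iff_inv_smul_mem] at hx
    have := hn.conj_mem _ (Subgroup.mem_sup_left hx : _ ∈ Q.1 ⊔ L) g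
    simpa [mul_assoc] using this
  obtain ⟨r, hr⟩ := MulAction.exists_smul_eq (↥(Q.1 ⊔ L)) (Q.subtype le_sup_left) (S.subtype hS)
  have hmem : ∀ x, x ∈ S ↔ r.1⁻¹ * x * r.1 ∈ Q := by
    have key : ∀ y : ↥(Q.1 ⊔ L), y.1 ∈ S ↔ r.1⁻¹ * y.1 * r.1 ∈ Q := by
      intro y
      have h1 : y ∈ (S.subtype hS).1 ↔ y.1 ∈ S := by
        rw [Sylow.coe_subtype]; exact Subgroup.mem_subgroupOf
      rw [← h1, ← hr, Sylow.coe_subgroup_smul, Subgroup.mem_pointwise_smul_iff_inv_smul_mem,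
        Sylow.coe_subtype, Subgroup.mem_subgroupOf]
      simp only [MulAut.smul_def, ← map_inv, MulAut.conj_apply, Subgroup.coe_mul,
        Subgroup.coe_inv, inv_inv]
      rfl
    intro x
    constructor
    · intro hx; exact (key ⟨x, hS hx⟩).mp hx
    · intro hx
      have h2 : r.1⁻¹ * x * r.1 ∈ Q.1 ⊔ L := Subgroup.mem_sup_left hx
      have h3 := hn.conj_mem _ h2 r.1
      have h4 : x ∈ Q.1 ⊔ L := by simpa [mul_assoc] using h3
      exact (key ⟨x, h4⟩).mpr hx
  have hr2 : r.1 ∈ L ⊔ Q.1 := by rw [sup_comm]; exact r.2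
  obtain ⟨l, hl, q, hq, hlq⟩ := Subgroup.mem_sup_of_normal_left.mp hr2
  refine ⟨l, hl, fun x => ?_⟩
  rw [hmem, ← hlq]
  constructor
  · intro h
    have := Q.1.mul_mem (Q.1.mul_mem hq h) (Q.1.inv_mem hq)
    have e : q * ((l * q)⁻¹ * x * (l * q)) * q⁻¹ = l⁻¹ * x * l := by group
    rwa [e] at this
  · intro h
    have := Q.1.mul_mem (Q.1.mul_mem (Q.1.inv_mem hq) h) hq
    have e : q⁻¹ * (l⁻¹ * x * l) * q = (l * q)⁻¹ * x * (l * q) := by group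
    rwa [e] at this
end SolvCase


namespace SolvCase
open Representation Module
set_option linter.unusedSectionVars false

/-- the conclusion, in terms of representations -/
def Good (p a : ℕ) (G : Type) [Group G] : Prop :=
  ∃ (U : Type) (_ : AddCommGroup U) (_ : Module ℂ U) (_ : FiniteDimensional ℂ U)
    (ρ : Representation ℂ G U), ρ.IsIrreducible ∧ p ∣ finrank ℂ U ∧ ¬ p ^ (a + 1) ∣ finrank ℂ U

/-- the degree hypothesis -/
def Hdeg (p a : ℕ) (P : Type) [Group P] : Prop :=
  ∀ (U : Type) [AddCommGroup U] [Module ℂ U] [FiniteDimensional ℂ U]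
    (ρ : Representation ℂ P U), ρ.IsIrreducible → finrank ℂ U = 1 ∨ finrank ℂ U = p ^ a

lemma irr_comp {G H U : Type} [Group G] [Group H] [AddCommGroup U] [Module ℂ U] (φ : G →* H)
    (hφ : Function.Surjective φ) (ρ : Representation ℂ H U) (h : ρ.IsIrreducible) :
    Representation.IsIrreducible (ρ.comp φ : Representation ℂ G U) := by
  rw [irr_iff] at h ⊢
  refine ⟨h.1, fun W hW => h.2 W fun g w hw => ?_⟩
  obtain ⟨x, rfl⟩ := hφ g
  exact hW x w hw

lemma Good.inflate {p a : ℕ} {G H : Type} [Group G] [Group H] (φ : G →* H)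
    (hφ : Function.Surjective φ) (h : Good p a H) : Good p a G := by
  obtain ⟨U, i1, i2, i3, ρ, h1, h2⟩ := h
  exact ⟨U, i1, i2, i3, ρ.comp φ, irr_comp φ hφ ρ h1, h2⟩

lemma Hdeg.quot {p a : ℕ} {G H : Type} [Group G] [Group H] (φ : G →* H)
    (hφ : Function.Surjective φ) (h : Hdeg p a G) : Hdeg p a H := by
  intro U _ _ _ ρ hρ
  exact h U (ρ.comp φ) (irr_comp φ hφ ρ hρ)

lemma exists_sylow_le (p : ℕ) (hp : p.Prime) {G : Type} [Group G] [Finite G] (K : Subgroup G)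
    (hK : ¬ p ∣ K.index) (T : Subgroup G) (hT : IsPGroup p T) (hTK : T ≤ K) :
    ∃ S : Sylow p G, T ≤ S.1 ∧ S.1 ≤ K := by
  have := Fact.mk hp
  have h1 : IsPGroup p (T.subgroupOf K) :=
    hT.of_equiv (Subgroup.subgroupOfEquivOfLe hTK).symm
  obtain ⟨S0, hS0⟩ := h1.exists_le_sylow
  have h2 : IsPGroup p (S0.1.map K.subtype) := S0.isPGroup'.map _
  have h3 : ¬ p ∣ (S0.1.map K.subtype).index := by
    rw [Subgroup.index_map_subtype, hp.dvd_mul]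
    push Not
    exact ⟨S0.not_dvd_index, hK⟩
  refine ⟨h2.toSylow h3, ?_, ?_⟩
  · intro x hx
    exact ⟨⟨x, hTK hx⟩, hS0 (Subgroup.mem_subgroupOf.mpr hx), rfl⟩
  · exact Subgroup.map_subtype_le _

lemma exists_char_ne {M : Type} [Group M] [Finite M] (d : M) (hd : d ∉ commutator M) :
    ∃ ν : M →* ℂˣ, ν d ≠ 1 := by
  have h1 : Abelianization.of d ≠ 1 := by
    intro h; apply hd; rw [← Abelianization.ker_of]; exact h
  obtain ⟨φ, hφ⟩ := CommGroup.exists_apply_ne_one_of_hasEnoughRootsOfUnity (Abelianization M) ℂ h1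
  exact ⟨φ.comp Abelianization.of, hφ⟩

lemma extend_char {H : Type} [Group H] (B M : Subgroup H) [hM : M.Normal]
    (hBM : ∀ x ∈ B, x ∈ M → x = 1) (μ : M →* ℂˣ) (hB : B ≤ stab M μ) :
    ∃ ν : ↥(B ⊔ M) →* ℂˣ, ∀ m : M, ν ⟨m, Subgroup.mem_sup_right m.2⟩ = μ m := by
  have h0 : ∀ s : ↥(B ⊔ M), ∃ m : M, ∃ b : B, (m : H) * b = s := by
    intro s
    have hs : s.1 ∈ M ⊔ B := by rw [sup_comm]; exact s.2
    obtain ⟨m, hm, b, hb, h⟩ := Subgroup.mem_sup_of_normal_left.mp hs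
    exact ⟨⟨m, hm⟩, ⟨b, hb⟩, h⟩
  choose m b hmb using h0
  have huniq : ∀ (s : ↥(B ⊔ M)) (m' : M) (b' : B), (m' : H) * b' = s → m s = m' := by
    intro s m' b' h
    have h1 : (m' : H)⁻¹ * m s = b' * (b s : H)⁻¹ := by
      rw [inv_mul_eq_iff_eq_mul, ← mul_assoc, h, ← hmb s]; group
    have h2 := hBM (b' * (b s : H)⁻¹) (B.mul_mem b'.2 (B.inv_mem (b s).2))
      (h1 ▸ M.mul_mem (M.inv_mem m'.2) (m s).2)
    rw [h2, inv_mul_eq_one] at h1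
    exact Subtype.ext h1.symm
  refine ⟨{ toFun := fun s => μ (m s), map_one' := ?_, map_mul' := ?_ }, ?_⟩
  · rw [huniq 1 1 1 (by simp), map_one]
  · intro s t
    rw [huniq (s * t) (m s * ⟨b s * m t * (b s : H)⁻¹, hM.conj_mem _ (m t).2 _⟩) (b s * b t) (by
      rw [Subgroup.coe_mul (B ⊔ M), ← hmb s, ← hmb t]; push_cast; group), map_mul, hB (b s).2 (m t)]
  · intro x
    change μ (m _) = μ x
    rw [huniq _ x 1 (by simp)]

lemma Over.of_le {G U : Type} [Group G] [AddCommGroup U] [Module ℂ U] {ρ : Representation ℂ G U}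
    {S M : Subgroup G} {ν : S →* ℂˣ} (h : Over ρ S ν) (hMS : M ≤ S) (μ : M →* ℂˣ)
    (hμ : ∀ m : M, ν ⟨m, hMS m.2⟩ = μ m) : Over ρ M μ := by
  obtain ⟨f, h1, h2⟩ := h
  refine ⟨f, h1, fun m u => ?_⟩
  rw [← hμ m, ← h2]

theorem ml2 (p a : ℕ) (hp : p.Prime) (H : Type) [Group H] [Finite H] (hsolv : Group.IsSolvable H)
    (L : Subgroup H) [hL : L.Normal] (hLp : (Nat.card L).Coprime p) (Q : Sylow p H)
    (hQ : ∀ x ∈ Q, ∀ y ∈ Q, x * y = y * x) (hn : (Q.1 ⊔ L).Normal)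
    (B : Subgroup H) (hBQ : B ≤ Q.1) (hBi : ¬ p ^ (a + 1) ∣ B.index)
    (c : H) (hc : c ∈ L) (hcB : ∀ b ∈ B, c * b = b * c) (q : H) (hq : q ∈ Q)
    (hcq : c * q ≠ q * c) : Good p a H := by
  classical
  have := Fact.mk hp
  obtain ⟨D, hD0, hD⟩ : ∃ D : ℕ → Subgroup H, D 0 = L ∧ ∀ n, D (n + 1) = ⁅D n, D n⁆ :=
    ⟨ds L, rfl, fun _ => rfl⟩
  have hDn : ∀ n, (D n).Normal := by
    intro n
    induction n with
    | zero => rw [hD0]; infer_instance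
    | succ n ih => rw [hD]; infer_instance
  have hDs : ∀ n, D n ≤ derivedSeries H n := by
    intro n
    induction n with
    | zero => simp
    | succ n ih => rw [hD, derivedSeries_succ]; exact Subgroup.commutator_mono ih ih
  have hDL : ∀ n, D n ≤ L := by
    intro n
    induction n with
    | zero => rw [hD0]
    | succ n ih =>
      rw [hD]
      have := hDn n
      exact (Subgroup.commutator_le_left _ _).trans ih
  have hex : ∃ n, ¬ ∀ x ∈ L, (∀ b ∈ B, x * b = b * x) → ∀ y ∈ Q, x⁻¹ * (y * x * y⁻¹) ∈ D n := by
    obtain ⟨n, hn⟩ := (Group.isSolvable_def H).mp hsolv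
    refine ⟨n, fun h => hcq ?_⟩
    have h1 := hDs n (h c hc hcB q hq)
    rw [hn, Subgroup.mem_bot, inv_mul_eq_one, eq_mul_inv_iff_mul_eq] at h1
    exact h1
  obtain ⟨i, hi1, hi2⟩ : ∃ i, (∀ x ∈ L, (∀ b ∈ B, x * b = b * x) → ∀ y ∈ Q,
      x⁻¹ * (y * x * y⁻¹) ∈ D i) ∧ ¬ ∀ x ∈ L, (∀ b ∈ B, x * b = b * x) → ∀ y ∈ Q,
      x⁻¹ * (y * x * y⁻¹) ∈ D (i + 1) := by
    have h1 := Nat.find_spec hex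
    rcases h2 : Nat.find hex with _ | i
    · rw [h2, hD0] at h1
      exact absurd (fun x hx _ y _ => L.mul_mem (L.inv_mem hx) (hL.conj_mem x hx y)) h1
    · rw [h2] at h1
      exact ⟨i, not_not.mp (Nat.find_min hex (by omega)), h1⟩
  clear hcq hcB hc hq
  clear c q
  push Not at hi2
  obtain ⟨c, hc, hcB, q, hq, hd⟩ := hi2
  set M := D i with hMdef
  have hM : M.Normal := hDn i
  have hML : M ≤ L := hDL i
  rw [hD] at hd
  have hMp : (Nat.card M).Coprime p := hLp.coprime_dvd_left (Subgroup.card_dvd_of_le hML)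
  obtain ⟨k, hk⟩ := IsPGroup.iff_card.mp Q.isPGroup'
  have hMQ : (Nat.card M).Coprime (Nat.card Q.1) := by
    have := Nat.Coprime.pow_right k hMp
    exact hk ▸ this
  have hMB : (Nat.card M).Coprime (Nat.card B) :=
    hMQ.coprime_dvd_right (Subgroup.card_dvd_of_le hBQ)
  have hQL : ∀ x ∈ Q, x ∈ L → x = 1 := by
    have h1 : (Nat.card Q.1).Coprime (Nat.card L) := by
      have := Nat.Coprime.pow_left k hLp.symm
      exact hk ▸ this
    have h2 := (Subgroup.disjoint_of_coprime_natCard h1).eq_bot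
    intro x hx hx'
    have : x ∈ Q.1 ⊓ L := ⟨hx, hx'⟩
    rw [h2] at this
    exact this
  let d : M := ⟨c⁻¹ * (q * c * q⁻¹), hi1 c hc hcB q hq⟩
  have hd' : d ∉ commutator M := by
    intro h
    apply hd
    rw [← Subgroup.map_subtype_commutator]
    exact ⟨d, h, rfl⟩
  obtain ⟨ν, hν⟩ := exists_char_ne d hd'
  let _ := Fintype.ofFinite B
  let μ : M →* ℂˣ := ∏ b : B, ν.comp (MulAut.conjNormal (H := M) b.1).toMonoidHom
  have hμ : ∀ m, μ m = ∏ b : B, ν (MulAut.conjNormal (H := M) b.1 m) := by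
    intro m
    simp [μ, MonoidHom.finsetProd_apply]
  have hBs : B ≤ stab M μ := by
    intro b hb m
    rw [hμ, hμ]
    refine Fintype.prod_equiv (Equiv.mulRight ⟨b, hb⟩) _ _ fun x => ?_
    congr 1
    ext
    simp [mul_assoc]
  have hbd : ∀ b : B, MulAut.conjNormal (H := M) b.1 d = d := by
    intro b
    ext
    rw [MulAut.conjNormal_apply]
    have e1 := hcB b.1 b.2
    have e2 := hQ q hq b.1 (hBQ b.2)
    have e1' : (b : H) * c⁻¹ = c⁻¹ * b := by
      rw [mul_inv_eq_iff_eq_mul, mul_assoc, ← e1, inv_mul_cancel_left]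
    have e2' : (b : H) * q⁻¹ = q⁻¹ * b := by
      rw [mul_inv_eq_iff_eq_mul, mul_assoc, ← e2, inv_mul_cancel_left]
    change b.1 * (c⁻¹ * (q * c * q⁻¹)) * b.1⁻¹ = c⁻¹ * (q * c * q⁻¹)
    rw [mul_inv_eq_iff_eq_mul, ← mul_assoc, e1']
    simp only [mul_assoc]
    rw [← e2', ← mul_assoc b.1 q, ← e2, mul_assoc q, ← mul_assoc b.1 c, ← e1]
    simp only [mul_assoc]
  have hμd : μ d = ν d ^ Nat.card B := by
    rw [hμ, Finset.prod_congr rfl (fun b _ => by rw [hbd b]), Finset.prod_const, Finset.card_univ,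
      Nat.card_eq_fintype_card]
  have hpow : ∀ (φ : M →* ℂˣ) (n : ℕ), (Nat.card M).Coprime n → φ d ^ n = 1 → φ d = 1 := by
    intro φ n hn h
    have h1 : φ d ^ Nat.card M = 1 := by rw [← map_pow, pow_card_eq_one', map_one]
    have h2 := Nat.dvd_gcd (orderOf_dvd_of_pow_eq_one h1) (orderOf_dvd_of_pow_eq_one h)
    rw [hn] at h2
    exact orderOf_eq_one_iff.mp (Nat.dvd_one.mp h2)
  have hμd1 : μ d ≠ 1 := fun h => hν (hpow ν _ hMB (hμd ▸ h))
  obtain ⟨μ', hμ'⟩ := extend_char B M (fun x hx hx' => hQL x (hBQ hx) (hML hx')) μ hBs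
  obtain ⟨U, i1, i2, i3, ρ, hρ, hdim, hov⟩ := exists_over_char (B ⊔ M) μ' (p ^ (a + 1))
    (fun h => hBi (h.trans (Subgroup.index_dvd_of_le le_sup_left)))
  have hov' : Over ρ M μ := hov.of_le le_sup_right μ hμ'
  refine ⟨U, i1, i2, i3, ρ, hρ, ?_, hdim⟩
  by_contra hpU
  have hst : ¬ p ∣ (stab M μ).index := fun h => hpU (h.trans (stab_index_dvd ρ hρ M μ hov'))
  obtain ⟨S, hBS, hSs⟩ := exists_sylow_le p hp (stab M μ) hst B (Q.isPGroup'.to_le hBQ) hBs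
  obtain ⟨l, hl, hlS⟩ := conj_by p hp H Q S L hn
  have hlB : ∀ b ∈ B, l⁻¹ * b = b * l⁻¹ := by
    intro b hb
    have h1 := (hlS b).mp (hBS hb)
    have h2 : b⁻¹ * (l⁻¹ * b * l) ∈ Q := Q.1.mul_mem (Q.1.inv_mem (hBQ hb)) h1
    have h3 : b⁻¹ * (l⁻¹ * b * l) ∈ L := by
      have := L.mul_mem (hL.conj_mem l⁻¹ (L.inv_mem hl) b⁻¹) hl
      simpa [mul_assoc] using this
    have h4 := hQL _ h2 h3
    rw [inv_mul_eq_one, eq_comm, ← eq_mul_inv_iff_mul_eq] at h4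
    exact h4
  have hQs : Q.1 ≤ stab M μ := by
    intro x hx
    have h1 := le_stab M μ (hi1 l⁻¹ (L.inv_mem hl) hlB x hx)
    have h2 : l * x * l⁻¹ ∈ stab M μ := by
      apply hSs
      change _ ∈ S
      rw [hlS]
      have : l⁻¹ * (l * x * l⁻¹) * l = x := by group
      rw [this]; exact hx
    have h3 := (stab M μ).mul_mem ((stab M μ).inv_mem h1) h2
    have : (l⁻¹⁻¹ * (x * l⁻¹ * x⁻¹))⁻¹ * (l * x * l⁻¹) = x := by group
    rwa [this] at h3
  have hqk : ∀ k : ℕ, q ^ k ∈ Q := fun k => Q.1.pow_mem hq k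
  have hpk : ∀ k : ℕ, μ ⟨c⁻¹ * (q ^ k * c * (q ^ k)⁻¹), hi1 c hc hcB _ (hqk k)⟩ = μ d ^ k := by
    intro k
    induction k with
    | zero => simp only [pow_zero]; simp; exact map_one μ
    | succ k ih =>
      rw [pow_succ (μ d), ← ih, ← hQs (hqk k) d, ← map_mul]
      congr 1
      ext
      simp only [d, Subgroup.coe_mul]
      group
  apply hμd1
  apply hpow μ _ hMQ
  rw [← hpk]
  have : q ^ Nat.card Q.1 = 1 := by
    have := pow_card_eq_one' (x := (⟨q, hq⟩ : Q.1))
    exact congrArg Subtype.val this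
  simp [this]
  exact map_one μ
end SolvCase


namespace SolvCase
open Representation Module
open scoped commutatorElement IsMulCommutative
set_option linter.unusedSectionVars false

lemma not_dvd_aux (p a i d : ℕ) (hp : p.Prime) (hi : ¬ p ∣ i) (hd : d ∣ p ^ a) :
    ¬ p ^ (a + 1) ∣ i * d := by
  intro h
  have h1 : p ^ (a + 1) ∣ i * p ^ a := h.trans (Nat.mul_dvd_mul_left i hd)
  rw [pow_succ, mul_comm] at h1
  exact hi (Nat.dvd_of_mul_dvd_mul_right (pow_pos hp.pos a) h1)

lemma r4 (p a : ℕ) (hp : p.Prime) {G : Type} [Group G] [Finite G] (P : Sylow p G)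
    (hdeg : Hdeg p a P.1) (S : Subgroup P.1) (ν : S →* ℂˣ) :
    ∃ (U : Type) (_ : AddCommGroup U) (_ : Module ℂ U) (_ : FiniteDimensional ℂ U)
      (ρ : Representation ℂ G U), ρ.IsIrreducible ∧ ¬ p ^ (a + 1) ∣ finrank ℂ U ∧
      ∃ f : U →ₗ[ℂ] ℂ, f ≠ 0 ∧ ∀ (s : S) u, f (ρ (s.1.1) u) = ν s * f u := by
  have := Fact.mk hp
  obtain ⟨V, i1, i2, i3, σ, h1, -, f, hf, h3⟩ := exists_over_char S ν 0
    (by rw [Nat.zero_dvd]; exact Subgroup.index_ne_zero_of_finite)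
  have hd : finrank ℂ V ∣ p ^ a := by
    rcases hdeg V σ h1 with h | h <;> rw [h]
    exact one_dvd _
  obtain ⟨U, j1, j2, j3, ρ, h4, h5, g, hg, h6⟩ := exists_over_rep P.1 σ h1 (p ^ (a + 1))
    (not_dvd_aux p a _ _ hp P.not_dvd_index hd)
  refine ⟨U, j1, j2, j3, ρ, h4, h5, f.comp g, ?_, ?_⟩
  · intro h
    apply hf
    ext v
    obtain ⟨u, rfl⟩ := hg v
    exact LinearMap.congr_fun h u
  · intro s u
    change f (g _) = ν s * f (g u)
    rw [h6, h3]

lemma pline (p a : ℕ) (ha : 1 ≤ a) {G : Type} [Group G] [Finite G] (P : Sylow p G)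
    (hdeg : Hdeg p a P.1) {U : Type} [AddCommGroup U] [Module ℂ U] [FiniteDimensional ℂ U]
    (ρ : Representation ℂ G U) (hU : ¬ p ∣ finrank ℂ U) :
    ∃ v : U, v ≠ 0 ∧ ∀ x ∈ P, ∃ c : ℂ, ρ x v = c • v := by
  obtain ⟨W, h1, h2⟩ := exists_irr_sub (ρ.comp P.1.subtype : Representation ℂ P.1 U) p hU
  have h3 : finrank ℂ W.toSubmodule = 1 := by
    rcases hdeg W.toSubmodule W.toRepresentation h1 with h | h
    · exact h
    · exact absurd (h ▸ dvd_pow_self p (by omega)) h2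
  obtain ⟨v, hv, h4⟩ := finrank_eq_one_iff'.mp h3
  refine ⟨v.1, fun h => hv (Subtype.ext h), fun x hx => ?_⟩
  obtain ⟨c, hc⟩ := h4 (W.toRepresentation ⟨x, hx⟩ v)
  exact ⟨c, (congrArg Subtype.val hc).symm⟩

lemma core_comm (p a : ℕ) (hp : p.Prime) (ha : 1 ≤ a) {G : Type} [Group G] [Finite G]
    (P : Sylow p G) (hdeg : Hdeg p a P.1) (hng : ¬ Good p a G) :
    ∀ n ∈ P.1.normalCore, ∀ m ∈ P.1.normalCore, n * m = m * n := by
  by_contra! hcon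
  obtain ⟨n, hn, m, hm, hnm⟩ := hcon
  set N := P.1.normalCore with hN
  let K : Subgroup G := ⁅N, N⁆
  have hK : K.Normal := inferInstance
  have hNP : N ≤ P.1 := P.1.normalCore_le
  have hKN : K ≤ N := Subgroup.commutator_le_left _ _
  have hxK : ⁅n, m⁆ ∈ K := Subgroup.commutator_mem_commutator hn hm
  have hx1 : ⁅n, m⁆ ≠ 1 := fun h => hnm (commutatorElement_eq_one_iff_mul_comm.mp h)
  let x : P.1 := ⟨⁅n, m⁆, hNP (hKN hxK)⟩
  let S := Subgroup.zpowers x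
  obtain ⟨ν, hν⟩ := CommGroup.exists_apply_ne_one_of_hasEnoughRootsOfUnity ↥S ℂ
    (a := ⟨x, Subgroup.mem_zpowers x⟩) (by
      intro h
      exact hx1 (congrArg (fun z => z.1.1) h))
  obtain ⟨U, i1, i2, i3, ρ, h1, h2, f, h3, h4⟩ := r4 p a hp P hdeg S ν
  have h5 : ¬ p ∣ finrank ℂ U := fun h => hng ⟨U, i1, i2, i3, ρ, h1, h, h2⟩
  obtain ⟨v, hv, hline⟩ := pline p a ha P hdeg ρ h5
  let F : Submodule ℂ U :=
    { carrier := {u | ∀ k ∈ K, ρ k u = u}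
      zero_mem' := by intro k _; simp
      add_mem' := by intro u w hu hw k hk; rw [map_add, hu k hk, hw k hk]
      smul_mem' := by intro c u hu k hk; rw [map_smul, hu k hk] }
  have hvF : v ∈ F := by
    let Fx : Subgroup G :=
      { carrier := {g | ρ g v = v}
        one_mem' := by simp
        mul_mem' := by
          intro g h hg hh
          change ρ (g * h) v = v
          rw [map_mul, Module.End.mul_apply, hh, hg]
        inv_mem' := by
          intro g hg
          change ρ g⁻¹ v = v
          nth_rewrite 1 [← (hg : ρ g v = v)]
          rw [← Module.End.mul_apply, ← map_mul, inv_mul_cancel, map_one, Module.End.one_apply] }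
    have : K ≤ Fx := by
      rw [Subgroup.commutator_le]
      intro y hy z hz
      change ρ _ v = v
      obtain ⟨c, hc⟩ := hline y (hNP hy)
      obtain ⟨d, hd⟩ := hline z (hNP hz)
      obtain ⟨c', hc'⟩ := hline y⁻¹ (P.1.inv_mem (hNP hy))
      obtain ⟨d', hd'⟩ := hline z⁻¹ (P.1.inv_mem (hNP hz))
      have e1 : (c' * c) • v = v := by
        rw [mul_smul, ← hc, ← map_smul, ← hc', ← Module.End.mul_apply, ← map_mul]; simp
      have e2 : (d' * d) • v = v := by
        rw [mul_smul, ← hd, ← map_smul, ← hd', ← Module.End.mul_apply, ← map_mul]; simp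
      rw [commutatorElement_def]
      simp only [map_mul, Module.End.mul_apply, hc, hd, hc', hd', map_smul, smul_smul]
      calc _ = (d' * d) • (c' * c) • v := by rw [smul_smul]; congr 1; ring
        _ = v := by rw [e1, e2]
    exact fun k hk => this hk
  have hFtop : F = ⊤ := by
    rcases ((irr_iff ρ).mp h1).2 F (by
      intro g w hw k hk
      have := hw (g⁻¹ * k * g) (by simpa using hK.conj_mem k hk g⁻¹)
      rw [← Module.End.mul_apply, ← map_mul]
      have e : k * g = g * (g⁻¹ * k * g) := by group
      rw [e, map_mul, Module.End.mul_apply, this]) with h | h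
    · rw [h] at hvF; exact absurd hvF hv
    · exact h
  apply h3
  ext u
  have h6 : ρ ⁅n, m⁆ u = u := (hFtop ▸ Submodule.mem_top : u ∈ F) _ hxK
  have h7 := h4 ⟨x, Subgroup.mem_zpowers x⟩ u
  have h8 : f u = ν ⟨x, Subgroup.mem_zpowers x⟩ * f u := by
    rw [← h7]
    exact congrArg f h6.symm
  by_contra h9
  apply hν
  ext
  exact mul_right_cancel₀ h9 (h8.symm.trans (one_mul _).symm)

theorem step6 (p a : ℕ) (hp : p.Prime) {G : Type} [Group G] [Finite G]
    (hsolv : Group.IsSolvable G) (P : Sylow p G) (hdeg : Hdeg p a P.1)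
    (hnab : ∃ x ∈ P, ∃ y ∈ P, x * y ≠ y * x) (hng : ¬ Good p a G)
    (N : Subgroup G) [hN : N.Normal] (hNP : N ≤ P.1) (hNab : ∀ n ∈ N, ∀ m ∈ N, n * m = m * n)
    (hC : Subgroup.centralizer (N : Set G) ≤ N) (L : Subgroup (G ⧸ N)) [hL : L.Normal]
    (hLp : (Nat.card L).Coprime p) (Q : Sylow p (G ⧸ N))
    (hQP : Q.1 = P.1.map (QuotientGroup.mk' N))
    (hQ : ∀ x ∈ Q, ∀ y ∈ Q, x * y = y * x) (hn : (Q.1 ⊔ L).Normal)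
    (hQL : ∀ x ∈ Q, x ∈ L → x = 1) : False := by
  have := Fact.mk hp
  obtain ⟨x, hx, hxN⟩ : ∃ x ∈ P, x ∉ N := by
    by_contra! h
    obtain ⟨x, hx, y, hy, hxy⟩ := hnab
    exact hxy (hNab x (h x hx) y (h y hy))
  obtain ⟨n, hnN, hnx⟩ : ∃ n ∈ N, n * x ≠ x * n := by
    by_contra! h
    exact hxN (hC (Subgroup.mem_centralizer_iff.mpr h))
  have hcom : commutator N = ⊥ := by
    rw [commutator_def, eq_bot_iff, Subgroup.commutator_le]
    intro u _ v _
    rw [Subgroup.mem_bot, commutatorElement_eq_one_iff_mul_comm]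
    ext
    exact hNab u u.2 v v.2
  let d : N := ⟨x * n * x⁻¹, hN.conj_mem n hnN x⟩ * ⟨n, hnN⟩⁻¹
  obtain ⟨μ, hμ⟩ := exists_char_ne d (by
    rw [hcom, Subgroup.mem_bot]
    intro h
    have := congrArg Subtype.val h
    change x * n * x⁻¹ * n⁻¹ = 1 at this
    rw [mul_inv_eq_one, mul_inv_eq_iff_eq_mul] at this
    exact hnx this.symm)
  have hxs : x ∉ stab N μ := by
    intro h
    apply hμ
    have := h ⟨n, hnN⟩
    rw [map_mul, map_inv, this, mul_inv_cancel]
  let N' : Subgroup P.1 := N.subgroupOf P.1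
  have hN' : N'.Normal := inferInstance
  let μ' : N' →* ℂˣ := μ.comp
    { toFun := fun m => ⟨m.1.1, m.2⟩, map_one' := rfl, map_mul' := fun _ _ => rfl }
  have hμ' : ∀ m : N', μ' m = μ ⟨m.1.1, m.2⟩ := fun m => rfl
  have hst : stab N' μ' = (stab N μ).subgroupOf P.1 := by
    ext g
    rw [Subgroup.mem_subgroupOf]
    constructor
    · intro h m
      exact h ⟨⟨m.1, hNP m.2⟩, m.2⟩
    · intro h m
      exact h ⟨m.1.1, m.2⟩
  let T := stab N μ ⊓ P.1
  have hTi : ¬ p ^ (a + 1) ∣ T.index := by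
    obtain ⟨V, i1, i2, i3, σ, h1, -, h3⟩ := exists_over_char N' μ' 0
      (by rw [Nat.zero_dvd]; exact Subgroup.index_ne_zero_of_finite)
    have h4 := stab_index_dvd σ h1 N' μ' h3
    have hd : finrank ℂ V ∣ p ^ a := by
      rcases hdeg V σ h1 with h | h <;> rw [h]
      exact one_dvd _
    have h5 : T.relIndex P.1 * P.1.index = T.index := Subgroup.relIndex_mul_index inf_le_right
    rw [Subgroup.inf_relIndex_right, mul_comm] at h5
    rw [← h5]
    apply not_dvd_aux p a _ _ hp P.not_dvd_index
    rw [hst] at h4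
    exact h4.trans hd
  obtain ⟨U, i1, i2, i3, ρ, h1, h2, f, h3, h4⟩ := r4 p a hp P hdeg N' μ'
  have hov : Over ρ N μ := ⟨f, h3, fun m u => h4 ⟨⟨m.1, hNP m.2⟩, m.2⟩ u⟩
  have h5 : ¬ p ∣ finrank ℂ U := fun h => hng ⟨U, i1, i2, i3, ρ, h1, h, h2⟩
  have hsi : ¬ p ∣ (stab N μ).index := fun h => h5 (h.trans (stab_index_dvd ρ h1 N μ hov))
  obtain ⟨S, hTS, hSs⟩ := exists_sylow_le p hp (stab N μ) hsi T
    (P.isPGroup'.to_le inf_le_right) inf_le_left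
  let S' : Sylow p (G ⧸ N) := S.mapSurjective (QuotientGroup.mk'_surjective N)
  have hS' : S'.1 = S.1.map (QuotientGroup.mk' N) := rfl
  obtain ⟨l, hl, hlS⟩ := conj_by p hp (G ⧸ N) Q S' L hn
  let B := T.map (QuotientGroup.mk' N)
  have hBQ : B ≤ Q.1 := by rw [hQP]; exact Subgroup.map_mono inf_le_right
  have hBS : B ≤ S'.1 := by rw [hS']; exact Subgroup.map_mono hTS
  have hBi : B.index = T.index := Subgroup.index_map_eq _ (QuotientGroup.mk'_surjective N) (by
    rw [QuotientGroup.ker_mk']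
    exact le_inf (le_stab N μ) hNP)
  have hlB : ∀ b ∈ B, l * b = b * l := by
    intro b hb
    have h1 := (hlS b).mp (hBS hb)
    have h2 : b⁻¹ * (l⁻¹ * b * l) ∈ Q := Q.1.mul_mem (Q.1.inv_mem (hBQ hb)) h1
    have h3 : b⁻¹ * (l⁻¹ * b * l) ∈ L := by
      have := L.mul_mem (hL.conj_mem l⁻¹ (L.inv_mem hl) b⁻¹) hl
      simpa [mul_assoc] using this
    have h4 := hQL _ h2 h3
    rw [inv_mul_eq_one, mul_assoc, eq_inv_mul_iff_mul_eq] at h4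
    exact h4
  obtain ⟨q, hq, hlq⟩ : ∃ q ∈ Q, l * q ≠ q * l := by
    by_contra! h
    apply hxs
    have hxQ : QuotientGroup.mk' N x ∈ Q := by
      change _ ∈ Q.1
      rw [hQP]; exact ⟨x, hx, rfl⟩
    have h6 : QuotientGroup.mk' N x ∈ S'.1 := by
      refine (hlS _).mpr ?_
      rw [mul_assoc, ← h _ hxQ, inv_mul_cancel_left]
      exact hxQ
    rw [hS'] at h6
    obtain ⟨s, hs, hsx⟩ := h6
    have h7 : s⁻¹ * x ∈ N := QuotientGroup.eq.mp hsx
    have := (stab N μ).mul_mem (hSs hs) (le_stab N μ h7)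
    rwa [mul_inv_cancel_left] at this
  have := ml2 p a hp (G ⧸ N) inferInstance L hLp Q hQ hn B hBQ (by rwa [hBi]) l hl hlB q hq hlq
  exact hng (this.inflate _ (QuotientGroup.mk'_surjective N))

theorem main_thm (p a : ℕ) (hp : p.Prime) (ha : 1 ≤ a) : ∀ (k : ℕ) (G : Type) [Group G] [Finite G],
    Nat.card G = k → Group.IsSolvable G →
    (∀ N : Subgroup G, N.Normal → (Nat.card N).Coprime p → N = ⊥) →
    ∀ P : Sylow p G, Hdeg p a P.1 → (∃ x ∈ P, ∃ y ∈ P, x * y ≠ y * x) → Good p a G := by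
  intro k
  induction k using Nat.strong_induction_on with
  | _ k ih =>
  intro G _ _ hk hsolv hO P hdeg hnab
  by_contra hng
  have := Fact.mk hp
  let N := P.1.normalCore
  have hN : N.Normal := inferInstance
  have hNab := core_comm p a hp ha P hdeg hng
  have hC := hall_higman p hp G hsolv hO N (le_core p hp G P)
  have hNbot : N ≠ ⊥ := by
    intro h
    obtain ⟨x, hx, y, hy, hxy⟩ := hnab
    have h1 : x ∈ N := hC (by
      rw [Subgroup.mem_centralizer_iff, h]
      intro z hz
      rw [show z = 1 from hz]; simp)
    rw [h, Subgroup.mem_bot] at h1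
    rw [h1] at hxy
    simp at hxy
  obtain ⟨L, hL, hLp, hLO⟩ := exists_pprime p (G ⧸ N)
  let Q : Sylow p (G ⧸ N) := P.mapSurjective (QuotientGroup.mk'_surjective N)
  let R : Sylow p ((G ⧸ N) ⧸ L) := Q.mapSurjective (QuotientGroup.mk'_surjective L)
  have hQ1 : Q.1 = P.1.map (QuotientGroup.mk' N) := rfl
  have hR1 : R.1 = Q.1.map (QuotientGroup.mk' L) := rfl
  have hQL : ∀ x ∈ Q, x ∈ L → x = 1 := by
    obtain ⟨k, hk⟩ := IsPGroup.iff_card.mp Q.isPGroup'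
    have h1 : (Nat.card Q.1).Coprime (Nat.card L) := by
      have := Nat.Coprime.pow_left k hLp.symm
      exact hk ▸ this
    have h2 := (Subgroup.disjoint_of_coprime_natCard h1).eq_bot
    intro x hx hx'
    have : x ∈ Q.1 ⊓ L := ⟨hx, hx'⟩
    rw [h2] at this
    exact this
  have hdQ : Hdeg p a Q.1 := hdeg.quot ((QuotientGroup.mk' N).subgroupMap P.1)
    (MonoidHom.subgroupMap_surjective _ _)
  have hdR : Hdeg p a R.1 := hdQ.quot ((QuotientGroup.mk' L).subgroupMap Q.1)
    (MonoidHom.subgroupMap_surjective _ _)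
  by_cases hRab : ∃ x ∈ R, ∃ y ∈ R, x * y ≠ y * x
  · have hcard : Nat.card ((G ⧸ N) ⧸ L) < k := by
      have h1 : Nat.card ((G ⧸ N) ⧸ L) ≤ Nat.card (G ⧸ N) :=
        Nat.card_le_card_of_surjective _ (QuotientGroup.mk'_surjective L)
      have h2 : Nat.card N * Nat.card (G ⧸ N) = Nat.card G := Subgroup.card_mul_index N
      have h3 : 1 < Nat.card N := by
        rw [Subgroup.one_lt_card_iff_ne_bot]; exact hNbot
      have h4 : 0 < Nat.card (G ⧸ N) := Nat.card_pos
      nlinarith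
    have := ih _ hcard ((G ⧸ N) ⧸ L) rfl inferInstance hLO R hdR hRab
    exact hng ((this.inflate _ (QuotientGroup.mk'_surjective L)).inflate _
      (QuotientGroup.mk'_surjective N))
  · push Not at hRab
    have hQab : ∀ x ∈ Q, ∀ y ∈ Q, x * y = y * x := by
      intro x hx y hy
      rw [← commutatorElement_eq_one_iff_mul_comm]
      apply hQL
      · exact Q.1.mul_mem (Q.1.mul_mem (Q.1.mul_mem hx hy) (Q.1.inv_mem hx)) (Q.1.inv_mem hy)
      · rw [← QuotientGroup.eq_one_iff]
        have h1 : QuotientGroup.mk' L x ∈ R.1 := ⟨x, hx, rfl⟩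
        have h2 : QuotientGroup.mk' L y ∈ R.1 := ⟨y, hy, rfl⟩
        have h3 := commutatorElement_eq_one_iff_mul_comm.mpr (hRab _ h1 _ h2)
        rwa [← map_commutatorElement] at h3
    exact step6 p a hp hsolv P hdeg hnab hng N P.1.normalCore_le hNab hC L hLp Q hQ1 hQab
      (sup_normal p hp _ inferInstance Q hQab L hLO) hQL
end SolvCase


namespace SolvCase
open Representation Module
set_option linter.unusedSectionVars false

lemma simple_of {G V : Type} [Group G] [Finite G] [AddCommGroup V] [Module ℂ V]
    [FiniteDimensional ℂ V] (ρ : Representation ℂ G V) (h : ρ.IsIrreducible) :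
    Simple (FDRep.of ρ) := by
  have : NeZero (Nat.card G : ℂ) := ⟨by exact_mod_cast Nat.card_pos.ne'⟩
  rw [FDRep.simple_iff_end_is_rank_one,
    ← (FDRep.forget₂HomLinearEquiv (FDRep.of ρ) (FDRep.of ρ)).finrank_eq,
    (Rep.homLinearEquiv _ _).finrank_eq]
  exact IsIrreducible.finrank_intertwiningMap_self ρ

lemma comm_dim_aux {G V : Type} [Group G] [AddCommGroup V] [Module ℂ V] [FiniteDimensional ℂ V]
    (hG : ∀ x y : G, x * y = y * x) (ρ : Representation ℂ G V)
    (h1 : finrank ℂ (ρ.IntertwiningMap ρ) = 1) : finrank ℂ V ≤ 1 := by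
  have hsc : ∀ f : ρ.IntertwiningMap ρ, ∃ c : ℂ, f = c • (IntertwiningMap.id ρ) := by
    obtain ⟨w, hw, h2⟩ := finrank_eq_one_iff'.mp h1
    intro f
    obtain ⟨c, hc⟩ := h2 f
    obtain ⟨d, hd⟩ := h2 (IntertwiningMap.id ρ)
    by_cases hd0 : d = 0
    · exfalso
      rw [hd0, zero_smul] at hd
      apply hw
      ext v
      have h3 : (IntertwiningMap.id ρ) (w v) = 0 := by rw [← hd]; rfl
      exact h3
    · refine ⟨c * d⁻¹, ?_⟩
      rw [← hd, smul_smul, inv_mul_cancel_right₀ hd0, hc]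
  have hscal : ∀ g : G, ∃ c : ℂ, ∀ v : V, ρ g v = c • v := by
    intro g
    obtain ⟨c, hc⟩ := hsc ⟨ρ g, fun h => by
      ext v
      change ρ g (ρ h v) = ρ h (ρ g v)
      rw [← Module.End.mul_apply, ← Module.End.mul_apply, ← map_mul, ← map_mul, hG]⟩
    refine ⟨c, fun v => ?_⟩
    exact congrArg (fun F : ρ.IntertwiningMap ρ => F v) hc
  have hall : ∀ F : V →ₗ[ℂ] V, ∃ c : ℂ, ∀ v : V, F v = c • v := by
    intro F
    obtain ⟨c, hc⟩ := hsc ⟨F, fun h => by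
      ext v
      obtain ⟨d, hd⟩ := hscal h
      change F (ρ h v) = ρ h (F v)
      rw [hd, hd, map_smul]⟩
    exact ⟨c, fun v => congrArg (fun F : ρ.IntertwiningMap ρ => F v) hc⟩
  have h2 : finrank ℂ (V →ₗ[ℂ] V) ≤ 1 := by
    refine finrank_le_one (LinearMap.id : V →ₗ[ℂ] V) fun F => ?_
    obtain ⟨c, hc⟩ := hall F
    exact ⟨c, by ext v; exact (hc v).symm⟩
  rw [finrank_linearMap] at h2
  nlinarith

lemma comm_dim {G : Type} [Group G] [Finite G] (hG : ∀ x y : G, x * y = y * x)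
    (V : FDRep ℂ G) (hV : Simple V) : finrank ℂ V ≤ 1 := by
  have : NeZero (Nat.card G : ℂ) := ⟨by exact_mod_cast Nat.card_pos.ne'⟩
  rw [FDRep.simple_iff_end_is_rank_one,
    ← (FDRep.forget₂HomLinearEquiv V V).finrank_eq,
    (Rep.homLinearEquiv _ _).finrank_eq] at hV
  exact comm_dim_aux hG (V.ρ : Representation ℂ G V) hV
end SolvCase

/-- The solvable case (Theorem 3.4) of the paper, stated without blocks: if `G` is a
finite solvable group with `O_{p'}(G) = 1` (every normal subgroup of order coprime to
`p` is trivial) whose Sylow `p`-subgroup has character degree set `{1, p^a}` with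
`a ≥ 1`, then `G` has an irreducible complex character of degree divisible by `p`
with `p`-part at most `p^a`. -/
theorem solvable_case (p : ℕ) (hp : p.Prime) (G : Type) [Group G] [Finite G]
    (hsolv : IsSolvable G)
    (hOp' : ∀ N : Subgroup G, N.Normal → (Nat.card N).Coprime p → N = ⊥)
    (P : Sylow p G) (a : ℕ) (ha : 1 ≤ a)
    (hdeg : ∀ V : FDRep ℂ ↥(P : Subgroup G), Simple V →
      Module.finrank ℂ V = 1 ∨ Module.finrank ℂ V = p ^ a)
    (hex : ∃ V : FDRep ℂ ↥(P : Subgroup G), Simple V ∧ Module.finrank ℂ V = p ^ a) :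
    ∃ W : FDRep ℂ G, Simple W ∧ p ∣ Module.finrank ℂ W ∧
      p ^ ((Module.finrank ℂ W).factorization p) ≤ p ^ a := by
  have hd : SolvCase.Hdeg p a P.1 := by
    intro U _ _ _ ρ hρ
    exact hdeg (FDRep.of ρ) (SolvCase.simple_of ρ hρ)
  have hnab : ∃ x ∈ P, ∃ y ∈ P, x * y ≠ y * x := by
    by_contra! h
    obtain ⟨V, hV, hV2⟩ := hex
    have := SolvCase.comm_dim (fun x y : P.1 => Subtype.ext (h x.1 x.2 y.1 y.2)) V hV
    rw [hV2] at this
    exact absurd this (not_le.mpr (Nat.one_lt_pow (by omega) hp.one_lt))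
  obtain ⟨U, _, _, _, ρ, h1, h2, h3⟩ :=
    SolvCase.main_thm p a hp ha _ G rfl hsolv hOp' P hd hnab
  refine ⟨FDRep.of ρ, SolvCase.simple_of ρ h1, h2, ?_⟩
  change p ^ ((Module.finrank ℂ U).factorization p) ≤ p ^ a
  apply Nat.pow_le_pow_right hp.pos
  by_contra hlt
  exact h3 ((pow_dvd_pow p (by omega)).trans (Nat.ordProj_dvd _ p))
end

section
/- Let p be a prime and let the finite group G act transitively but not primitively on a finite set Ω with |Ω| = n ≥ 2. Let Δ ⊊ Ω be a block for the action of maximal cardinality among the proper blocks. Then: (a) the G-translates Δ_1, …, Δ_r of Δ form a partition of Ω into sets of equal size |Δ|; (b) setting L = ⋂_{i=1}^r Stab_G(Δ_i), the induced action of G/L on {Δ_1, …, Δ_r} is primitive; (c) if every G-orbit on the power set of Ω has size coprime to p, then every orbit of G/L on the power set of {Δ_1, …, Δ_r} has size coprime to p. -/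
open Pointwise MulAction

/-- An action of `G` on `X` is primitive if it is transitive and its only blocks are
the trivial ones (the subsingletons and the whole set). -/
def IsPrimitiveAction (G X : Type*) [Group G] [MulAction G X] : Prop :=
  MulAction.IsPretransitive G X ∧
    ∀ B : Set X, MulAction.IsBlock G B → MulAction.IsTrivialBlock B

/-- Lemma 2.4 of the paper. Let `G` act transitively but not primitively on a finite
set `Ω` with at least two points, and let `Δ` be a proper block of maximal cardinality.
Then (a) the translates of `Δ` have equal size, are pairwise equal or disjoint, and
cover `Ω`; (b) the induced action of `G` on the set of translates (on which the
subgroup `L`, the intersection of the stabilizers of the translates, acts trivially,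
so this is the action of `G/L`) is primitive; and (c) if every `G`-orbit on the power
set of `Ω` has size coprime to `p`, then every orbit on the power set of the set of
translates has size coprime to `p`. -/
theorem block_lemma (p : ℕ) (hp : p.Prime) (G : Type*) [Group G]
    (Ω : Type*) [Finite Ω] (hcard : 2 ≤ Nat.card Ω) [MulAction G Ω]
    (htrans : MulAction.IsPretransitive G Ω) (hnotprim : ¬ IsPrimitiveAction G Ω)
    (Δ : Set Ω) (hblock : MulAction.IsBlock G Δ) (hproper : Δ ≠ Set.univ)
    (hmax : ∀ Δ' : Set Ω, MulAction.IsBlock G Δ' → Δ' ≠ Set.univ → Δ'.ncard ≤ Δ.ncard) :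
    -- (a) the translates of `Δ` form a partition of `Ω` into sets of size `|Δ|`
    ((∀ g : G, (g • Δ).ncard = Δ.ncard) ∧
      (∀ g h : G, g • Δ = h • Δ ∨ Disjoint (g • Δ) (h • Δ)) ∧
      (⋃ g : G, g • Δ) = Set.univ) ∧
    -- (b) the induced action on the set `{Δ_1, …, Δ_r}` of translates is primitive
    IsPrimitiveAction G ↥(MulAction.orbit G Δ) ∧
    -- (c) if the action on `Ω` is `p`-concealed, so is the induced action on the
    -- set of translates
    ((∀ s : Set Ω, (Nat.card (MulAction.orbit G s)).Coprime p) →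
      ∀ T : Set ↥(MulAction.orbit G Δ), (Nat.card (MulAction.orbit G T)).Coprime p) := by
  classical
  have hne : Δ.Nonempty := by
    have : Nontrivial Ω := Finite.one_lt_card_iff_nontrivial.mp hcard
    obtain ⟨a⟩ : Nonempty Ω := inferInstance
    have h1 := hmax {a} MulAction.IsBlock.singleton (Set.singleton_ne_univ a)
    rw [Set.ncard_singleton] at h1
    exact Set.nonempty_of_ncard_ne_zero (by omega)
  have hcov : ∀ x : Ω, ∃ g : G, x ∈ g • Δ := by
    intro x
    obtain ⟨d, hd⟩ := hne
    obtain ⟨g, rfl⟩ := MulAction.exists_smul_eq G d x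
    exact ⟨g, Set.smul_mem_smul_set hd⟩
  have hdis : ∀ g h : G, g • Δ = h • Δ ∨ Disjoint (g • Δ) (h • Δ) :=
    fun g h => MulAction.isBlock_iff_smul_eq_smul_or_disjoint.mp hblock g h
  have hcardg : ∀ g : G, (g • Δ).ncard = Δ.ncard := fun g => Set.ncard_smul_set g Δ
  refine ⟨⟨hcardg, hdis, ?_⟩, ?_⟩
  · exact Set.eq_univ_of_forall fun x => Set.mem_iUnion.mpr (hcov x)
  have hex : ∀ x : Ω, ∃ t : ↥(MulAction.orbit G Δ), x ∈ t.1 := fun x => by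
    obtain ⟨g, hg⟩ := hcov x
    exact ⟨⟨g • Δ, g, rfl⟩, hg⟩
  have huniq : ∀ (x : Ω) (s t : ↥(MulAction.orbit G Δ)), x ∈ s.1 → x ∈ t.1 → s = t := by
    rintro x ⟨_, g, rfl⟩ ⟨_, h, rfl⟩ hs ht
    rcases hdis g h with e | e
    · exact Subtype.ext e
    · exact absurd ht (Set.disjoint_left.mp e hs)
  have hcardt : ∀ t : ↥(MulAction.orbit G Δ), t.1.ncard = Δ.ncard := by
    rintro ⟨_, g, rfl⟩
    exact hcardg g
  have hnet : ∀ t : ↥(MulAction.orbit G Δ), t.1.Nonempty := by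
    rintro ⟨_, g, rfl⟩
    exact hne.smul_set
  choose f hf using hex
  have hfeq : ∀ (x : Ω) (t : ↥(MulAction.orbit G Δ)), x ∈ t.1 → f x = t :=
    fun x t h => huniq x _ _ (hf x) h
  let F : Ω →[G] ↥(MulAction.orbit G Δ) :=
    { toFun := f
      map_smul' := fun g x => hfeq _ _ (Set.smul_mem_smul_set (hf x)) }
  have hF : ∀ x, F x = f x := fun _ => rfl
  have hsurj : Function.Surjective F := fun t => by
    obtain ⟨x, hx⟩ := hnet t
    exact ⟨x, hfeq x t hx⟩
  refine ⟨⟨inferInstance, fun B hB => ?_⟩, fun H T => ?_⟩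
  · by_contra hnt
    rw [MulAction.IsTrivialBlock, not_or, Set.not_subsingleton_iff] at hnt
    obtain ⟨⟨s, hs, t, ht, hst⟩, hu⟩ := hnt
    have hb : MulAction.IsBlock G (F ⁻¹' B) := hB.preimage F
    have hle := hmax _ hb (fun h => hu (by
      apply Set.preimage_injective.mpr hsurj
      rw [h, Set.preimage_univ]))
    have hsub : s.1 ⊆ F ⁻¹' B := fun x hx => by
      rw [Set.mem_preimage, hF, hfeq x s hx]
      exact hs
    have heq : s.1 = F ⁻¹' B :=
      Set.eq_of_subset_of_ncard_le hsub (by rw [hcardt s]; exact hle) (Set.toFinite _)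
    obtain ⟨y, hy⟩ := hnet t
    have hy2 : y ∈ s.1 := by
      rw [heq, Set.mem_preimage, hF, hfeq y t hy]
      exact ht
    exact hst (huniq y s t hy2 hy)
  · have key : ∀ (g : G), F ⁻¹' (g • T) = g • (F ⁻¹' T) := fun g => by
      ext x
      rw [Set.mem_preimage, Set.mem_smul_set_iff_inv_smul_mem,
        Set.mem_smul_set_iff_inv_smul_mem, Set.mem_preimage, map_smul]
    have himg : (fun A => F ⁻¹' A) '' (MulAction.orbit G T) = MulAction.orbit G (F ⁻¹' T) := by
      ext A
      constructor
      · rintro ⟨_, ⟨g, rfl⟩, rfl⟩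
        exact ⟨g, (key g).symm⟩
      · rintro ⟨g, rfl⟩
        exact ⟨g • T, ⟨g, rfl⟩, key g⟩
    have h2 := H (F ⁻¹' T)
    rw [← himg, Nat.card_image_of_injective (Set.preimage_injective.mpr hsurj)] at h2
    exact h2
end

section
/- Let p be a prime, Ω a finite set, and P a p-subgroup of the symmetric group on Ω. If p is odd, then there exists a subset Λ ⊆ Ω whose setwise stabilizer in P is trivial. If p = 2, then there exist pairwise disjoint subsets Λ_1, Λ_2, Λ_3 of Ω with Λ_1 ∪ Λ_2 ∪ Λ_3 = Ω such that the only element g ∈ P satisfying gΛ_i = Λ_i for i = 1, 2, 3 is the identity. -/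
open Pointwise

theorem aux_count {C X : Type*} [Fintype C] [DecidableEq C] [Finite X] (b : Set X) (f : X → C)
    (hb : ¬ Fintype.card C ∣ b.ncard) :
    (∃ c, Fintype.card C * {y ∈ b | f y = c}.ncard < b.ncard) ∧
    (∃ c, b.ncard < Fintype.card C * {y ∈ b | f y = c}.ncard) := by
  classical
  have := Fintype.ofFinite X
  have hsum : ∑ c : C, {y ∈ b | f y = c}.ncard = b.ncard := by
    rw [Set.ncard_eq_toFinset_card' b,
      Finset.card_eq_sum_card_fiberwise (f := f) (t := Finset.univ) (by simp)]
    refine Finset.sum_congr rfl fun c _ => ?_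
    rw [Set.ncard_eq_toFinset_card']
    congr 1
    ext y
    simp
  have hne : Nonempty C := by
    by_contra h
    rw [not_nonempty_iff] at h
    apply hb
    rw [← hsum]
    simp
  obtain ⟨c0⟩ := hne
  have hnz : ∀ c, (Fintype.card C : ℤ) * {y ∈ b | f y = c}.ncard - b.ncard ≠ 0 := by
    intro c h
    exact hb ⟨_, by exact_mod_cast (sub_eq_zero.mp h).symm⟩
  have h0 : ∑ c : C, ((Fintype.card C : ℤ) * {y ∈ b | f y = c}.ncard - b.ncard) = 0 := by
    rw [Finset.sum_sub_distrib, ← Finset.mul_sum, ← Nat.cast_sum, hsum]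
    simp
  constructor
  · obtain ⟨c, -, hc⟩ := Finset.exists_pos_of_sum_zero_of_exists_nonzero
      (s := (Finset.univ : Finset C))
      (fun c => -((Fintype.card C : ℤ) * {y ∈ b | f y = c}.ncard - b.ncard))
      (by rw [Finset.sum_neg_distrib, h0, neg_zero]) ⟨c0, Finset.mem_univ _, neg_ne_zero.mpr (hnz c0)⟩
    refine ⟨c, ?_⟩
    zify
    linarith
  · obtain ⟨c, -, hc⟩ := Finset.exists_pos_of_sum_zero_of_exists_nonzero
      (s := (Finset.univ : Finset C)) _ h0 ⟨c0, Finset.mem_univ _, hnz c0⟩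
    refine ⟨c, ?_⟩
    zify
    linarith

theorem aux_orbit_iff {G X : Type*} [Group G] [MulAction G X] {a : G} {x y : X} :
    a • y ∈ MulAction.orbit G x ↔ y ∈ MulAction.orbit G x := by
  rw [← MulAction.orbit_eq_iff, ← MulAction.orbit_eq_iff, MulAction.orbit_smul]

theorem aux_key {p : ℕ} (hp : p.Prime) {C : Type*} [Fintype C] [DecidableEq C] [Nontrivial C]
    (hC : (Fintype.card C).Coprime p) {X : Type*} [Finite X] :
    ∀ (n : ℕ) (G : Type*) [Group G] [Finite G] [MulAction G X] (_ : IsPGroup p G) (S : Set X)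
      (_ : ∀ g : G, ∀ x ∈ S, g • x ∈ S) (_ : S.ncard = n),
      ∃ f : X → C, ∀ g : G, (∀ x ∈ S, f (g • x) = f x) → ∀ x ∈ S, g • x = x := by
  classical
  have := Fact.mk hp
  obtain ⟨c0⟩ : Nonempty C := inferInstance
  intro n
  induction n using Nat.strong_induction_on with
  | _ n ih =>
  intro G _ _ _ hG S hS hn
  subst hn
  rcases S.eq_empty_or_nonempty with rfl | ⟨x, hx⟩
  · exact ⟨fun _ => c0, by simp⟩
  have hOS : MulAction.orbit G x ⊆ S := by
    rintro _ ⟨g, rfl⟩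
    exact hS g x hx
  have hOinv : ∀ g : G, ∀ y, g • y ∈ MulAction.orbit G x ↔ y ∈ MulAction.orbit G x := by
    intro g y
    exact aux_orbit_iff
  by_cases hO : MulAction.orbit G x = S
  swap
  · obtain ⟨f1, h1⟩ := ih _ (Set.ncard_lt_ncard (hOS.ssubset_of_ne hO)) G hG (MulAction.orbit G x)
      (fun g y hy => (hOinv g y).mpr hy) rfl
    have hlt : (S \ MulAction.orbit G x).ncard < S.ncard := by
      exact Set.ncard_lt_ncard
        ⟨Set.sdiff_subset, fun h => (h hx).2 (MulAction.mem_orbit_self x)⟩ (Set.toFinite _)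
    obtain ⟨f2, h2⟩ := ih _ hlt G hG (S \ MulAction.orbit G x)
      (fun g y hy => ⟨hS g y hy.1, fun h => hy.2 ((hOinv g y).mp h)⟩) rfl
    refine ⟨fun y => if y ∈ MulAction.orbit G x then f1 y else f2 y, fun g hg y hy => ?_⟩
    by_cases hyO : y ∈ MulAction.orbit G x
    · refine h1 g (fun z hz => ?_) y hyO
      have := hg z (hOS hz)
      simpa only [hOinv, hz, if_true] using this
    · refine h2 g (fun z hz => ?_) y ⟨hy, hyO⟩
      have := hg z hz.1
      simpa only [hOinv, hz.2, if_false] using this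
  by_cases hK : MulAction.stabilizer G x = ⊤
  · refine ⟨fun _ => c0, fun g _ y hy => ?_⟩
    rw [← hO] at hy
    obtain ⟨k, rfl⟩ := hy
    have : ∀ k : G, k • x = x := fun k => by
      have : k ∈ MulAction.stabilizer G x := hK ▸ Subgroup.mem_top k
      exact this
    simp [this]
  obtain ⟨N, hN, hKN⟩ := (eq_top_or_exists_le_coatom (MulAction.stabilizer G x)).resolve_left hK
  have := hG.isNilpotent
  have : N.Normal := Subgroup.NormalizerCondition.normal_of_coatom N
    Group.normalizerCondition_of_isNilpotent hN
  have hmemN : ∀ g : G, g • x ∈ MulAction.orbit N x → g ∈ N := by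
    rintro g ⟨m, hm⟩
    have h1 : (m : G)⁻¹ * g ∈ N := hKN (by
      rw [MulAction.mem_stabilizer_iff, mul_smul, inv_smul_eq_iff]
      exact hm.symm)
    simpa using N.mul_mem m.2 h1
  have hsub : ∀ y ∈ S, MulAction.orbit N y ⊆ S := by
    rintro y hy _ ⟨m, rfl⟩
    exact hS m y hy
  have hlt : ∀ y ∈ S, (MulAction.orbit N y).ncard < S.ncard := by
    intro y hy
    refine Set.ncard_lt_ncard ((hsub y hy).ssubset_of_ne fun h => hN.1 ?_)
    have hxy : MulAction.orbit N x = S := by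
      rw [← h]
      exact MulAction.orbit_eq_iff.mpr (h ▸ hx)
    rw [eq_top_iff]
    intro g _
    exact hmemN g (hxy ▸ hS g x hx)
  have hNp : IsPGroup p N := hG.to_subgroup N
  have hndvd : ∀ y : X, ¬ Fintype.card C ∣ (MulAction.orbit N y).ncard := by
    intro y hd
    obtain ⟨m, hm⟩ := hNp.card_orbit y
    rw [Nat.card_coe_set_eq] at hm
    rw [hm] at hd
    have h1 := Nat.eq_one_of_dvd_coprimes (hC.pow_right m) dvd_rfl hd
    have h2 := Fintype.one_lt_card (α := C)
    omega
  have H : ∀ b : Set X, ∃ F : X → C, (∃ y ∈ S, b = MulAction.orbit N y) →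
      (∀ g : N, (∀ z ∈ b, F (g • z) = F z) → ∀ z ∈ b, g • z = z) ∧
      (b = MulAction.orbit N x → Fintype.card C * {y ∈ b | F y = c0}.ncard < b.ncard) ∧
      (b ≠ MulAction.orbit N x → b.ncard < Fintype.card C * {y ∈ b | F y = c0}.ncard) := by
    intro b
    by_cases hb : ∃ y ∈ S, b = MulAction.orbit N y
    swap
    · exact ⟨fun _ => c0, fun h => absurd h hb⟩
    obtain ⟨y, hy, rfl⟩ := hb
    obtain ⟨f, hf⟩ := ih _ (hlt y hy) N hNp (MulAction.orbit N y)
      (fun g z hz => aux_orbit_iff.mpr hz) rfl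
    obtain ⟨⟨c1, h1⟩, ⟨c2, h2⟩⟩ := aux_count (MulAction.orbit N y) f (hndvd y)
    have hsw : ∀ c, ∀ z, (Equiv.swap c c0 (f z) = c0) ↔ f z = c := by
      intro c z
      rw [Equiv.swap_apply_eq_iff, Equiv.swap_apply_right]
    by_cases hyx : MulAction.orbit N y = MulAction.orbit N x
    · refine ⟨fun z => Equiv.swap c1 c0 (f z), fun _ => ⟨fun g hg => hf g fun z hz =>
        (Equiv.swap c1 c0).injective (hg z hz), fun _ => ?_, fun h => absurd hyx h⟩⟩
      simpa only [hsw] using h1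
    · refine ⟨fun z => Equiv.swap c2 c0 (f z), fun _ => ⟨fun g hg => hf g fun z hz =>
        (Equiv.swap c2 c0).injective (hg z hz), fun h => absurd h hyx, fun _ => ?_⟩⟩
      simpa only [hsw] using h2
  choose F hF using H
  refine ⟨fun y => F (MulAction.orbit N y) y, fun g hg => ?_⟩
  have hgN : g ∈ N := by
    by_contra hgN
    have hne : MulAction.orbit N (g • x) ≠ MulAction.orbit N x := fun h =>
      hgN (hmemN g (MulAction.orbit_eq_iff.mp h))
    have e1 := (hF _ ⟨x, hx, rfl⟩).2.1 rfl
    have e2 := (hF _ ⟨g • x, hS g x hx, rfl⟩).2.2 hne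
    have hor : g • MulAction.orbit N x = MulAction.orbit N (g • x) :=
      MulAction.smul_orbit_eq_orbit_smul N x g
    have e3 : (MulAction.orbit N (g • x)).ncard = (MulAction.orbit N x).ncard := by
      rw [← hor]
      exact Set.ncard_image_of_injective _ (MulAction.injective g)
    have e4 : {y ∈ MulAction.orbit N (g • x) | F (MulAction.orbit N (g • x)) y = c0}.ncard =
        {y ∈ MulAction.orbit N x | F (MulAction.orbit N x) y = c0}.ncard := by
      rw [← Set.ncard_image_of_injective {y ∈ MulAction.orbit N x | F (MulAction.orbit N x) y = c0}
        (MulAction.injective g)]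
      congr 1
      have hval : ∀ z ∈ MulAction.orbit N x,
          F (MulAction.orbit N (g • x)) (g • z) = F (MulAction.orbit N x) z := by
        intro z hz
        have h1 := hg z (hsub x hx hz)
        have h2 : MulAction.orbit N z = MulAction.orbit N x := MulAction.orbit_eq_iff.mpr hz
        have h3 : MulAction.orbit N (g • z) = MulAction.orbit N (g • x) := by
          apply MulAction.orbit_eq_iff.mpr
          rw [← hor]
          exact Set.smul_mem_smul_set hz
        simpa only [h2, h3] using h1
      ext w
      constructor
      · rintro ⟨hw, hw2⟩
        rw [← hor] at hw
        obtain ⟨z, hz, rfl⟩ := hw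
        exact ⟨z, ⟨hz, (hval z hz).symm.trans hw2⟩, rfl⟩
      · rintro ⟨z, ⟨hz, hz2⟩, rfl⟩
        refine ⟨?_, (hval z hz).trans hz2⟩
        rw [← hor]
        exact Set.smul_mem_smul_set hz
    rw [e4, e3] at e2
    omega
  intro y hy
  refine (hF _ ⟨y, hy, rfl⟩).1 ⟨g, hgN⟩ (fun z hz => ?_) y (MulAction.mem_orbit_self y)
  have h1 := hg z (hsub y hy hz)
  have h2 : MulAction.orbit N z = MulAction.orbit N y := MulAction.orbit_eq_iff.mpr hz
  have h3 : MulAction.orbit N (g • z) = MulAction.orbit N y := by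
    apply MulAction.orbit_eq_iff.mpr
    exact (aux_orbit_iff (a := (⟨g, hgN⟩ : N))).mpr hz
  simp only [h2, h3] at h1
  exact h1

theorem aux_perm {p : ℕ} (hp : p.Prime) {C : Type} [Fintype C] [DecidableEq C] [Nontrivial C]
    (hC : (Fintype.card C).Coprime p) {Ω : Type*} [Finite Ω]
    (P : Subgroup (Equiv.Perm Ω)) (hP : IsPGroup p P) :
    ∃ f : Ω → C, ∀ g ∈ P, (∀ x, f (g x) = f x) → g = 1 := by
  obtain ⟨f, hf⟩ := aux_key hp hC (X := Ω) _ P hP Set.univ (by simp) rfl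
  refine ⟨f, fun g hg h => ?_⟩
  ext x
  exact hf ⟨g, hg⟩ (fun x _ => h x) x (Set.mem_univ x)

theorem aux_smul {Ω : Type*} (g : Equiv.Perm Ω) (Λ : Set Ω) (h : g • Λ = Λ) (x : Ω) :
    g x ∈ Λ ↔ x ∈ Λ := by
  conv_lhs => rw [← h]
  exact Set.smul_mem_smul_set_iff


/-- Lemma 2.5 of the paper. Let `P` be a `p`-subgroup of the symmetric group on a
finite set `Ω`. If `p` is odd then `P` has a regular orbit on the power set of `Ω`,
i.e. there is a subset whose setwise stabilizer in `P` is trivial. If `p = 2` then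
`P` has a regular orbit on ordered partitions of `Ω` into three parts: there are
pairwise disjoint subsets `Λ₁, Λ₂, Λ₃` covering `Ω` whose simultaneous setwise
stabilizer in `P` is trivial. -/
theorem regular_orbit_p_group (p : ℕ) (hp : p.Prime) (Ω : Type*) [Finite Ω]
    (P : Subgroup (Equiv.Perm Ω)) (hP : IsPGroup p P) :
    (Odd p → ∃ Λ : Set Ω, ∀ g ∈ P, g • Λ = Λ → g = 1) ∧
    (p = 2 → ∃ Λ₁ Λ₂ Λ₃ : Set Ω,
      Disjoint Λ₁ Λ₂ ∧ Disjoint Λ₁ Λ₃ ∧ Disjoint Λ₂ Λ₃ ∧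
      Λ₁ ∪ Λ₂ ∪ Λ₃ = Set.univ ∧
      ∀ g ∈ P, g • Λ₁ = Λ₁ → g • Λ₂ = Λ₂ → g • Λ₃ = Λ₃ → g = 1) := by
  constructor
  · intro ho
    obtain ⟨f, hf⟩ := aux_perm hp (C := Fin 2) (by
      simpa using ho) P hP
    refine ⟨{x | f x = 0}, fun g hg h => hf g hg fun x => ?_⟩
    have := aux_smul g _ h x
    simp only [Set.mem_ofPred_eq] at this
    omega
  · rintro rfl
    obtain ⟨f, hf⟩ := aux_perm hp (C := Fin 3) (by decide) P hP
    refine ⟨{x | f x = 0}, {x | f x = 1}, {x | f x = 2}, ?_, ?_, ?_, ?_,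
      fun g hg h0 h1 h2 => hf g hg fun x => ?_⟩
    · rw [Set.disjoint_left]
      intro x h h'
      simp only [Set.mem_ofPred_eq] at h h'
      omega
    · rw [Set.disjoint_left]
      intro x h h'
      simp only [Set.mem_ofPred_eq] at h h'
      omega
    · rw [Set.disjoint_left]
      intro x h h'
      simp only [Set.mem_ofPred_eq] at h h'
      omega
    · ext x
      simp only [Set.mem_union, Set.mem_ofPred_eq, Set.mem_univ, iff_true]
      omega
    · have a0 := aux_smul g _ h0 x
      have a1 := aux_smul g _ h1 x
      have a2 := aux_smul g _ h2 x
      simp only [Set.mem_ofPred_eq] at a0 a1 a2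
      omega
end

section
/- Let p be a prime and let G be a finite solvable group in which every normal p-subgroup is trivial (i.e. O_p(G) = 1). Let A be an abelian p-subgroup of G. Let F be a finite field of characteristic p and let V be a finite-dimensional F-vector space on which G acts faithfully by F-linear automorphisms. Then there exists v ∈ V whose stabilizer in A is trivial (equivalently, v lies in a regular A-orbit). -/
open scoped commutatorElement
structure EGood (p : ℕ) {G : Type*} [Group G] (K A : Subgroup G) : Prop where
  norm : ∀ a ∈ A, ∀ k ∈ K, a * k * a⁻¹ ∈ K
  comm : ∀ a ∈ A, ∀ b ∈ A, a * b = b * a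
  pgrp : ∀ a ∈ A, ∃ n : ℕ, a ^ p ^ n = 1
  cop : (Nat.card K).Coprime p
  cls : ∀ x ∈ K, ∀ y ∈ K, ∀ z ∈ K, ⁅x, y⁆ * z = z * ⁅x, y⁆

lemma e_cyc {X : Type*} [AddCommGroup X] [Nontrivial X] {A : Type*} [CommGroup A]
    (φ : A →* AddMonoid.End X)
    (hs : ∀ H : AddSubgroup X, (∀ a, ∀ x ∈ H, φ a x ∈ H) → H = ⊥ ∨ H = ⊤)
    (p : ℕ) (hp : p.Prime) (a c : A) (ha : a ^ p = 1) (hc : c ^ p = 1) (hc1 : φ c ≠ 1) :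
    ∃ i : ℕ, φ a = φ (c ^ i) := by
  let Φ : MonoidAlgebra ℤ A →+* AddMonoid.End X := (MonoidAlgebra.lift ℤ (AddMonoid.End X) A φ).toRingHom
  have hΦ : ∀ a, Φ (MonoidAlgebra.of ℤ A a) = φ a := fun a => by
    simp [Φ]
  have hprime : (RingHom.ker Φ).IsPrime := by
    refine ⟨?_, ?_⟩
    · intro h
      have h1 : (1 : MonoidAlgebra ℤ A) ∈ RingHom.ker Φ := h ▸ Submodule.mem_top
      rw [RingHom.mem_ker, map_one] at h1
      obtain ⟨x, hx⟩ := exists_ne (0 : X)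
      exact hx (by simpa using DFunLike.congr_fun h1 x)
    · intro f g hfg
      rw [RingHom.mem_ker, map_mul] at hfg
      have hk := hs (AddMonoidHom.ker (Φ f)) (by
        intro a x hx
        replace hx : Φ f x = 0 := hx
        change Φ f (φ a x) = 0
        have : Φ f * Φ (MonoidAlgebra.of ℤ A a) = Φ (MonoidAlgebra.of ℤ A a) * Φ f := by
          rw [← map_mul, ← map_mul, mul_comm]
        have h2 := DFunLike.congr_fun this x
        rw [hΦ] at h2
        change Φ f (φ a x) = φ a (Φ f x) at h2
        rw [h2, hx, map_zero])
      rcases hk with hk | hk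
      · right
        rw [RingHom.mem_ker]
        ext x
        have h2 : Φ f (Φ g x) = 0 := DFunLike.congr_fun hfg x
        have : Φ g x ∈ (AddMonoidHom.ker (Φ f)) := h2
        rw [hk] at this
        simpa using this
      · left
        rw [RingHom.mem_ker]
        ext x
        have : x ∈ (AddMonoidHom.ker (Φ f)) := hk ▸ AddSubgroup.mem_top x
        exact this
  let q := (Ideal.Quotient.mk (RingHom.ker Φ)).toMonoidHom.comp (MonoidAlgebra.of ℤ A)
  have hq : ∀ x y, q x = q y ↔ φ x = φ y := by
    intro x y
    change Ideal.Quotient.mk (RingHom.ker Φ) _ = Ideal.Quotient.mk (RingHom.ker Φ) _ ↔ _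
    rw [Ideal.Quotient.eq, RingHom.mem_ker, map_sub, hΦ, hΦ, sub_eq_zero]
  have h1 : orderOf (q c) = p := by
    have := Fact.mk hp
    apply orderOf_eq_prime
    · rw [← map_pow, hc, map_one]
    · intro h
      apply hc1
      rw [← map_one q, hq, map_one] at h
      exact h
  have h2 : IsPrimitiveRoot (q c) p := h1 ▸ IsPrimitiveRoot.orderOf _
  have : NeZero p := ⟨hp.ne_zero⟩
  obtain ⟨i, _, hi⟩ := h2.eq_pow_of_pow_eq_one (ξ := q a) (by rw [← map_pow, ha, map_one])
  refine ⟨i, ?_⟩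
  rw [← hq, map_pow, hi]

lemma e_coprime {G : Type*} [Group G] {p : ℕ} {K : Subgroup G} (hK : (Nat.card K).Coprime p)
    {x : G} (hx : x ∈ K) {n : ℕ} (h : x ^ p ^ n = 1) : x = 1 := by
  have h1 : orderOf x ∣ Nat.card K := by
    rw [← Subgroup.orderOf_mk x hx]; exact orderOf_dvd_natCard _
  have h2 := orderOf_dvd_of_pow_eq_one h
  rw [← orderOf_eq_one_iff]
  exact Nat.eq_one_of_dvd_coprimes (hK.pow_right n) h1 h2

def eprod {G : Type*} [Group G] (M Z : Subgroup G) (h : ∀ m ∈ M, ∀ z ∈ Z, m * z = z * m) :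
    Subgroup G where
  carrier := {k | ∃ m ∈ M, ∃ z ∈ Z, k = m * z}
  one_mem' := ⟨1, M.one_mem, 1, Z.one_mem, by simp⟩
  mul_mem' := by
    rintro _ _ ⟨m, hm, z, hz, rfl⟩ ⟨m', hm', z', hz', rfl⟩
    refine ⟨m * m', M.mul_mem hm hm', z * z', Z.mul_mem hz hz', ?_⟩
    have := h m' hm' z hz
    calc m * z * (m' * z') = m * (z * m') * z' := by group
      _ = _ := by rw [← this]; group
  inv_mem' := by
    rintro _ ⟨m, hm, z, hz, rfl⟩
    refine ⟨m⁻¹, M.inv_mem hm, z⁻¹, Z.inv_mem hz, ?_⟩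
    rw [h m hm z hz, mul_inv_rev]

lemma e_pow_comm {G : Type*} [Group G] {k c : G} (h : ⁅k, c⁆ * c = c * ⁅k, c⁆) (n : ℕ) :
    k * c ^ n * k⁻¹ = ⁅k, c⁆ ^ n * c ^ n := by
  have h1 : k * c * k⁻¹ = ⁅k, c⁆ * c := by simp [commutatorElement_def]
  have h2 : Commute ⁅k, c⁆ c := h
  rw [← conj_pow, h1, h2.mul_pow]

lemma e_gt {G : Type*} [Group G] [Finite G] {p : ℕ} (hp : p.Prime) {K A : Subgroup G}
    (h : EGood p K A) (hC : ∀ a ∈ A, (∀ k ∈ K, a * k = k * a) → a = 1) (hA : A ≠ ⊥)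
    (hmin : ∀ K' ≤ K, K' ≠ K → (∀ a ∈ A, ∀ k ∈ K', a * k * a⁻¹ ∈ K') →
      ∃ a ∈ A, a ≠ 1 ∧ ∀ k ∈ K', a * k = k * a) :
    ∃ M ≤ K, (∀ a ∈ A, ∀ k ∈ M, a * k * a⁻¹ ∈ M) ∧
      (∀ k ∈ K, ∃ m ∈ M, ∃ l, k = m * l ∧ ∀ m' ∈ M, l * m' = m' * l) ∧
      (∃ a ∈ A, a ≠ 1 ∧ a ^ p = 1 ∧ ∀ m ∈ M, a * m = m * a) ∧
      (∀ a ∈ A, ∀ c ∈ A, (∀ m ∈ M, a * m = m * a) → (∀ m ∈ M, c * m = m * c) →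
        a ^ p = 1 → c ^ p = 1 → c ≠ 1 → ∃ i : ℕ, a = c ^ i) := by
  have hKne : K ≠ ⊥ := by
    rintro rfl
    apply hA
    rw [Subgroup.eq_bot_iff_forall]
    intro a ha
    apply hC a ha
    intro k hk
    rw [Subgroup.mem_bot] at hk
    simp [hk]
  obtain ⟨M, hM⟩ : ∃ M, Maximal (fun M : Subgroup G => M ≤ K ∧ M ≠ K ∧
      (∀ a ∈ A, ∀ k ∈ M, a * k * a⁻¹ ∈ M)) M := by
    have hf : Set.Finite {M : Subgroup G | M ≤ K ∧ M ≠ K ∧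
      (∀ a ∈ A, ∀ k ∈ M, a * k * a⁻¹ ∈ M)} := Set.toFinite _
    obtain ⟨M, hM⟩ := hf.exists_maximal ⟨⊥, bot_le, hKne.symm, by
      intro a _ k hk
      rw [Subgroup.mem_bot] at hk ⊢
      simp [hk]⟩
    exact ⟨M, hM⟩
  obtain ⟨⟨hMK, hMne, hMA⟩, hmax⟩ := hM
  have hmax' : ∀ H ≤ K, M ≤ H → (∀ a ∈ A, ∀ k ∈ H, a * k * a⁻¹ ∈ H) → H = M ∨ H = K := by
    intro H hHK hMH hHA
    by_cases hne : H = K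
    · exact Or.inr hne
    · exact Or.inl (le_antisymm (hmax ⟨hHK, hne, hHA⟩ hMH) hMH)
  -- products
  have hprod : ∀ Z ≤ K, (∀ a ∈ A, ∀ k ∈ Z, a * k * a⁻¹ ∈ Z) →
      (∀ m ∈ M, ∀ z ∈ Z, m * z = z * m) → Z ≤ M ∨ ∀ k ∈ K, ∃ m ∈ M, ∃ z ∈ Z, k = m * z := by
    intro Z hZK hZA hMZ
    have hor := hmax' (eprod M Z hMZ) ?_ ?_ ?_
    rcases hor with h1 | h1
    · left
      intro z hz
      rw [← h1]
      exact ⟨1, M.one_mem, z, hz, by simp⟩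
    · right
      intro k hk
      rw [← h1] at hk
      exact hk
    · rintro _ ⟨m, hm, z, hz, rfl⟩
      exact K.mul_mem (hMK hm) (hZK hz)
    · intro m hm
      exact ⟨m, hm, 1, Z.one_mem, by simp⟩
    · rintro a ha _ ⟨m, hm, z, hz, rfl⟩
      exact ⟨_, hMA a ha m hm, _, hZA a ha z hz, by group⟩
  -- commutators lie in M
  have hcomm : ∀ x ∈ K, ∀ y ∈ K, ⁅x, y⁆ ∈ M := by
    have hcK : ∀ x ∈ K, ∀ y ∈ K, ⁅x, y⁆ ∈ K := fun x hx y hy => by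
      rw [commutatorElement_def]
      exact K.mul_mem (K.mul_mem (K.mul_mem hx hy) (K.inv_mem hx)) (K.inv_mem hy)
    have hor := hprod (K ⊓ Subgroup.centralizer (K : Set G)) inf_le_left ?_ ?_
    rcases hor with h1 | h1
    · intro x hx y hy
      apply h1
      refine ⟨hcK x hx y hy, ?_⟩
      refine Subgroup.mem_centralizer_iff.2 ?_
      intro z hz
      exact (h.cls x hx y hy z hz).symm
    · intro x hx y hy
      obtain ⟨m, hm, z, ⟨hzK, hz⟩, rfl⟩ := h1 x hx
      obtain ⟨m', hm', z', ⟨hzK', hz'⟩, rfl⟩ := h1 y hy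
      replace hz := Subgroup.mem_centralizer_iff.1 hz
      replace hz' := Subgroup.mem_centralizer_iff.1 hz'
      have : ⁅m * z, m' * z'⁆ = ⁅m, m'⁆ := by
        have e1 : z * (m' * z') = (m' * z') * z := (hz _ hy).symm
        have e2 : z' * m⁻¹ = m⁻¹ * z' := (hz' _ (K.inv_mem (hMK hm))).symm
        simp only [commutatorElement_def, mul_inv_rev]
        calc m * z * (m' * z') * (z⁻¹ * m⁻¹) * (z'⁻¹ * m'⁻¹)
            = m * (z * (m' * z')) * (z⁻¹ * m⁻¹) * (z'⁻¹ * m'⁻¹) := by group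
          _ = m * m' * (z' * m⁻¹) * (z'⁻¹ * m'⁻¹) := by rw [e1]; group
          _ = _ := by rw [e2]; group
      rw [this, commutatorElement_def]
      exact M.mul_mem (M.mul_mem (M.mul_mem hm hm') (M.inv_mem hm)) (M.inv_mem hm')
    · rintro a ha k ⟨hk, hk'⟩
      refine ⟨h.norm a ha k hk, ?_⟩
      replace hk' := Subgroup.mem_centralizer_iff.1 hk'
      refine Subgroup.mem_centralizer_iff.2 ?_
      intro x hx
      have hx' : a⁻¹ * x * a ∈ K := by simpa using h.norm a⁻¹ (A.inv_mem ha) x hx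
      have := hk' _ hx'
      calc x * (a * k * a⁻¹) = a * ((a⁻¹ * x * a) * k) * a⁻¹ := by group
        _ = _ := by rw [this]; group
    · rintro m hm z ⟨_, hz⟩
      replace hz := Subgroup.mem_centralizer_iff.1 hz
      exact hz m (hMK hm)
  have hMnorm : ∀ k ∈ K, ∀ m ∈ M, k * m * k⁻¹ ∈ M := by
    intro k hk m hm
    have := M.mul_mem (hcomm k hk m (hMK hm)) hm
    simpa [commutatorElement_def] using this
  -- elements of C acting trivially mod M are trivial
  have htriv : ∀ c ∈ A, (∀ m ∈ M, c * m = m * c) → (∀ k ∈ K, ⁅k, c⁆ ∈ M) → c = 1 := by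
    intro c hc hcM hck
    apply hC c hc
    intro k hk
    obtain ⟨n, hn⟩ := h.pgrp c hc
    have := e_pow_comm (hcM _ (hck k hk)).symm (p ^ n)
    rw [hn] at this
    have h1 : ⁅k, c⁆ = 1 := e_coprime h.cop (hMK (hck k hk)) (n := n) (by simpa using this.symm)
    exact (commutatorElement_eq_one_iff_mul_comm.mp h1).symm
  obtain ⟨a₀, ha₀A, ha₀, ha₀M⟩ := hmin M hMK hMne hMA
  refine ⟨M, hMK, hMA, ?_, ?_, ?_⟩
  · have hor := hprod (K ⊓ Subgroup.centralizer (M : Set G)) inf_le_left ?_ ?_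
    rcases hor with h1 | h1
    · exfalso
      apply ha₀
      apply htriv a₀ ha₀A ha₀M
      intro k hk
      apply h1
      refine ⟨?_, ?_⟩
      · have := K.mul_mem hk (h.norm a₀ ha₀A _ (K.inv_mem hk))
        change ⁅k, a₀⁆ ∈ K
        rw [commutatorElement_def, mul_assoc, mul_assoc, ← mul_assoc a₀]
        exact this
      · refine Subgroup.mem_centralizer_iff.2 ?_
        intro m hm
        have e1 : k⁻¹ * m * k ∈ M := by simpa using hMnorm k⁻¹ (K.inv_mem hk) m hm
        have e2 := ha₀M _ e1
        have e3 : a₀⁻¹ * m = m * a₀⁻¹ := by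
          rw [inv_mul_eq_iff_eq_mul, ← mul_assoc, ha₀M m hm]; group
        rw [commutatorElement_def]
        calc m * (k * a₀ * k⁻¹ * a₀⁻¹) = k * ((k⁻¹ * m * k) * a₀) * k⁻¹ * a₀⁻¹ := by group
          _ = k * a₀ * k⁻¹ * (m * a₀⁻¹) := by rw [← e2]; group
          _ = _ := by rw [← e3]; group
    · intro k hk
      obtain ⟨m, hm, z, ⟨_, hz⟩, e⟩ := h1 k hk
      replace hz := Subgroup.mem_centralizer_iff.1 hz
      exact ⟨m, hm, z, e, fun m' hm' => (hz m' hm').symm⟩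
    · rintro a ha k ⟨hk, hk'⟩
      refine ⟨h.norm a ha k hk, ?_⟩
      replace hk' := Subgroup.mem_centralizer_iff.1 hk'
      refine Subgroup.mem_centralizer_iff.2 ?_
      intro x hx
      have hx' : a⁻¹ * x * a ∈ M := by simpa using hMA a⁻¹ (A.inv_mem ha) x hx
      have := hk' _ hx'
      calc x * (a * k * a⁻¹) = a * ((a⁻¹ * x * a) * k) * a⁻¹ := by group
        _ = _ := by rw [this]; group
    · rintro m hm z ⟨_, hz⟩
      replace hz := Subgroup.mem_centralizer_iff.1 hz
      exact hz m hm
  · obtain ⟨n, hn⟩ := h.pgrp a₀ ha₀A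
    have hex : ∃ n, a₀ ^ p ^ n = 1 := ⟨n, hn⟩
    classical
    have hpos : Nat.find hex ≠ 0 := by
      intro h0
      have := Nat.find_spec hex
      rw [h0] at this
      exact ha₀ (by simpa using this)
    obtain ⟨j, hj⟩ := Nat.exists_eq_succ_of_ne_zero hpos
    refine ⟨a₀ ^ p ^ j, A.pow_mem ha₀A _, ?_, ?_, ?_⟩
    · exact Nat.find_min hex (by omega)
    · have := Nat.find_spec hex
      rw [hj] at this
      rw [← pow_mul, ← pow_succ]; exact this
    · intro m hm
      have : Commute a₀ m := ha₀M m hm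
      exact this.pow_left _
  · intro a ha c hc haM hcM hap hcp hc1
    let M' : Subgroup K := M.subgroupOf K
    have : M'.Normal := ⟨fun m hm k => hMnorm k k.2 m hm⟩
    let : CommGroup (K ⧸ M') := { (inferInstance : Group (K ⧸ M')) with
      mul_comm := by
        intro x y
        induction x using QuotientGroup.induction_on with | H x => ?_
        induction y using QuotientGroup.induction_on with | H y => ?_
        rw [← QuotientGroup.mk_mul, ← QuotientGroup.mk_mul, QuotientGroup.eq]
        have := hcomm (y⁻¹ : K) (y⁻¹ : K).2 (x⁻¹ : K) (x⁻¹ : K).2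
        change _ ∈ M
        simpa [commutatorElement_def, mul_assoc] using this }
    let : CommGroup A := { (inferInstance : Group A) with
      mul_comm := fun x y => Subtype.ext (h.comm x x.2 y y.2) }
    let θ : A → (K →* K) := fun a =>
      { toFun := fun k => ⟨a * k * (a : G)⁻¹, h.norm a a.2 k k.2⟩
        map_one' := by ext; simp
        map_mul' := by intro x y; ext; simp }
    have hθ : ∀ a, M' ≤ M'.comap (θ a) := fun a m hm => hMA a a.2 m hm
    let φ : A →* AddMonoid.End (Additive (K ⧸ M')) :=
      { toFun := fun a => MonoidHom.toAdditive (QuotientGroup.map M' M' (θ a) (hθ a))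
        map_one' := by
          ext x
          induction x using QuotientGroup.induction_on with | H x => ?_
          change ((θ 1 x : K) : K ⧸ M') = (x : K ⧸ M')
          congr 1
          ext
          simp [θ]
        map_mul' := by
          intro a b
          ext x
          induction x using QuotientGroup.induction_on with | H x => ?_
          change ((θ (a * b) x : K) : K ⧸ M') = (θ a (θ b x) : K ⧸ M')
          congr 1
          ext
          simp [θ, mul_assoc] }
    have hφ : ∀ a : A, ∀ k : K, φ a (Additive.ofMul (k : K ⧸ M')) = Additive.ofMul ((θ a k : K) : K ⧸ M') :=
      fun a k => rfl
    have hφ1 : ∀ b : A, φ b = 1 → (∀ m ∈ M, b * m = m * b) → b = 1 := by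
      intro b hb hbM
      apply Subtype.ext
      apply htriv b b.2 hbM
      intro k hk
      have e1 := hφ b ⟨k, hk⟩
      rw [hb] at e1
      have e2 : ((⟨k, hk⟩ : K) : K ⧸ M') = ((θ b ⟨k, hk⟩ : K) : K ⧸ M') := e1
      rw [QuotientGroup.eq] at e2
      have e3 : k⁻¹ * (b * k * (b : G)⁻¹) ∈ M := e2
      have e4 := hMnorm k hk _ (M.inv_mem e3)
      convert e4 using 1
      rw [commutatorElement_def]
      group
    have : Nontrivial (Additive (K ⧸ M')) := by
      by_contra hcon
      rw [not_nontrivial_iff_subsingleton] at hcon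
      apply hMne
      apply le_antisymm hMK
      intro k hk
      have : ((1 : K) : K ⧸ M') = ((⟨k, hk⟩ : K) : K ⧸ M') := hcon.elim _ _
      rw [QuotientGroup.eq] at this
      have : (1 : G)⁻¹ * k ∈ M := this
      simpa using this
    have hres := e_cyc φ ?_ p hp ⟨a, ha⟩ ⟨c, hc⟩ (Subtype.ext hap) (Subtype.ext hcp) ?_
    · obtain ⟨i, hi⟩ := hres
      refine ⟨i, ?_⟩
      have := hφ1 (⟨a, ha⟩ * (⟨c, hc⟩ ^ i)⁻¹) ?_ ?_
      · exact congrArg Subtype.val (mul_inv_eq_one.mp this)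
      · rw [map_mul, hi, ← map_mul, mul_inv_cancel, map_one]
      · intro m hm
        have e1 : Commute a m := haM m hm
        have e2 : Commute c m := hcM m hm
        exact e1.mul_left ((e2.pow_left i).inv_left)
    · intro H hH
      let H' : Subgroup G := ((AddSubgroup.toSubgroup' H).comap (QuotientGroup.mk' M')).map K.subtype
      have hmem : ∀ k : K, (k : G) ∈ H' ↔ Additive.ofMul (k : K ⧸ M') ∈ H := by
        intro k
        constructor
        · rintro ⟨k', hk', e⟩
          have : k' = k := Subtype.ext e
          rw [← this]; exact hk'
        · intro hk
          exact ⟨k, hk, rfl⟩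
      have hor := hmax' H' ?_ ?_ ?_
      rcases hor with h1 | h1
      · left
        rw [eq_bot_iff]
        intro x hx
        induction x using QuotientGroup.induction_on with | H x => ?_
        have := (hmem x).2 hx
        rw [h1] at this
        exact AddSubgroup.mem_bot.2 ((QuotientGroup.eq_one_iff x).2 this)
      · right
        rw [eq_top_iff]
        intro x _
        induction x using QuotientGroup.induction_on with | H x => ?_
        apply (hmem x).1
        rw [h1]; exact x.2
      · rintro _ ⟨k, _, rfl⟩
        exact k.2
      · intro m hm
        apply (hmem ⟨m, hMK hm⟩).2
        have : ((⟨m, hMK hm⟩ : K) : K ⧸ M') = 1 := (QuotientGroup.eq_one_iff _).2 hm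
        rw [this]
        exact H.zero_mem
      · rintro b hb _ ⟨k, hk, rfl⟩
        apply (hmem (θ ⟨b, hb⟩ k)).2
        rw [← hφ]
        exact hH _ _ hk
    · intro hcon
      exact hc1 (congrArg Subtype.val (hφ1 ⟨c, hc⟩ hcon hcM))
lemma e_crit {G : Type*} [Group G] [Finite G] (hs : IsSolvable G) :
    ∃ N : Subgroup G, N.Normal ∧ (∀ x ∈ N, ∀ y ∈ N, ∀ z ∈ N, ⁅x, y⁆ * z = z * ⁅x, y⁆) ∧
      Subgroup.centralizer (N : Set G) ≤ N := by
  obtain ⟨Z, ⟨hZn, hZc⟩, hZmax⟩ : ∃ Z, Maximal (fun Z : Subgroup G => Z.Normal ∧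
      ∀ x ∈ Z, ∀ y ∈ Z, x * y = y * x) Z := by
    have hf : Set.Finite {Z : Subgroup G | Z.Normal ∧ ∀ x ∈ Z, ∀ y ∈ Z, x * y = y * x} :=
      Set.toFinite _
    obtain ⟨M, hM⟩ := hf.exists_maximal ⟨⊥, inferInstance, by
      intro x hx y hy
      rw [Subgroup.mem_bot] at hx hy
      simp [hx, hy]⟩
    exact ⟨M, hM⟩
  obtain ⟨N, ⟨hNn, hZN, hNZ, hNN⟩, hNmax⟩ : ∃ N, Maximal (fun N : Subgroup G => N.Normal ∧
      Z ≤ N ∧ (∀ x ∈ N, ∀ z ∈ Z, x * z = z * x) ∧ ∀ x ∈ N, ∀ y ∈ N, ⁅x, y⁆ ∈ Z) N := by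
    have hf : Set.Finite {N : Subgroup G | N.Normal ∧
      Z ≤ N ∧ (∀ x ∈ N, ∀ z ∈ Z, x * z = z * x) ∧ ∀ x ∈ N, ∀ y ∈ N, ⁅x, y⁆ ∈ Z} :=
      Set.toFinite _
    obtain ⟨M, hM⟩ := hf.exists_maximal ⟨Z, hZn, le_refl _, hZc, by
      intro x hx y hy
      rw [commutatorElement_eq_one_iff_mul_comm.2 (hZc x hx y hy)]
      exact Z.one_mem⟩
    exact ⟨M, hM⟩
  refine ⟨N, hNn, fun x hx y hy z hz => (hNZ z hz _ (hNN x hx y hy)).symm, ?_⟩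
  set D := Subgroup.centralizer (N : Set G) with hD
  have hDn : D.Normal := inferInstance
  have hDc : ∀ d ∈ D, ∀ n ∈ N, n * d = d * n := fun d hd n hn =>
    Subgroup.mem_centralizer_iff.1 hd n hn
  have hDN : D ⊓ N ≤ Z := by
    apply hZmax
    · refine ⟨inferInstance, ?_⟩
      intro x hx y hy
      exact hDc y hy.1 x hx.2
    · intro z hz
      refine ⟨Subgroup.mem_centralizer_iff.2 fun n hn => hNZ n hn z hz, hZN hz⟩
  suffices hDZ : D ≤ Z from hDZ.trans hZN
  obtain ⟨E, hE0, hEs⟩ : ∃ E : ℕ → Subgroup G, E 0 = D ∧ ∀ n, E (n + 1) = ⁅E n, E n⁆ :=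
    ⟨fun n => Nat.rec D (fun _ H => ⁅H, H⁆) n, rfl, fun n => rfl⟩
  have hEn : ∀ n, (E n).Normal := by
    intro n
    induction n with
    | zero => rw [hE0]; exact hDn
    | succ n ih => rw [hEs]; infer_instance
  have hED : ∀ n, E n ≤ D := by
    intro n
    induction n with
    | zero => exact hE0.le
    | succ n ih =>
      rw [hEs]
      have := hEn n
      exact (Subgroup.commutator_le_left _ _).trans ih
  have hEd : ∀ n, E n ≤ derivedSeries G n := by
    intro n
    induction n with
    | zero => simp
    | succ n ih =>
      rw [hEs, derivedSeries_succ]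
      exact Subgroup.commutator_mono ih ih
  have hstep : ∀ n, E (n + 1) ≤ Z → E n ≤ Z := by
    intro n hn
    have := hEn n
    have hc : ∀ m ∈ N, ∀ e ∈ E n, m * e = e * m := fun m hm e he => hDc e (hED n he) m hm
    have key : N ⊔ E n ≤ N := by
      have hmem : ∀ x ∈ N ⊔ E n, ∃ m ∈ N, ∃ e ∈ E n, m * e = x := fun x hx =>
        Subgroup.mem_sup_of_normal_right.1 hx
      have hnor : (N ⊔ E n).Normal := inferInstance
      refine hNmax (y := N ⊔ E n) ⟨hnor, hZN.trans le_sup_left, ?_, ?_⟩ le_sup_left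
      · intro x hx z hz
        obtain ⟨m, hm, e, he, rfl⟩ := hmem x hx
        have h1 : Commute m z := hNZ m hm z hz
        have h2 : Commute e z := (hc z (hZN hz) e he).symm
        exact h1.mul_left h2
      · intro x hx y hy
        obtain ⟨m, hm, e, he, rfl⟩ := hmem x hx
        obtain ⟨m', hm', e', he', rfl⟩ := hmem y hy
        have : ⁅m * e, m' * e'⁆ = ⁅m, m'⁆ * ⁅e, e'⁆ := by
          have e1 := hc m' hm' e he
          have e2 := hc _ (N.inv_mem hm) _ ((E n).mul_mem ((E n).mul_mem he he') ((E n).inv_mem he))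
          have e3 := hc _ (N.inv_mem hm') _ ((E n).mul_mem ((E n).mul_mem ((E n).mul_mem he he') ((E n).inv_mem he)) ((E n).inv_mem he'))
          simp only [commutatorElement_def, mul_inv_rev]
          calc m * e * (m' * e') * (e⁻¹ * m⁻¹) * (e'⁻¹ * m'⁻¹)
              = m * (e * m') * e' * e⁻¹ * m⁻¹ * e'⁻¹ * m'⁻¹ := by group
            _ = m * m' * (e * e' * e⁻¹ * m⁻¹) * e'⁻¹ * m'⁻¹ := by rw [← e1]; group
            _ = m * m' * m⁻¹ * (e * e' * e⁻¹ * e'⁻¹ * m'⁻¹) := by rw [← e2]; group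
            _ = _ := by rw [← e3]; group
        rw [this]
        refine Z.mul_mem (hNN m hm m' hm') (hn ?_)
        rw [hEs]
        exact Subgroup.commutator_mem_commutator he he'
    intro e he
    exact hDN ⟨hED n he, key (le_sup_right (a := N) he)⟩
  obtain ⟨n, hn⟩ := (isSolvable_def G).1 hs
  have hlast : E n ≤ Z := (hEd n).trans (by rw [hn]; exact bot_le)
  clear hn
  induction n with
  | zero => rw [← hE0]; exact hlast
  | succ n ih => exact ih (hstep n hlast)

lemma e_pprime {G : Type*} [Group G] [Finite G] {p : ℕ} (hp : p.Prime)
    (hOp : ∀ N : Subgroup G, N.Normal → IsPGroup p N → N = ⊥) (N : Subgroup G) (hN : N.Normal)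
    (hcls : ∀ x ∈ N, ∀ y ∈ N, ∀ z ∈ N, ⁅x, y⁆ * z = z * ⁅x, y⁆) : (Nat.card N).Coprime p := by
  have := Fact.mk hp
  have hnil : Group.IsNilpotent N := by
    rw [Group.isNilpotent_iff]
    refine ⟨2, ?_⟩
    rw [eq_top_iff]
    intro x _
    rw [Subgroup.mem_upperCentralSeries_succ_iff]
    intro y
    rw [Subgroup.upperCentralSeries_one, Subgroup.mem_center_iff]
    intro z
    exact Subtype.ext (hcls x x.2 y y.2 z z.2).symm
  obtain ⟨P⟩ : Nonempty (Sylow p N) := inferInstance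
  have hPn : (P : Subgroup N).Normal := inferInstance
  have hPc : (P : Subgroup N).Characteristic := Sylow.characteristic_of_normal P hPn
  have h1 := hOp ((P : Subgroup N).map N.subtype) inferInstance (P.isPGroup'.map _)
  rw [Subgroup.map_eq_bot_iff_of_injective _ N.subtype_injective] at h1
  have h2 := P.card_eq_multiplicity
  rw [h1, Subgroup.card_bot] at h2
  rw [Nat.coprime_comm, hp.coprime_iff_not_dvd]
  intro hd
  have h3 : 1 ≤ (Nat.card N).factorization p :=
    (hp.dvd_iff_one_le_factorization Nat.card_pos.ne').1 hd
  have h4 := Nat.one_lt_pow (n := (Nat.card N).factorization p) (by omega) hp.one_lt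
  omega

lemma e_ordp {G : Type*} [Group G] {p n : ℕ} {b : G} (h : b ^ p ^ n = 1) (hb : b ≠ 1) :
    ∃ j : ℕ, b ^ p ^ j ≠ 1 ∧ (b ^ p ^ j) ^ p = 1 := by
  classical
  have hex : ∃ n, b ^ p ^ n = 1 := ⟨n, h⟩
  have hpos : Nat.find hex ≠ 0 := by
    intro h0
    have := Nat.find_spec hex
    rw [h0] at this
    exact hb (by simpa using this)
  obtain ⟨j, hj⟩ := Nat.exists_eq_succ_of_ne_zero hpos
  refine ⟨j, Nat.find_min hex (by omega), ?_⟩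
  have := Nat.find_spec hex
  rw [hj] at this
  rw [← pow_mul, ← pow_succ]; exact this

lemma e_map {G H : Type*} [Group G] [Group H] {p : ℕ} {K A : Subgroup G} (h : EGood p K A)
    (f : G →* H) : EGood p (K.map f) (A.map f) where
  norm := by
    rintro _ ⟨a, ha, rfl⟩ _ ⟨k, hk, rfl⟩
    exact ⟨_, h.norm a ha k hk, by simp⟩
  comm := by
    rintro _ ⟨a, ha, rfl⟩ _ ⟨b, hb, rfl⟩
    rw [← map_mul, h.comm a ha b hb, map_mul]
  pgrp := by
    rintro _ ⟨a, ha, rfl⟩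
    obtain ⟨n, hn⟩ := h.pgrp a ha
    exact ⟨n, by rw [← map_pow, hn, map_one]⟩
  cop := h.cop.coprime_dvd_left (Subgroup.card_map_dvd K f)
  cls := by
    rintro _ ⟨x, hx, rfl⟩ _ ⟨y, hy, rfl⟩ _ ⟨z, hz, rfl⟩
    rw [← map_commutatorElement, ← map_mul, h.cls x hx y hy z hz, map_mul]

lemma e_subgroupOf {G : Type*} [Group G] {p : ℕ} {K A : Subgroup G} (h : EGood p K A)
    (S : Subgroup G) (hK : K ≤ S) : EGood p (K.subgroupOf S) (A.subgroupOf S) where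
  norm := fun a ha k hk => h.norm a ha k hk
  comm := fun a ha b hb => Subtype.ext (h.comm a ha b hb)
  pgrp := by
    intro a ha
    obtain ⟨n, hn⟩ := h.pgrp a ha
    exact ⟨n, Subtype.ext hn⟩
  cop := by
    rw [Nat.card_congr (Subgroup.subgroupOfEquivOfLe hK).toEquiv]
    exact h.cop
  cls := fun x hx y hy z hz => Subtype.ext (h.cls x hx y hy z hz)

lemma e_sub {G : Type*} [Group G] {p : ℕ} {K A : Subgroup G} (h : EGood p K A)
    (M : Subgroup G) (hM : M ≤ K) (hA : ∀ a ∈ A, ∀ k ∈ M, a * k * a⁻¹ ∈ M) : EGood p M A where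
  norm := hA
  comm := h.comm
  pgrp := h.pgrp
  cop := h.cop.coprime_dvd_left (Subgroup.card_dvd_of_le hM)
  cls := fun x hx y hy z hz => h.cls x (hM hx) y (hM hy) z (hM hz)

def EConcl {F V : Type*} [Field F] [AddCommGroup V] [Module F V]
    (K A : Subgroup (Module.End F V)ˣ) : Prop :=
  ∃ v : V, ∀ a ∈ A, (a : Module.End F V) v = v → ∀ k ∈ K, a * k = k * a

def estab {F V : Type*} [Field F] [AddCommGroup V] [Module F V] (W : Submodule F V) :
    Subgroup (Module.End F V)ˣ where
  carrier := {g | ∀ w ∈ W, (g : Module.End F V) w ∈ W ∧ ((g⁻¹ : (Module.End F V)ˣ) : Module.End F V) w ∈ W}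
  one_mem' := by intro w hw; simpa using hw
  mul_mem' := by
    intro a b ha hb w hw
    refine ⟨(ha _ (hb w hw).1).1, ?_⟩
    rw [mul_inv_rev]
    exact (hb _ (ha w hw).2).2
  inv_mem' := by
    intro a ha w hw
    rw [inv_inv]
    exact (ha w hw).symm

lemma e_restrict {F V : Type*} [Field F] [AddCommGroup V] [Module F V] [Finite (Module.End F V)ˣ]
    {p : ℕ} (W : Submodule F V)
    (K A : Subgroup (Module.End F V)ˣ) (hG : EGood p K A)
    (hKW : ∀ k ∈ K, ∀ w ∈ W, (k : Module.End F V) w ∈ W)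
    (hAW : ∀ k ∈ A, ∀ w ∈ W, (k : Module.End F V) w ∈ W)
    (IH : ∀ K' A' : Subgroup (Module.End F W)ˣ, EGood p K' A' → Nat.card K' ≤ Nat.card K →
      EConcl K' A') :
    ∃ w ∈ W, ∀ a ∈ A, (a : Module.End F V) w = w → ∀ k ∈ K, ∀ x ∈ W,
      (a : Module.End F V) ((k : Module.End F V) x) =
        (k : Module.End F V) ((a : Module.End F V) x) := by
  have hK : K ≤ estab W := fun k hk w hw => ⟨hKW k hk w hw, hKW _ (K.inv_mem hk) w hw⟩
  have hA : A ≤ estab W := fun k hk w hw => ⟨hAW k hk w hw, hAW _ (A.inv_mem hk) w hw⟩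
  let r : estab W →* Module.End F W :=
    { toFun := fun g => LinearMap.restrict ((g : (Module.End F V)ˣ) : Module.End F V)
        (fun w hw => (g.2 w hw).1)
      map_one' := by ext; rfl
      map_mul' := by intro a b; ext; rfl }
  have h1 := e_map (e_subgroupOf hG (estab W) hK) r.toHomUnits
  obtain ⟨w, hw⟩ := IH _ _ h1 (by
    refine (Nat.le_of_dvd Nat.card_pos (Subgroup.card_map_dvd _ _)).trans ?_
    rw [Nat.card_congr (Subgroup.subgroupOfEquivOfLe hK).toEquiv])
  refine ⟨w, w.2, ?_⟩
  intro a ha haw k hk x hx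
  have h2 := hw (r.toHomUnits ⟨a, hA ha⟩) ⟨_, ha, rfl⟩ (Subtype.ext haw)
    (r.toHomUnits ⟨k, hK hk⟩) ⟨_, hk, rfl⟩
  have h3 := congrArg (fun g : (Module.End F W)ˣ => (((g : Module.End F W) ⟨x, hx⟩ : W) : V)) h2
  exact h3

lemma e_nil2 {F V : Type*} [Field F] [AddCommGroup V] [Module F V] (T : Module.End F V)
    (hT : T ≠ 0) (n : ℕ) (hn : T ^ n = 0) : ∃ v, T v ≠ 0 ∧ T (T v) = 0 := by
  classical
  have hex : ∃ n, T ^ n = 0 := ⟨n, hn⟩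
  have hs := Nat.find_spec hex
  have hm := fun m => Nat.find_min hex (m := m)
  generalize Nat.find hex = N at hs hm
  rcases N with _ | _ | N
  · exfalso
    apply hT
    rw [pow_zero] at hs
    rw [← mul_one T, hs, mul_zero]
  · exact absurd (by simpa using hs) hT
  · have h1 := hm (N + 1) (by omega)
    obtain ⟨v, hv⟩ : ∃ v, (T ^ (N + 1)) v ≠ 0 := by
      by_contra hcon
      push Not at hcon
      exact h1 (LinearMap.ext hcon)
    refine ⟨(T ^ N) v, ?_, ?_⟩
    · rw [pow_succ'] at hv
      exact hv
    · have := LinearMap.congr_fun hs v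
      rw [pow_succ', pow_succ'] at this
      exact this

lemma e_nilp {F V : Type*} [Field F] [AddCommGroup V] [Module F V] [Nontrivial V] {p : ℕ}
    (hp : p.Prime) [CharP F p] (T : Module.End F V) {n : ℕ} (hn : T ^ p ^ n = 1) :
    (T - 1) ^ p ^ n = 0 := by
  have := Fact.mk hp
  have : CharP (Module.End F V) p := charP_of_injective_algebraMap (algebraMap F _).injective p
  rw [sub_pow_char_pow_of_commute _ _ (Commute.one_right T), hn, one_pow, sub_self]

lemma e_avg {F V : Type*} [Field F] [AddCommGroup V] [Module F V]
    (N : Subgroup (Module.End F V)ˣ) [Finite N] (hN : (Nat.card N : F) ≠ 0) :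
    ∃ S : Module.End F V,
      (∀ g : (Module.End F V)ˣ, (∀ n ∈ N, g * n * g⁻¹ ∈ N) → (∀ n ∈ N, g⁻¹ * n * g ∈ N) →
        (g : Module.End F V) * S = S * g) ∧
      (∀ n ∈ N, (n : Module.End F V) * S = S) ∧
      (∀ v, (∀ n ∈ N, (n : Module.End F V) v = v) → S v = v) := by
  classical
  have := Fintype.ofFinite N
  refine ⟨(Nat.card N : F)⁻¹ • ∑ n : N, ((n : (Module.End F V)ˣ) : Module.End F V), ?_, ?_, ?_⟩
  · intro g h1 h2
    rw [mul_smul_comm, smul_mul_assoc, Finset.mul_sum, Finset.sum_mul]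
    congr 1
    let e : N ≃ N :=
      { toFun := fun n => ⟨g * n * g⁻¹, h1 n n.2⟩
        invFun := fun n => ⟨g⁻¹ * n * g, h2 n n.2⟩
        left_inv := by intro n; ext1; simp [mul_assoc]
        right_inv := by intro n; ext1; simp [mul_assoc] }
    refine Fintype.sum_equiv e _ _ ?_
    intro n
    change _ = (((g * n * g⁻¹ : (Module.End F V)ˣ)) : Module.End F V) * g
    rw [← Units.val_mul, ← Units.val_mul]
    simp
  · intro n hn
    rw [mul_smul_comm, Finset.mul_sum]
    congr 1
    refine Fintype.sum_equiv (Equiv.mulLeft (⟨n, hn⟩ : N)) _ _ ?_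
    intro m
    rfl
  · intro v hv
    have hsum : ∑ n : N, ((n : (Module.End F V)ˣ) : Module.End F V) v = ∑ _n : N, v :=
      Finset.sum_congr rfl (fun (n : N) _ => hv n.1 n.2)
    rw [LinearMap.smul_apply, LinearMap.sum_apply, hsum,
      Finset.sum_const, Finset.card_univ, ← Nat.card_eq_fintype_card, ← Nat.cast_smul_eq_nsmul F,
      smul_smul, inv_mul_cancel₀ hN, one_smul]

def efix {F V : Type*} [Field F] [AddCommGroup V] [Module F V]
    (K : Subgroup (Module.End F V)ˣ) (W : Submodule F V) : Subgroup (Module.End F V)ˣ where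
  carrier := {k | k ∈ K ∧ ∀ w ∈ W, (k : Module.End F V) w = w}
  one_mem' := ⟨K.one_mem, fun w _ => rfl⟩
  mul_mem' := by
    rintro a b ⟨ha, ha'⟩ ⟨hb, hb'⟩
    refine ⟨K.mul_mem ha hb, fun w hw => ?_⟩
    rw [Units.val_mul, Module.End.mul_apply, hb' w hw, ha' w hw]
  inv_mem' := by
    rintro a ⟨ha, ha'⟩
    refine ⟨K.inv_mem ha, fun w hw => ?_⟩
    have h1 : ((a⁻¹ * a : (Module.End F V)ˣ) : Module.End F V) w = w := by simp
    rw [Units.val_mul, Module.End.mul_apply, ha' w hw] at h1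
    exact h1

lemma e_inv_apply {F V : Type*} [Field F] [AddCommGroup V] [Module F V]
    (a : (Module.End F V)ˣ) (x : V) :
    (a : Module.End F V) (((a⁻¹ : (Module.End F V)ˣ) : Module.End F V) x) = x := by
  rw [← Module.End.mul_apply, ← Units.val_mul]; simp

lemma e_inv_apply' {F V : Type*} [Field F] [AddCommGroup V] [Module F V]
    (a : (Module.End F V)ˣ) (x : V) :
    (((a⁻¹ : (Module.End F V)ˣ) : Module.End F V) ((a : Module.End F V) x)) = x := by
  rw [← Module.End.mul_apply, ← Units.val_mul]; simp

/-- conjugation stability of the pointwise fixer -/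
lemma e_fix_conj {F V : Type*} [Field F] [AddCommGroup V] [Module F V]
    (K : Subgroup (Module.End F V)ˣ) (W : Submodule F V) (g : (Module.End F V)ˣ)
    (h1 : ∀ k ∈ K, g * k * g⁻¹ ∈ K)
    (h2 : ∀ w ∈ W, ((g⁻¹ : (Module.End F V)ˣ) : Module.End F V) w ∈ W) :
    ∀ k ∈ efix K W, g * k * g⁻¹ ∈ efix K W := by
  rintro k ⟨hk, hk'⟩
  refine ⟨h1 k hk, fun w hw => ?_⟩
  rw [Units.val_mul, Units.val_mul, Module.End.mul_apply, Module.End.mul_apply, hk' _ (h2 w hw),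
    e_inv_apply]

/-- if the commutator lies in a group acting faithfully on `W` -/
lemma e_commute_of {F V : Type*} [Field F] [AddCommGroup V] [Module F V]
    (K : Subgroup (Module.End F V)ˣ) (W : Submodule F V) (hfix : efix K W = ⊥)
    (a k : (Module.End F V)ˣ) (hak : a * k * a⁻¹ ∈ K) (hk : k ∈ K)
    (ha' : ∀ w ∈ W, ((a⁻¹ : (Module.End F V)ˣ) : Module.End F V) w ∈ W)
    (hk' : ∀ w ∈ W, ((k⁻¹ : (Module.End F V)ˣ) : Module.End F V) w ∈ W)
    (h : ∀ x ∈ W, (a : Module.End F V) ((k : Module.End F V) x) =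
        (k : Module.End F V) ((a : Module.End F V) x)) : a * k = k * a := by
  have h1 : a * k * a⁻¹ * k⁻¹ ∈ efix K W := by
    refine ⟨K.mul_mem hak (K.inv_mem hk), fun w hw => ?_⟩
    simp only [Units.val_mul, Module.End.mul_apply]
    rw [h _ (ha' _ (hk' _ hw)), e_inv_apply, e_inv_apply]
  rw [hfix, Subgroup.mem_bot] at h1
  rw [mul_inv_eq_one, mul_inv_eq_iff_eq_mul] at h1
  exact h1

theorem e_main.{u, w} {p : ℕ} (hp : p.Prime) (F : Type w) [Field F] [Finite F] [CharP F p]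
    (n : ℕ) : ∀ (V : Type u) [AddCommGroup V] [Module F V] [FiniteDimensional F V]
      (K A : Subgroup (Module.End F V)ˣ), EGood p K A →
      Module.finrank F V + Nat.card K < n → EConcl K A := by
  induction n with
  | zero => intro V _ _ _ K A _ h; omega
  | succ n ih =>
  intro V _ _ _ K A hG hn
  have hfV : Finite V := Module.finite_of_finite F
  have hfE : Finite (Module.End F V) := Finite.of_injective (fun f => (f : V → V)) DFunLike.coe_injective
  have hfG : Finite (Module.End F V)ˣ := inferInstance
  -- the induction hypothesis on submodules
  have IHsub : ∀ (W : Submodule F V), W ≠ ⊤ → ∀ M ≤ K, (∀ a ∈ A, ∀ k ∈ M, a * k * a⁻¹ ∈ M) →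
      (∀ k ∈ M, ∀ w ∈ W, (k : Module.End F V) w ∈ W) →
      (∀ k ∈ A, ∀ w ∈ W, (k : Module.End F V) w ∈ W) →
      ∃ w ∈ W, ∀ a ∈ A, (a : Module.End F V) w = w → ∀ k ∈ M, ∀ x ∈ W,
      (a : Module.End F V) ((k : Module.End F V) x) =
        (k : Module.End F V) ((a : Module.End F V) x) := by
    intro W hW M hM hMA hMW hAW
    apply e_restrict (p := p) W M A (e_sub hG M hM hMA) hMW hAW
    intro K' A' h' hc
    apply ih W K' A' h'
    have h1 := Submodule.finrank_lt hW
    have h2 := Nat.le_of_dvd Nat.card_pos (Subgroup.card_dvd_of_le hM)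
    omega
  rcases subsingleton_or_nontrivial V with hV | hV
  · refine ⟨0, fun a _ _ k _ => ?_⟩
    ext x
    exact Subsingleton.elim _ _
  by_cases hdec : ∃ W : Submodule F V, W ≠ ⊥ ∧ W ≠ ⊤ ∧
      (∀ k ∈ K, ∀ w ∈ W, (k : Module.End F V) w ∈ W) ∧
      (∀ k ∈ A, ∀ w ∈ W, (k : Module.End F V) w ∈ W)
  · obtain ⟨W, hWb, hWt, hKW, hAW⟩ := hdec
    by_cases hfix : efix K W = ⊥
    · obtain ⟨w, _, hw⟩ := IHsub W hWt K le_rfl hG.norm hKW hAW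
      refine ⟨w, fun a ha haw k hk => ?_⟩
      exact e_commute_of K W hfix a k (hG.norm a ha k hk) hk (hAW _ (A.inv_mem ha))
        (hKW _ (K.inv_mem hk)) (hw a ha haw k hk)
    · have hle : efix K W ≤ K := fun k hk => hk.1
      have hcard : (Nat.card (efix K W) : F) ≠ 0 := by
        intro h0
        rw [CharP.cast_eq_zero_iff F p] at h0
        have h1 := hG.cop.coprime_dvd_left (Subgroup.card_dvd_of_le hle)
        rw [Nat.coprime_comm, hp.coprime_iff_not_dvd] at h1
        exact h1 h0
      obtain ⟨S, hS1, hS2, hS3⟩ := e_avg (efix K W) hcard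
      have hSK : ∀ g ∈ K, (g : Module.End F V) * S = S * g := by
        intro g hg
        apply hS1
        · exact e_fix_conj K W g (fun k hk => K.mul_mem (K.mul_mem hg hk) (K.inv_mem hg))
            (hKW _ (K.inv_mem hg))
        · have := e_fix_conj K W g⁻¹ (fun k hk => K.mul_mem (K.mul_mem (K.inv_mem hg) hk)
            (K.inv_mem (K.inv_mem hg))) (by rw [inv_inv]; exact hKW _ hg)
          simpa using this
      have hSA : ∀ g ∈ A, (g : Module.End F V) * S = S * g := by
        intro g hg
        apply hS1
        · exact e_fix_conj K W g (hG.norm g hg) (hAW _ (A.inv_mem hg))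
        · have := e_fix_conj K W g⁻¹ (hG.norm _ (A.inv_mem hg)) (by rw [inv_inv]; exact hAW _ hg)
          simpa using this
      have hSS : ∀ v, S (S v) = S v := fun v => hS3 _ fun k hk => LinearMap.congr_fun (hS2 k hk) v
      have hr : ∀ g : (Module.End F V)ˣ, (g : Module.End F V) * S = S * g →
          ∀ w ∈ LinearMap.range S, (g : Module.End F V) w ∈ LinearMap.range S := by
        rintro g hg _ ⟨x, rfl⟩
        exact ⟨(g : Module.End F V) x, (LinearMap.congr_fun hg x).symm⟩
      have hk : ∀ g : (Module.End F V)ˣ, (g : Module.End F V) * S = S * g →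
          ∀ w ∈ LinearMap.ker S, (g : Module.End F V) w ∈ LinearMap.ker S := by
        intro g hg x hx
        rw [LinearMap.mem_ker] at hx ⊢
        have : (g : Module.End F V) (S x) = S ((g : Module.End F V) x) := LinearMap.congr_fun hg x
        rw [← this, hx, map_zero]
      obtain ⟨w₁, hw₁, hw₁'⟩ := IHsub (LinearMap.range S) (by
        intro htop
        apply hfix
        rw [Subgroup.eq_bot_iff_forall]
        intro g hg
        ext x
        have hx : x ∈ LinearMap.range S := htop ▸ Submodule.mem_top
        obtain ⟨y, rfl⟩ := hx
        exact LinearMap.congr_fun (hS2 g hg) y) K le_rfl hG.norm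
        (fun g hg => hr g (hSK g hg)) (fun g hg => hr g (hSA g hg))
      obtain ⟨w₂, hw₂, hw₂'⟩ := IHsub (LinearMap.ker S) (by
        intro htop
        obtain ⟨x, hx, hx0⟩ := Submodule.exists_mem_ne_zero_of_ne_bot hWb
        have h1 : S x = x := hS3 x fun k hk => hk.2 x hx
        have h2 : x ∈ LinearMap.ker S := htop ▸ Submodule.mem_top
        rw [LinearMap.mem_ker, h1] at h2
        exact hx0 h2) K le_rfl hG.norm
        (fun g hg => hk g (hSK g hg)) (fun g hg => hk g (hSA g hg))
      have hSw₁ : S w₁ = w₁ := by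
        obtain ⟨y, rfl⟩ := hw₁
        exact hSS y
      have hSw₂ : S w₂ = 0 := hw₂
      refine ⟨w₁ + w₂, fun a ha hav g hg => ?_⟩
      have ha1 : (a : Module.End F V) w₁ = w₁ := by
        have h1 : (a : Module.End F V) (S (w₁ + w₂)) = S ((a : Module.End F V) (w₁ + w₂)) :=
          LinearMap.congr_fun (hSA a ha) _
        rw [hav, map_add, hSw₁, hSw₂, add_zero] at h1
        exact h1
      have ha2 : (a : Module.End F V) w₂ = w₂ := by
        rw [map_add, ha1] at hav
        exact add_left_cancel hav
      ext x
      have e1 := hw₁' a ha ha1 g hg (S x) ⟨x, rfl⟩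
      have e2 := hw₂' a ha ha2 g hg (x - S x) (by
        rw [LinearMap.mem_ker, map_sub, hSS, sub_self])
      rw [Units.val_mul, Units.val_mul, Module.End.mul_apply, Module.End.mul_apply]
      simp only [map_sub] at e2
      rw [e1] at e2
      exact sub_left_injective e2
  have hirr : ∀ W : Submodule F V, (∀ k ∈ K, ∀ w ∈ W, (k : Module.End F V) w ∈ W) →
      (∀ k ∈ A, ∀ w ∈ W, (k : Module.End F V) w ∈ W) → W ≠ ⊥ → W = ⊤ := by
    intro W h1 h2 h3
    by_contra h4
    exact hdec ⟨W, h3, h4, h1, h2⟩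
  clear hdec
  have hnil : ∀ a ∈ A, a ≠ 1 → ∃ v, ((a : Module.End F V) - 1) v ≠ 0 ∧
      ((a : Module.End F V) - 1) (((a : Module.End F V) - 1) v) = 0 := by
    intro a ha ha1
    obtain ⟨m, hm⟩ := hG.pgrp a ha
    refine e_nil2 _ ?_ _ (e_nilp hp (a : Module.End F V) (n := m) ?_)
    · intro h0
      exact ha1 (Units.ext (sub_eq_zero.1 h0))
    · rw [← Units.val_pow_eq_pow_val, hm, Units.val_one]
  have hcommT : ∀ a g : (Module.End F V)ˣ, a * g = g * a → ∀ x,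
      ((a : Module.End F V) - 1) ((g : Module.End F V) x) =
        (g : Module.End F V) (((a : Module.End F V) - 1) x) := by
    intro a g hag x
    have h1 : (a : Module.End F V) ((g : Module.End F V) x) =
        (g : Module.End F V) ((a : Module.End F V) x) := by
      have := congrArg (fun t : (Module.End F V)ˣ => (t : Module.End F V) x) hag
      exact this
    simp [h1]
  have hC : ∀ a ∈ A, (∀ k ∈ K, a * k = k * a) → a = 1 := by
    intro a ha hak
    by_contra ha1
    obtain ⟨v, hv1, hv2⟩ := hnil a ha ha1
    have h1 := hirr (LinearMap.ker ((a : Module.End F V) - 1)) (by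
      intro k hk w hw
      rw [LinearMap.mem_ker] at hw ⊢
      rw [hcommT a k (hak k hk), hw, map_zero]) (by
      intro k hk w hw
      rw [LinearMap.mem_ker] at hw ⊢
      rw [hcommT a k (hG.comm a ha k hk), hw, map_zero]) (by
      intro h0
      have : ((a : Module.End F V) - 1) v ∈ LinearMap.ker ((a : Module.End F V) - 1) := hv2
      rw [h0, Submodule.mem_bot] at this
      exact hv1 this)
    apply hv1
    have : v ∈ LinearMap.ker ((a : Module.End F V) - 1) := h1 ▸ Submodule.mem_top
    exact this
  by_cases hA : A = ⊥
  · refine ⟨0, fun a ha _ k _ => ?_⟩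
    rw [hA, Subgroup.mem_bot] at ha
    simp [ha]
  by_cases hmin : ∃ K' ≤ K, K' ≠ K ∧ (∀ a ∈ A, ∀ k ∈ K', a * k * a⁻¹ ∈ K') ∧
      ∀ a ∈ A, (∀ k ∈ K', a * k = k * a) → a = 1
  · obtain ⟨K', hK'K, hK'ne, hK'A, hK'c⟩ := hmin
    obtain ⟨v, hv⟩ := ih V K' A (e_sub hG K' hK'K hK'A) (by
      have h1 : Nat.card K' < Nat.card K := by
        refine lt_of_le_of_ne (Nat.le_of_dvd Nat.card_pos (Subgroup.card_dvd_of_le hK'K)) ?_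
        intro he
        exact hK'ne (Subgroup.eq_of_le_of_card_ge hK'K he.ge)
      omega)
    refine ⟨v, fun a ha hav k hk => ?_⟩
    rw [hK'c a ha (hv a ha hav)]
    simp
  obtain ⟨M, hMK, hMA, hML, ⟨a, haA, ha1, hap, haM⟩, hcyc⟩ := e_gt hp hG hC hA (by
    intro K' h1 h2 h3
    by_contra hcon
    push Not at hcon
    apply hmin
    refine ⟨K', h1, h2, h3, fun b hb hbk => ?_⟩
    by_contra hb1
    obtain ⟨k, hk, hne⟩ := hcon b hb hb1
    exact hne (hbk k hk))
  clear hmin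
  obtain ⟨v₀, hv₀, hv₀'⟩ := hnil a haA ha1
  set T : Module.End F V := (a : Module.End F V) - 1 with hT
  set U : Submodule F V := LinearMap.range T ⊓ LinearMap.ker T with hU
  have hUinv : ∀ g : (Module.End F V)ˣ, a * g = g * a → ∀ w ∈ U, (g : Module.End F V) w ∈ U := by
    rintro g hg _ ⟨⟨x, rfl⟩, hx⟩
    refine ⟨⟨(g : Module.End F V) x, hcommT a g hg x⟩, ?_⟩
    have hx' : T (T x) = 0 := hx
    change T _ = 0
    rw [hcommT a g hg, hx', map_zero]
  have hUM : ∀ g ∈ M, ∀ w ∈ U, (g : Module.End F V) w ∈ U := fun g hg => hUinv g (haM g hg)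
  have hUA : ∀ g ∈ A, ∀ w ∈ U, (g : Module.End F V) w ∈ U :=
    fun g hg => hUinv g (hG.comm a haA g hg)
  have hu₀ : T v₀ ∈ U := ⟨⟨v₀, rfl⟩, hv₀'⟩
  have hfixM : efix M U = ⊥ := by
    let W : Submodule F V :=
      { carrier := {v | ∀ g ∈ efix M U, (g : Module.End F V) v = v}
        add_mem' := by
          intro x y hx hy g hg
          rw [map_add, hx g hg, hy g hg]
        zero_mem' := by intro g hg; simp
        smul_mem' := by
          intro c x hx g hg
          rw [map_smul, hx g hg] }
    have hconj : ∀ g : (Module.End F V)ˣ, (∀ k ∈ M, g⁻¹ * k * g ∈ M) →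
        (∀ w ∈ U, (g : Module.End F V) w ∈ U) → ∀ w ∈ W, (g : Module.End F V) w ∈ W := by
      intro g h1 h2 w hw k hk
      have h3 := e_fix_conj M U g⁻¹ (by simpa using h1) (by simpa using h2) k hk
      have h4 := hw _ h3
      have h5 := congrArg (fun x => (g : Module.End F V) x) h4
      simp only [Units.val_mul, Module.End.mul_apply, e_inv_apply, inv_inv] at h5
      exact h5
    have hWt : W = ⊤ := by
      apply hirr
      · intro k hk w hw
        obtain ⟨m, hm, l, rfl, hl⟩ := hML k hk
        rw [Units.val_mul, Module.End.mul_apply]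
        apply hconj m (fun k hk => M.mul_mem (M.mul_mem (M.inv_mem hm) hk) hm) (hUM m hm)
        intro g hg
        have h1 := congrArg (fun t : (Module.End F V)ˣ => (t : Module.End F V) w) (hl g hg.1)
        simp only [Units.val_mul, Module.End.mul_apply] at h1
        rw [← h1, hw g hg]
      · intro b hb
        apply hconj b _ (hUA b hb)
        intro k hk
        simpa using hMA _ (A.inv_mem hb) k hk
      · intro h0
        have : T v₀ ∈ W := fun g hg => hg.2 _ hu₀
        rw [h0, Submodule.mem_bot] at this
        exact hv₀ this
    rw [Subgroup.eq_bot_iff_forall]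
    intro g hg
    ext x
    have hx : x ∈ W := hWt ▸ Submodule.mem_top
    exact hx g hg
  have hUt : U ≠ ⊤ := by
    intro h0
    have : v₀ ∈ U := h0 ▸ Submodule.mem_top
    exact hv₀ this.2
  obtain ⟨u, huU, hu⟩ := IHsub U hUt M hMK hMA hUM hUA
  have hu' : ∀ b ∈ A, (b : Module.End F V) u = u → ∀ m ∈ M, b * m = m * b := by
    intro b hb hbu m hm
    exact e_commute_of M U hfixM b m (hMA b hb m hm) hm (hUA _ (A.inv_mem hb))
      (hUM _ (M.inv_mem hm)) (hu b hb hbu m hm)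
  obtain ⟨v, hv0, hv⟩ : ∃ v, T v ≠ 0 ∧ ∀ b ∈ A, (b : Module.End F V) (T v) = T v →
      ∀ m ∈ M, b * m = m * b := by
    by_cases h0 : u = 0
    · refine ⟨v₀, hv₀, fun b hb _ => hu' b hb ?_⟩
      rw [h0, map_zero]
    · obtain ⟨⟨v, rfl⟩, _⟩ := huU
      exact ⟨v, h0, hu'⟩
  refine ⟨v, fun b hb hbv k hk => ?_⟩
  suffices hb1 : b = 1 by simp [hb1]
  by_contra hb1
  have hbM := hv b hb (by rw [← hcommT a b (hG.comm a haA b hb), hbv])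
  obtain ⟨m, hm⟩ := hG.pgrp b hb
  obtain ⟨j, hj1, hj2⟩ := e_ordp hm hb1
  have hpow : ∀ i : ℕ, ((b ^ i : (Module.End F V)ˣ) : Module.End F V) v = v := by
    intro i
    induction i with
    | zero => simp
    | succ i ih => rw [pow_succ, Units.val_mul, Module.End.mul_apply, hbv, ih]
  obtain ⟨i, hi⟩ := hcyc a haA (b ^ p ^ j) (A.pow_mem hb _) haM (fun m hm => by
    have : Commute b m := hbM m hm
    exact this.pow_left _) hap hj2 hj1
  apply hv0
  rw [hT, LinearMap.sub_apply, hi, ← pow_mul, hpow]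
  simp

theorem espuelas_regular_orbit (p : ℕ) (hp : p.Prime) (G : Type*) [Group G] [Finite G]
    (hsolv : IsSolvable G)
    (hOp : ∀ N : Subgroup G, N.Normal → IsPGroup p N → N = ⊥)
    (A : Subgroup G) (hAab : ∀ a b : A, a * b = b * a) (hAp : IsPGroup p A)
    (F : Type*) [Field F] [Finite F] (hchar : CharP F p)
    (V : Type*) [AddCommGroup V] [Module F V] [FiniteDimensional F V]
    (ρ : Representation F G V) (hfaithful : Function.Injective ρ) :
    ∃ v : V, ∀ a : G, a ∈ A → ρ a v = v → a = 1 := by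
  obtain ⟨N, hN, hcls, hcent⟩ := e_crit hsolv
  have hcop := e_pprime hp hOp N hN hcls
  have hpg : ∀ a ∈ A, ∃ n : ℕ, a ^ p ^ n = 1 := by
    intro a ha
    obtain ⟨n, hn⟩ := hAp ⟨a, ha⟩
    exact ⟨n, congrArg Subtype.val hn⟩
  have hG : EGood p N A :=
    { norm := fun a _ k hk => hN.conj_mem k hk a
      comm := fun a ha b hb => congrArg Subtype.val (hAab ⟨a, ha⟩ ⟨b, hb⟩)
      pgrp := hpg
      cop := hcop
      cls := hcls }
  let f : G →* (Module.End F V)ˣ := MonoidHom.toHomUnits ρ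
  have hf : Function.Injective f := fun x y h => hfaithful (congrArg Units.val h)
  obtain ⟨v, hv⟩ := e_main hp F _ V _ _ (e_map hG f) (Nat.lt_succ_self _)
  refine ⟨v, fun a ha hav => ?_⟩
  have h1 : a ∈ N := by
    apply hcent
    rw [Subgroup.mem_centralizer_iff]
    intro k hk
    apply hf
    rw [map_mul, map_mul]
    exact (hv (f a) ⟨a, ha, rfl⟩ hav (f k) ⟨k, hk, rfl⟩).symm
  obtain ⟨n, hn⟩ := hpg a ha
  exact e_coprime hcop h1 hn
end

section
/- Let p be a prime and let G be a finite solvable group of order divisible by p in which every normal p-subgroup is trivial (i.e. O_p(G) = 1). Let F be a finite field of characteristic p and let V be a finite-dimensional F-vector space on which G acts faithfully by F-linear automorphisms, and suppose V is a semisimple (completely reducible) module for this action. Suppose a Sylow p-subgroup P of G is abelian. Then there exists v ∈ V whose P-orbit has size exactly p. -/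
theorem aux_lift (p : ℕ) (hp : p.Prime) (B H : Type*) [Group B] [Finite B] [Group H] [Finite H]
    [MulDistribMulAction B H] (hB : IsPGroup p B) (N : Subgroup H)
    (hN : ∀ b : B, ∀ n ∈ N, b • n ∈ N) (hcop : ¬ p ∣ Nat.card N)
    (h : H) (hh : ∀ b : B, h⁻¹ * b • h ∈ N) : ∃ n ∈ N, ∀ b : B, b • (h * n) = h * n := by
  have := Fact.mk hp
  let S : SubMulAction B H :=
    { carrier := {g | h⁻¹ * g ∈ N}
      smul_mem' := by
        intro b g hg
        have h1 := N.mul_mem (hh b) (hN b _ hg)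
        simp only [smul_mul', smul_inv'] at h1
        simpa [mul_assoc] using h1 }
  have e : S ≃ N :=
    { toFun := fun g => ⟨h⁻¹ * g.1, g.2⟩
      invFun := fun n => ⟨h * n.1, by change h⁻¹ * (h * n.1) ∈ N; simp⟩
      left_inv := fun g => by ext; simp
      right_inv := fun n => by ext; simp }
  have hc : ¬ p ∣ Nat.card S := by rwa [Nat.card_congr e]
  obtain ⟨s, hs⟩ := hB.nonempty_fixed_point_of_prime_not_dvd_card S hc
  refine ⟨h⁻¹ * s.1, s.2, fun b => ?_⟩
  have := congrArg Subtype.val (hs b)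
  simpa using this

theorem aux_simple (P A : Type*) [CommGroup P] [Finite P] [AddCommGroup A] [Finite A] [Nontrivial A]
    (τ : Representation ℤ P A) :
    ∃ M : AddSubgroup A, M ≠ ⊤ ∧ (∀ x : P, ∀ a ∈ M, τ x a ∈ M) ∧
      ∃ x : P, ∀ y : P, ∃ k : ℤ, ∀ a : A, τ (y * x ^ k) a - a ∈ M := by
  let _ : Module (MonoidAlgebra ℤ P) A := Module.compHom A τ.asAlgebraHom.toRingHom
  have hsm : ∀ (x : P) (a : A), (MonoidAlgebra.of ℤ P x) • a = τ x a := by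
    intro x a
    change τ.asAlgebraHom (MonoidAlgebra.of ℤ P x) a = τ x a
    rw [Representation.asAlgebraHom_of]
  have : Module.Finite (MonoidAlgebra ℤ P) A := Module.Finite.of_finite
  obtain ⟨M, hM, -⟩ := (eq_top_or_exists_le_coatom (⊥ : Submodule (MonoidAlgebra ℤ P) A)).resolve_left
    bot_ne_top
  have hs : IsSimpleModule (MonoidAlgebra ℤ P) (A ⧸ M) := isSimpleModule_iff_isCoatom.mpr hM
  obtain ⟨I, hI, ⟨e⟩⟩ := isSimpleModule_iff_quot_maximal.mp hs
  have hfin : Finite (A ⧸ M) := Finite.of_surjective _ (Submodule.mkQ_surjective M)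
  have hfin2 : Finite (MonoidAlgebra ℤ P ⧸ I) := Finite.of_equiv _ e.toEquiv
  have hdom : IsDomain (MonoidAlgebra ℤ P ⧸ I) := Ideal.Quotient.isDomain I
  let f : P →* (MonoidAlgebra ℤ P ⧸ I) :=
    ((Ideal.Quotient.mk I).toMonoidHom).comp (MonoidAlgebra.of ℤ P)
  let φ : P →* (MonoidAlgebra ℤ P ⧸ I)ˣ := f.toHomUnits
  have hcyc : IsCyclic (MonoidAlgebra ℤ P ⧸ I)ˣ := inferInstance
  obtain ⟨⟨g, x, rfl⟩, hg⟩ := IsCyclic.exists_generator (α := φ.range)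
  refine ⟨M.toAddSubgroup, ?_, ?_, x, fun y => ?_⟩
  · intro h
    exact hM.1 (Submodule.toAddSubgroup_injective (by simpa using h))
  · intro x a ha
    rw [← hsm]
    exact M.smul_mem _ ha
  · obtain ⟨k, hk⟩ := Subgroup.mem_zpowers_iff.mp (hg ⟨φ y, y, rfl⟩)
    have hk' : φ x ^ k = φ y := congrArg Subtype.val hk
    refine ⟨-k, fun a => ?_⟩
    have h1 : φ (y * x ^ (-k)) = 1 := by rw [map_mul, map_zpow, ← hk', zpow_neg, mul_inv_cancel]
    have h2 : f (y * x ^ (-k)) = 1 := by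
      exact congrArg Units.val h1
    generalize y * x ^ (-k) = z at h2 ⊢
    have h3 : M.mkQ (τ z a) = M.mkQ a := by
      rw [← hsm, map_smul]
      apply e.injective
      rw [map_smul]
      generalize e (M.mkQ a) = q
      obtain ⟨r, rfl⟩ := Ideal.Quotient.mk_surjective q
      have h4 : Ideal.Quotient.mk I (MonoidAlgebra.of ℤ P z) = 1 := h2
      have h5 : MonoidAlgebra.of ℤ P z • (Ideal.Quotient.mk I) r
        = Ideal.Quotient.mk I (MonoidAlgebra.of ℤ P z) * Ideal.Quotient.mk I r := by
        rw [← map_mul]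
        rfl
      rw [h5, h4, one_mul]
    exact (Submodule.Quotient.eq M).mp h3

theorem aux_cyc (p : ℕ) (hp : p.Prime) (P H : Type*) [CommGroup P] [Finite P] [Group H] [Finite H]
    [MulDistribMulAction P H] (hP : IsPGroup p P) (hcop : ¬ p ∣ Nat.card H) [Group.IsSolvable H]
    (hmin : ∀ S : Subgroup H, (∀ x : P, ∀ h ∈ S, x • h ∈ S) → S ≠ ⊤ → ∀ x : P, ∀ h ∈ S, x • h = h)
    (hne : ∃ (x : P) (h : H), x • h ≠ h) :
    ∃ x : P, ∀ y : P, ∃ k : ℤ, ∀ h : H, (y * x ^ k) • h = h := by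
  obtain ⟨x0, h0, hx0⟩ := hne
  have : Nontrivial H := ⟨_, _, hx0⟩
  let τ : Representation ℤ P (Additive (Abelianization H)) :=
    { toFun := fun x => (MonoidHom.toAdditive
        (Abelianization.map (MulDistribMulAction.toMonoidHom H x))).toIntLinearMap
      map_one' := by
        apply LinearMap.ext
        intro a
        obtain ⟨b, hb⟩ := QuotientGroup.mk_surjective (Additive.toMul a)
        obtain rfl : Additive.ofMul (Abelianization.of b) = a := hb
        change Additive.ofMul (Abelianization.of ((1 : P) • b)) = _
        rw [one_smul]
        rfl
      map_mul' := by
        intro x y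
        apply LinearMap.ext
        intro a
        obtain ⟨b, hb⟩ := QuotientGroup.mk_surjective (Additive.toMul a)
        obtain rfl : Additive.ofMul (Abelianization.of b) = a := hb
        change Additive.ofMul (Abelianization.of ((x * y) • b)) =
          Additive.ofMul (Abelianization.of (x • y • b))
        rw [mul_smul] }
  have hτ : ∀ (x : P) (h : H), τ x (Additive.ofMul (Abelianization.of h)) =
    Additive.ofMul (Abelianization.of (x • h)) := fun x h => rfl
  have hsol : commutator H < ⊤ := Group.IsSolvable.commutator_lt_top_of_nontrivial H
  have hnt : Nontrivial (Additive (Abelianization H)) := by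
    by_contra hc
    rw [not_nontrivial_iff_subsingleton] at hc
    apply hsol.ne
    rw [← Abelianization.ker_of, eq_top_iff]
    intro h _
    exact Subsingleton.elim (α := Additive (Abelianization H)) _ _
  have hfin : Finite (Additive (Abelianization H)) := 
    Finite.of_surjective (fun h : H => Additive.ofMul (Abelianization.of h)) QuotientGroup.mk_surjective
  obtain ⟨M, hM, hMi, x, hx⟩ := aux_simple P (Additive (Abelianization H)) τ
  let N : Subgroup H := 
    { carrier := {h | Additive.ofMul (Abelianization.of h) ∈ M}
      mul_mem' := fun {a b} ha hb => by
        have := M.add_mem ha hb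
        simpa using this
      one_mem' := M.zero_mem
      inv_mem' := fun {a} ha => by
        have := M.neg_mem ha
        simpa using this }
  have hNt : N ≠ ⊤ := by
    intro hN
    apply hM
    rw [eq_top_iff]
    intro a _
    obtain ⟨b, hb⟩ := QuotientGroup.mk_surjective (Additive.toMul a)
    have : b ∈ N := by rw [hN]; trivial
    change Additive.ofMul (Abelianization.of b) ∈ M at this
    rwa [show Additive.ofMul (Abelianization.of b) = a from congrArg Additive.ofMul hb] at this
  have hNi : ∀ x : P, ∀ h ∈ N, x • h ∈ N := fun x h hh => hMi x _ hh
  have hNf := hmin N hNi hNt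
  have hNc : ¬ p ∣ Nat.card N := fun h => hcop (h.trans (Subgroup.card_subgroup_dvd_card N))
  let B : Subgroup P :=
    { carrier := {y | ∀ h : H, h⁻¹ * y • h ∈ N}
      one_mem' := fun h => by simp
      mul_mem' := fun {a b} ha hb h => by
        have h1 := N.mul_mem (hb h) (ha (b • h))
        simpa [mul_assoc, mul_smul] using h1
      inv_mem' := fun {a} ha h => by
        have h1 := N.inv_mem (ha (a⁻¹ • h))
        simpa using h1 }
  let C : Subgroup H :=
    { carrier := {h | ∀ b ∈ B, b • h = h}
      one_mem' := fun b _ => by simp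
      mul_mem' := fun {u v} hu hv b hb => by rw [smul_mul', hu b hb, hv b hb]
      inv_mem' := fun {u} hu b hb => by rw [smul_inv', hu b hb] }
  have hCi : ∀ x : P, ∀ h ∈ C, x • h ∈ C := by
    intro x h hh b hb
    rw [smul_smul, mul_comm, mul_smul, hh b hb]
  have hCt : C = ⊤ := by
    by_contra hC
    have hCf := hmin C hCi hC
    apply hx0
    obtain ⟨n, hn, hfix⟩ := aux_lift p hp B H (hP.to_subgroup B) N (fun b n hn => hNi _ n hn) hNc h0
      (fun b => b.2 h0)
    have h1 : h0 * n ∈ C := fun b hb => hfix ⟨b, hb⟩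
    have h2 := hCf x0 _ h1
    rw [smul_mul', hNf x0 n hn] at h2
    exact mul_right_cancel h2
  refine ⟨x, fun y => ?_⟩
  obtain ⟨k, hk⟩ := hx y
  refine ⟨k, fun h => ?_⟩
  have hB : y * x ^ k ∈ B := by
    intro h
    have h1 := hk (Additive.ofMul (Abelianization.of h))
    rw [hτ] at h1
    change Additive.ofMul (Abelianization.of _) ∈ M
    rw [map_mul, map_inv, mul_comm]
    simpa [sub_eq_add_neg] using h1
  have : h ∈ C := by rw [hCt]; trivial
  exact this _ hB

theorem aux_K (p : ℕ) (hp : p.Prime) (G : Type*) [Group G] [Finite G] [Group.IsSolvable G]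
    (hOp : ∀ N : Subgroup G, N.Normal → IsPGroup p N → N = ⊥) :
    ∃ K : Subgroup G, K.Normal ∧ ¬ p ∣ Nat.card K ∧ Subgroup.centralizer (K : Set G) ≤ K := by
  have := Fact.mk hp
  obtain ⟨K, -, hK⟩ := (Set.toFinite {K : Subgroup G | K.Normal ∧ ¬ p ∣ Nat.card K}).exists_le_maximal
    (a := ⊥) ⟨inferInstance, by simpa using hp.one_lt.ne'⟩
  obtain ⟨⟨hKn, hKc⟩, hKmax⟩ := hK
  refine ⟨K, hKn, hKc, ?_⟩
  by_contra hC
  obtain ⟨D, hDle, hD⟩ := (Set.toFinite {D : Subgroup G | D.Normal ∧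
    D ≤ Subgroup.centralizer (K : Set G) ∧ ¬ D ≤ K}).exists_le_minimal
    (a := Subgroup.centralizer (K : Set G)) ⟨inferInstance, le_rfl, hC⟩
  obtain ⟨⟨hDn, hDC, hDK⟩, hDmin⟩ := hD
  have hDb : D ≠ ⊥ := by
    rintro rfl
    exact hDK bot_le
  have hlt := Group.IsSolvable.commutator_lt_of_ne_bot hDb
  have hcK : ⁅D, D⁆ ≤ K := by
    by_contra hc
    exact hlt.not_ge (hDmin ⟨inferInstance, hlt.le.trans hDC, hc⟩ hlt.le)
  have hnil : Group.IsNilpotent D := by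
    refine Subgroup.isNilpotent_of_ker_le_center (Abelianization.of (G := D)) ?_
    rw [Abelianization.ker_of]
    intro c hc
    rw [Subgroup.mem_center_iff]
    intro d
    have h1 : (c : G) ∈ K := by
      apply hcK
      have : (c : G) ∈ (commutator D).map D.subtype := ⟨c, hc, rfl⟩
      rwa [commutator_def, Subgroup.map_commutator, ← MonoidHom.range_eq_map,
        Subgroup.range_subtype] at this
    ext
    exact (Subgroup.mem_centralizer_iff.mp (hDC d.2) _ h1).symm
  obtain ⟨Q⟩ : Nonempty (Sylow p D) := inferInstance
  have hQn : (Q : Subgroup D).Normal := inferInstance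
  have hQc : (Q : Subgroup D).Characteristic := Q.characteristic_of_normal hQn
  have hQm := hOp ((Q : Subgroup D).map D.subtype) inferInstance (Q.2.map _)
  have hQb : (Q : Subgroup D) = ⊥ := by
    rwa [Subgroup.map_eq_bot_iff_of_injective _ D.subtype_injective] at hQm
  have hDc : ¬ p ∣ Nat.card D := by
    intro h
    have := Q.dvd_card_of_dvd_card h
    rw [hQb] at this
    simp at this
    exact hp.one_lt.ne' this
  have hsup : ¬ p ∣ Nat.card (D ⊔ K : Subgroup G) := by
    have h1 := Subgroup.card_mul_index (K.subgroupOf (D ⊔ K))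
    have h2 : (K.subgroupOf (D ⊔ K)).index = K.relIndex D := Subgroup.relIndex_sup_right D K
    have h3 : Nat.card (K.subgroupOf (D ⊔ K)) = Nat.card K :=
      Nat.card_congr (Subgroup.subgroupOfEquivOfLe le_sup_right).toEquiv
    rw [← h1, h2, h3, hp.dvd_mul]
    rintro (h | h)
    · exact hKc h
    · exact hDc (h.trans (Subgroup.relIndex_dvd_card K D))
  exact hDK (le_sup_left.trans (hKmax ⟨inferInstance, hsup⟩ le_sup_right))

theorem aux_H (p : ℕ) (hp : p.Prime) (G : Type*) [Group G] [Finite G] [Group.IsSolvable G]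
    (P : Subgroup G) (hP : IsPGroup p P) (hPab : ∀ a b : P, a * b = b * a)
    (K : Subgroup G) (hK : K.Normal) (hcop : ¬ p ∣ Nat.card K)
    (hne : ∃ x ∈ P, ∃ h ∈ K, x * h * x⁻¹ ≠ h) :
    ∃ H : Subgroup G, ¬ p ∣ Nat.card H ∧ (∀ x ∈ P, ∀ h ∈ H, x * h * x⁻¹ ∈ H) ∧
      (∃ x ∈ P, ∃ h ∈ H, x * h * x⁻¹ ≠ h) ∧
      ∃ x ∈ P, ∀ y ∈ P, ∃ k : ℤ, ∀ h ∈ H, (y * x ^ k) * h = h * (y * x ^ k) := by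
  obtain ⟨H, hHK, hH⟩ := (Set.toFinite {H : Subgroup G | (∀ x ∈ P, ∀ h ∈ H, x * h * x⁻¹ ∈ H) ∧
      (∃ x ∈ P, ∃ h ∈ H, x * h * x⁻¹ ≠ h)}).exists_le_minimal
    (a := K) ⟨fun x _ h hh => hK.conj_mem h hh x, hne⟩
  obtain ⟨⟨hHi, hHne⟩, hHmin⟩ := hH
  have hHc : ¬ p ∣ Nat.card H := fun h => hcop (h.trans (Subgroup.card_dvd_of_le hHK))
  refine ⟨H, hHc, hHi, hHne, ?_⟩
  let _ : CommGroup P := { (inferInstance : Group P) with mul_comm := hPab }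
  let _ : MulDistribMulAction P H :=
    { smul := fun x h => ⟨x * h * (x : G)⁻¹, hHi x x.2 h h.2⟩
      one_smul := fun h => by
        apply Subtype.ext
        change ((1 : P) : G) * h * ((1 : P) : G)⁻¹ = h
        simp
      mul_smul := fun x y h => by
        apply Subtype.ext
        change ((x * y : P) : G) * h * ((x * y : P) : G)⁻¹ = x * (y * h * (y : G)⁻¹) * (x : G)⁻¹
        rw [Subgroup.coe_mul]
        group
      smul_one := fun x => by
        apply Subtype.ext
        change (x : G) * ((1 : H) : G) * (x : G)⁻¹ = 1
        simp
      smul_mul := fun x a b => by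
        apply Subtype.ext
        change (x : G) * ((a * b : H) : G) * (x : G)⁻¹ =
          ((x : G) * a * (x : G)⁻¹) * ((x : G) * b * (x : G)⁻¹)
        rw [Subgroup.coe_mul]
        group }
  have hsm : ∀ (x : P) (h : H), ((x • h : H) : G) = x * h * (x : G)⁻¹ := fun x h => rfl
  obtain ⟨x, hx⟩ := aux_cyc p hp P H hP hHc (by
    intro S hS hSt x h hh
    by_contra hcon
    apply hSt
    have hle : H ≤ S.map H.subtype := by
      apply hHmin
      · refine ⟨?_, x, x.2, h, ⟨h, hh, rfl⟩, fun h' => hcon (Subtype.ext h')⟩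
        rintro y hy _ ⟨s, hs, rfl⟩
        exact ⟨_, hS ⟨y, hy⟩ s hs, rfl⟩
      · rintro _ ⟨s, hs, rfl⟩
        exact s.2
    rw [eq_top_iff]
    intro h _
    obtain ⟨s, hs, hs'⟩ := hle h.2
    rwa [← show s = h from Subtype.ext hs']) (by
    obtain ⟨x, hx, h, hh, hn⟩ := hHne
    exact ⟨⟨x, hx⟩, ⟨h, hh⟩, fun h' => hn (congrArg Subtype.val h')⟩)
  refine ⟨x, x.2, fun y hy => ?_⟩
  obtain ⟨k, hk⟩ := hx ⟨y, hy⟩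
  refine ⟨k, fun h hh => ?_⟩
  have h1 := congrArg Subtype.val (hk ⟨h, hh⟩)
  rw [hsm] at h1
  simp only [Subgroup.coe_mul] at h1
  exact mul_inv_eq_iff_eq_mul.mp h1

theorem aux_fin (p : ℕ) (hp : p.Prime) (G : Type*) [Group G] [Finite G]
    (F : Type*) [Field F] [Finite F] (hchar : CharP F p)
    (V : Type*) [AddCommGroup V] [Module F V] [FiniteDimensional F V]
    (ρ : Representation F G V) (hfaithful : Function.Injective ρ)
    (P : Subgroup G) (hP : IsPGroup p P) (hPab : ∀ a b : P, a * b = b * a)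
    (H : Subgroup G) (hcop : ¬ p ∣ Nat.card H) (hHi : ∀ x ∈ P, ∀ h ∈ H, x * h * x⁻¹ ∈ H)
    (hne : ∃ x ∈ P, ∃ h ∈ H, x * h * x⁻¹ ≠ h)
    (x : G) (hxP : x ∈ P)
    (hx : ∀ y ∈ P, ∃ k : ℤ, ∀ h ∈ H, (y * x ^ k) * h = h * (y * x ^ k)) :
    ∃ v : V, Nat.card ↥(Set.range fun a : P => ρ (a : G) v) = p := by
  have := Fact.mk hp
  have hVfin : Finite V := Module.finite_of_finite F
  let _ : MulAction G V :=
    { smul := fun g v => ρ g v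
      one_smul := fun v => by change ρ 1 v = v; simp
      mul_smul := fun g h v => by change ρ (g * h) v = ρ g (ρ h v); simp }
  have hsm : ∀ (g : G) (v : V), g • v = ρ g v := fun _ _ => rfl
  have hcomm : ∀ a ∈ P, ∀ b ∈ P, a * b = b * a := fun a ha b hb =>
    congrArg Subtype.val (hPab ⟨a, ha⟩ ⟨b, hb⟩)
  let B : Subgroup G := P ⊓ Subgroup.centralizer (H : Set G)
  have hBH : ∀ b ∈ B, ∀ h ∈ H, b * h = h * b := fun b hb h hh =>
    (Subgroup.mem_centralizer_iff.mp hb.2 h hh).symm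
  -- a vector fixed by B and moved by P
  have key : ∃ v : V, (∀ b ∈ B, ρ b v = v) ∧ ∃ y ∈ P, ρ y v ≠ v := by
    by_contra! hcon
    obtain ⟨x0, hx0, h0, hh0, hne⟩ := hne
    let t := x0 * h0 * x0⁻¹ * h0⁻¹
    have htH : t ∈ H := H.mul_mem (hHi _ hx0 _ hh0) (H.inv_mem hh0)
    have ht1 : t ≠ 1 := fun h => hne (mul_inv_eq_one.mp h)
    have htW : ∀ v : V, (∀ b ∈ B, ρ b v = v) → ρ t v = v := by
      intro v hv
      have hW : ∀ h ∈ H, ∀ v : V, (∀ b ∈ B, ρ b v = v) → ∀ b ∈ B, ρ b (ρ h v) = ρ h v := by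
        intro h hh v hv b hb
        rw [← Module.End.mul_apply, ← map_mul, hBH b hb h hh, map_mul, Module.End.mul_apply, hv b hb]
      have h1 : ρ x0⁻¹ (ρ h0⁻¹ v) = ρ h0⁻¹ v :=
        hcon _ (hW _ (H.inv_mem hh0) v hv) _ (P.inv_mem hx0)
      have h2 : ρ x0 v = v := hcon _ hv _ hx0
      simp only [t, map_mul, Module.End.mul_apply]
      rw [h1, ← Module.End.mul_apply (ρ h0), ← map_mul, mul_inv_cancel, map_one,
        Module.End.one_apply, h2]
    let U : Submodule F V := LinearMap.range (ρ t - 1)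
    have hU : U ≠ ⊥ := by
      intro h
      apply ht1
      apply hfaithful
      rw [map_one, ← sub_eq_zero]
      exact LinearMap.range_eq_bot.mp h
    let S : SubMulAction B V :=
      { carrier := U
        smul_mem' := by
          rintro b _ ⟨u, rfl⟩
          refine ⟨ρ b u, ?_⟩
          change _ = ρ b _
          simp only [LinearMap.sub_apply, Module.End.one_apply, map_sub]
          rw [← Module.End.mul_apply, ← map_mul, ← hBH b b.2 t htH, map_mul, Module.End.mul_apply] }
    have hS : p ∣ Nat.card S := by
      have hnt : Nontrivial U := (Submodule.nontrivial_iff_ne_bot).mpr hU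
      change p ∣ Nat.card U
      rw [Module.natCard_eq_pow_finrank (K := F)]
      refine dvd_pow ?_ Module.finrank_pos.ne'
      have := Fintype.ofFinite F
      rw [Nat.card_eq_fintype_card]
      exact (CharP.cast_eq_zero_iff F p _).mp (FiniteField.cast_card_eq_zero F)
    have hBp : IsPGroup p B := hP.to_le inf_le_left
    obtain ⟨w, hw, hw0⟩ := hBp.exists_fixed_point_of_prime_dvd_card_of_fixed_point S hS
      (a := ⟨0, U.zero_mem⟩) (fun b => Subtype.ext (map_zero (ρ b)))
    have hwB : ∀ b ∈ B, ρ b w.1 = w.1 := fun b hb => congrArg Subtype.val (hw ⟨b, hb⟩)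
    have htw := htW _ hwB
    obtain ⟨u, hu⟩ : w.1 ∈ U := w.2
    have hu' : ρ t u = u + w.1 := by
      rw [← hu]; simp
    have hpow : ∀ n : ℕ, ρ (t ^ n) u = u + (n : F) • w.1 := by
      intro n
      induction n with
      | zero => simp
      | succ n ih =>
        rw [pow_succ', map_mul, Module.End.mul_apply, ih, map_add, map_smul, htw, hu']
        push_cast
        rw [add_smul, one_smul]
        abel
    have h1 := hpow (Nat.card H)
    have h2 : t ^ Nat.card H = 1 := by
      have := pow_card_eq_one' (x := (⟨t, htH⟩ : H))
      exact congrArg Subtype.val this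
    rw [h2, map_one, Module.End.one_apply, left_eq_add, smul_eq_zero] at h1
    rcases h1 with h1 | h1
    · exact hcop ((CharP.cast_eq_zero_iff F p _).mp h1)
    · exact hw0 (Subtype.ext h1.symm)
  -- all of P acts on B-fixed vectors through powers of x
  have hgen : ∀ v : V, (∀ b ∈ B, ρ b v = v) → ∀ y ∈ P, ∃ m : ℤ, y • v = x ^ m • v := by
    intro v hv y hy
    obtain ⟨k, hk⟩ := hx y hy
    have hb : y * x ^ k ∈ B := ⟨P.mul_mem hy (P.zpow_mem hxP k),
      Subgroup.mem_centralizer_iff.mpr fun h hh => (hk h hh).symm⟩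
    refine ⟨-k, ?_⟩
    have h1 : (y * x ^ k) • v = v := hv _ hb
    rw [hcomm y hy _ (P.zpow_mem hxP k), mul_smul] at h1
    rw [zpow_neg, eq_inv_smul_iff, h1]
  have key2 : ∃ w : V, (∀ b ∈ B, ρ b w = w) ∧ ρ x w ≠ w ∧ ρ (x ^ p) w = w := by
    obtain ⟨v, hv, y, hy, hyv⟩ := key
    have hxv : ρ x v ≠ v := by
      intro h
      apply hyv
      obtain ⟨m, hm⟩ := hgen v hv y hy
      have h1 : x ∈ MulAction.stabilizer G v := h
      have h2 : x ^ m • v = v := Subgroup.zpow_mem _ h1 m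
      rw [h2] at hm
      exact hm
    let N : Module.End F V := ρ x - 1
    have hV : Nontrivial V := ⟨_, _, hxv⟩
    have hch : CharP (Module.End F V) p := charP_of_injective_algebraMap
      (FaithfulSMul.algebraMap_injective F (Module.End F V)) p
    have hexp : ExpChar (Module.End F V) p := ExpChar.prime hp
    have hNp : N ^ p = ρ (x ^ p) - 1 := by
      rw [sub_pow_expChar_of_commute p (Commute.one_right _), one_pow, map_pow]
    have hNil : ∃ n, (N ^ n) v = 0 := by
      obtain ⟨k, hk⟩ := hP ⟨x, hxP⟩
      refine ⟨p ^ k, ?_⟩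
      have hk' : x ^ p ^ k = 1 := congrArg Subtype.val hk
      rw [sub_pow_expChar_pow_of_commute p k (Commute.one_right _), one_pow, ← map_pow, hk']
      simp
    have hWN : ∀ n : ℕ, ∀ b ∈ B, ρ b ((N ^ n) v) = (N ^ n) v := by
      intro n b hb
      have hc : Commute (ρ b) N := by
        refine Commute.sub_right ?_ (Commute.one_right _)
        change ρ b * ρ x = ρ x * ρ b
        rw [← map_mul, hcomm b hb.1 x hxP, map_mul]
      rw [← Module.End.mul_apply, (hc.pow_right n).eq, Module.End.mul_apply, hv b hb]
    classical
    have hn := Nat.find_spec hNil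
    have hmin := fun m => Nat.find_min hNil (m := m)
    generalize Nat.find hNil = n at hn hmin
    have hN1 : (N ^ 1) v ≠ 0 := by
      simpa [N, sub_eq_zero] using hxv
    have hN0 : (N ^ 0) v ≠ 0 := by
      intro h
      apply hN1
      rw [pow_zero, Module.End.one_apply] at h
      rw [h, map_zero]
    obtain ⟨m, rfl⟩ : ∃ m, n = m + 2 := by
      match n, hn with
      | 0, hn => exact absurd hn hN0
      | 1, hn => exact absurd hn hN1
      | m + 2, _ => exact ⟨m, rfl⟩
    refine ⟨(N ^ m) v, hWN m, ?_, ?_⟩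
    · intro h
      apply hmin (m + 1) (by omega)
      rw [pow_succ', Module.End.mul_apply]
      simp only [N, LinearMap.sub_apply, Module.End.one_apply]
      rw [sub_eq_zero]
      exact h
    · rw [← sub_eq_zero]
      have h1 : (N ^ p) ((N ^ m) v) = 0 := by
        rw [← Module.End.mul_apply, ← pow_add,
          show p + m = (p - 2) + (m + 2) by have := hp.two_le; omega, pow_add,
          Module.End.mul_apply, hn, map_zero]
      rw [hNp] at h1
      exact h1
  obtain ⟨w, hwB, hxw, hxp⟩ := key2
  refine ⟨w, ?_⟩
  change Nat.card (MulAction.orbit P w) = p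
  obtain ⟨n, hn⟩ := hP.card_orbit w
  have hle : Nat.card (MulAction.orbit P w) ≤ p := by
    have hsub : MulAction.orbit P w ⊆ Set.range fun i : Fin p => x ^ (i : ℕ) • w := by
      rintro _ ⟨y, rfl⟩
      obtain ⟨m, hm⟩ := hgen w hwB y y.2
      have hp0 : (p : ℤ) ≠ 0 := by exact_mod_cast hp.ne_zero
      have h0 := Int.emod_nonneg m hp0
      have h1 := Int.emod_lt_of_pos m (b := (p : ℤ)) (by exact_mod_cast hp.pos)
      refine ⟨⟨(m % p).toNat, by omega⟩, ?_⟩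
      change x ^ (m % p).toNat • w = (y : G) • w
      rw [hm, ← zpow_natCast, Int.toNat_of_nonneg h0]
      have h2 : x ^ p ∈ MulAction.stabilizer G w := hxp
      have h3 : (x ^ p) ^ (m / p) • w = w := Subgroup.zpow_mem _ h2 _
      conv_rhs => rw [← Int.emod_add_mul_ediv m p, zpow_add, mul_smul, zpow_mul, zpow_natCast, h3]
    calc Nat.card (MulAction.orbit P w) ≤ Nat.card (Set.range fun i : Fin p => x ^ (i : ℕ) • w) :=
          Nat.card_mono (Set.toFinite _) hsub
      _ ≤ Nat.card (Fin p) := Finite.card_range_le _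
      _ = p := Nat.card_fin p
  have hn0 : n ≠ 0 := by
    rintro rfl
    rw [pow_zero, Nat.card_eq_one_iff_unique] at hn
    obtain ⟨hn, -⟩ := hn
    have := hn.elim ⟨w, MulAction.mem_orbit_self w⟩ ⟨_, MulAction.mem_orbit w (⟨x, hxP⟩ : P)⟩
    exact hxw (congrArg Subtype.val this).symm
  apply le_antisymm hle
  rw [hn]
  exact Nat.le_self_pow hn0 p


/-- Isaacs' lemma (Theorem 3.2 of the paper). Let `G` be a finite solvable group of
order divisible by `p` with `O_p(G) = 1`, and let `V` be a faithful completely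
reducible finite-dimensional `G`-module over a finite field of characteristic `p`.
If a Sylow `p`-subgroup `P` of `G` is abelian, then some `v ∈ V` lies in a `P`-orbit
of size exactly `p`. -/
theorem isaacs_small_orbit (p : ℕ) (hp : p.Prime) (G : Type*) [Group G] [Finite G]
    (hsolv : IsSolvable G) (hdvd : p ∣ Nat.card G)
    (hOp : ∀ N : Subgroup G, N.Normal → IsPGroup p N → N = ⊥)
    (F : Type*) [Field F] [Finite F] (hchar : CharP F p)
    (V : Type*) [AddCommGroup V] [Module F V] [FiniteDimensional F V]
    (ρ : Representation F G V) (hfaithful : Function.Injective ρ)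
    (hsemisimple : ∀ W : Submodule F V, (∀ g : G, ∀ w ∈ W, ρ g w ∈ W) →
      ∃ W' : Submodule F V, (∀ g : G, ∀ w ∈ W', ρ g w ∈ W') ∧ IsCompl W W')
    (P : Sylow p G) (hPab : ∀ a b : (P : Subgroup G), a * b = b * a) :
    ∃ v : V, Nat.card ↥(Set.range fun a : (P : Subgroup G) => ρ (a : G) v) = p := by
  have hs : Group.IsSolvable G := hsolv
  have := Fact.mk hp
  obtain ⟨K, hK, hKc, hCK⟩ := aux_K p hp G hOp
  have hne : ∃ x ∈ (P : Subgroup G), ∃ h ∈ K, x * h * x⁻¹ ≠ h := by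
    by_contra! hcon
    have hPK : (P : Subgroup G) ≤ K := by
      refine le_trans (fun x hx => ?_) hCK
      exact Subgroup.mem_centralizer_iff.mpr fun h hh =>
        (mul_inv_eq_iff_eq_mul.mp (hcon x hx h hh)).symm
    exact hKc ((P.dvd_card_of_dvd_card hdvd).trans (Subgroup.card_dvd_of_le hPK))
  obtain ⟨H, hHc, hHi, hHne, x, hxP, hx⟩ := aux_H p hp G P P.2 hPab K hK hKc hne
  exact aux_fin p hp G F hchar V ρ hfaithful P P.2 hPab H hHc hHi hHne x hxP hx
end
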